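/- arXiv:2605.07322 — 5 statements merged into one kernel-verified Lean document; each statement's English description precedes it below -/
import Mathlib

section
/- Let n ≥ 4 be an even integer and let G be an n-vertex graph with minimum degree δ(G) ≥ n/2 + 2. Then for every edge-coloring of G with 2 colors, G contains an even-chromatic Hamilton cycle. Equivalently, the sparse odd-Ramsey number of Hamilton cycles satisfies r_odd(n, n/2+2; C_n) ≥ 3. -/
section OddRamseyAux

set_option linter.unusedSectionVars false

variable {V : Type*} [Fintype V] [DecidableEq V]

/-- A two-edge exchange strictly decreases the number of breaks. -/
lemma orx_exchange (G : SimpleGraph V) [DecidableRel G.Adj] (p : ℕ → V) (m i j e : ℕ)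
    (hij : i < j) (hj : j + 1 < m)
    (h1 : G.Adj (p i) (p j)) (h2 : G.Adj (p (i + 1)) (p (j + 1)))
    (he : e = i ∨ e = j) (hb : ¬ G.Adj (p e) (p (e + 1))) :
    ∃ q : ℕ → V, q 0 = p 0 ∧ q (m - 1) = p (m - 1) ∧
      (∀ k < m, ∃ k' < m, q k' = p k) ∧
      ((Finset.range (m - 1)).filter (fun k => ¬ G.Adj (q k) (q (k + 1)))).card <
      ((Finset.range (m - 1)).filter (fun k => ¬ G.Adj (p k) (p (k + 1)))).card := by
  set τ : ℕ → ℕ := fun k => if i < k ∧ k ≤ j then i + j + 1 - k else k with hτ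
  have τ1 : ∀ k, i < k → k ≤ j → τ k = i + j + 1 - k := fun k a b => by simp [hτ, a, b]
  have τ2 : ∀ k, (k ≤ i ∨ j < k) → τ k = k := fun k a => by
    simp only [hτ]; rw [if_neg]; omega
  refine ⟨fun k => p (τ k), ?_, ?_, ?_, ?_⟩
  · simp only; rw [τ2 0 (by omega)]
  · simp only; rw [τ2 (m-1) (by omega)]
  · intro k hk
    refine ⟨τ k, ?_, ?_⟩
    · by_cases h : i < k ∧ k ≤ j
      · rw [τ1 k h.1 h.2]; omega
      · rw [τ2 k (by omega)]; exact hk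
    · by_cases h : i < k ∧ k ≤ j
      · simp only; rw [τ1 k h.1 h.2, τ1 _ (by omega) (by omega)]; congr 1; omega
      · simp only; rw [τ2 k (by omega), τ2 k (by omega)]
  · have heM : e ∈ (Finset.range (m - 1)).filter (fun k => ¬ G.Adj (p k) (p (k + 1))) := by
      simp only [Finset.mem_filter, Finset.mem_range]; exact ⟨by omega, hb⟩
    refine lt_of_le_of_lt ?_ (Finset.card_erase_lt_of_mem heM)
    refine Finset.card_le_card_of_injOn (fun k => if i < k ∧ k < j then i + j - k else k) ?_ ?_
    · intro k hk
      simp only [Finset.coe_filter, Finset.mem_range, Set.mem_ofPred_eq] at hk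
      obtain ⟨hk, hn⟩ := hk
      have hki : k ≠ i := by
        rintro rfl
        apply hn
        rw [τ2 k (by omega), τ1 (k+1) (by omega) (by omega)]
        convert h1 using 2; omega
      have hkj : k ≠ j := by
        rintro rfl
        apply hn
        rw [τ1 k (by omega) (by omega), τ2 (k+1) (by omega)]
        convert h2 using 2; omega
      simp only [Finset.coe_erase, Finset.coe_filter, Finset.mem_range, Set.mem_sdiff,
        Set.mem_ofPred_eq, Set.mem_singleton_iff]
      by_cases h : i < k ∧ k < j
      · rw [if_pos h]
        refine ⟨⟨by omega, ?_⟩, by omega⟩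
        intro hh
        apply hn
        rw [τ1 k (by omega) (by omega), τ1 (k+1) (by omega) (by omega)]
        have e1 : i + j + 1 - k = i + j - k + 1 := by omega
        have e2 : i + j + 1 - (k + 1) = i + j - k := by omega
        rw [e1, e2]; exact hh.symm
      · rw [if_neg h]
        refine ⟨⟨by omega, ?_⟩, by omega⟩
        rw [τ2 k (by omega), τ2 (k+1) (by omega)] at hn
        exact hn
    · intro a ha b hb hab
      simp only at hab
      split_ifs at hab <;> omega

/-- Ordering without breaks. -/
lemma orx_order (G : SimpleGraph V) [DecidableRel G.Adj] (U : Finset V)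
    (hdeg : ∀ v ∈ U, U.card + 1 ≤ 2 * (U.filter (fun z => G.Adj v z)).card) (N : ℕ) :
    ∀ p : ℕ → V, (∀ v, v ∈ U ↔ ∃ k < U.card, p k = v) →
      ((Finset.range (U.card - 1)).filter (fun k => ¬ G.Adj (p k) (p (k + 1)))).card ≤ N →
      ∃ q : ℕ → V, (∀ v, v ∈ U ↔ ∃ k < U.card, q k = v) ∧ q 0 = p 0 ∧
        q (U.card - 1) = p (U.card - 1) ∧ ∀ k < U.card - 1, G.Adj (q k) (q (k + 1)) := by
  induction N with
  | zero =>
    intro p hp h0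
    refine ⟨p, hp, rfl, rfl, ?_⟩
    intro k hk
    by_contra hh
    have : k ∈ ((Finset.range (U.card - 1)).filter (fun k => ¬ G.Adj (p k) (p (k + 1)))) := by
      simp [hk, hh]
    rw [Nat.le_zero, Finset.card_eq_zero] at h0
    simp [h0] at this
  | succ N ih =>
    intro p hp hN
    by_cases hall : ∀ k < U.card - 1, G.Adj (p k) (p (k + 1))
    · exact ⟨p, hp, rfl, rfl, hall⟩
    push Not at hall
    obtain ⟨i, hi, hbr⟩ := hall
    -- counting
    set m := U.card with hm
    set A := (Finset.range (m - 1)).filter (fun k => G.Adj (p i) (p k)) with hA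
    set B := (Finset.range (m - 1)).filter (fun k => G.Adj (p (i + 1)) (p (k + 1))) with hB
    have hui : p i ∈ U := (hp _).2 ⟨i, by omega, rfl⟩
    have hvi : p (i + 1) ∈ U := (hp _).2 ⟨i + 1, by omega, rfl⟩
    have cA : (U.filter (fun z => G.Adj (p i) z)).card ≤ A.card + 1 := by
      have : U.filter (fun z => G.Adj (p i) z) ⊆ insert (p (m - 1)) (A.image p) := by
        intro z hz
        rw [Finset.mem_filter] at hz
        obtain ⟨k, hk, rfl⟩ := (hp z).1 hz.1
        by_cases hkm : k = m - 1
        · subst hkm; simp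
        · apply Finset.mem_insert_of_mem
          apply Finset.mem_image_of_mem
          simp only [hA, Finset.mem_filter, Finset.mem_range]
          exact ⟨by omega, hz.2⟩
      refine (Finset.card_le_card this).trans ((Finset.card_insert_le _ _).trans ?_)
      have := Finset.card_image_le (s := A) (f := p)
      omega
    have cB : (U.filter (fun z => G.Adj (p (i + 1)) z)).card ≤ B.card + 1 := by
      have : U.filter (fun z => G.Adj (p (i + 1)) z) ⊆
          insert (p 0) (B.image (fun k => p (k + 1))) := by
        intro z hz
        rw [Finset.mem_filter] at hz
        obtain ⟨k, hk, rfl⟩ := (hp z).1 hz.1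
        by_cases hkm : k = 0
        · subst hkm; simp
        · apply Finset.mem_insert_of_mem
          refine Finset.mem_image.2 ⟨k - 1, ?_, by congr 1; omega⟩
          simp only [hB, Finset.mem_filter, Finset.mem_range]
          have e1 : k - 1 + 1 = k := by omega
          rw [e1]
          exact ⟨by omega, hz.2⟩
      refine (Finset.card_le_card this).trans ((Finset.card_insert_le _ _).trans ?_)
      have := Finset.card_image_le (s := B) (f := fun k => p (k + 1))
      omega
    have d1 := hdeg _ hui
    have d2 := hdeg _ hvi
    have hAB : (A ∪ B).card ≤ m - 2 := by
      have : A ∪ B ⊆ (Finset.range (m - 1)).erase i := by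
        intro k hk
        simp only [hA, hB, Finset.mem_union, Finset.mem_filter, Finset.mem_range] at hk
        simp only [Finset.mem_erase, Finset.mem_range]
        refine ⟨?_, by omega⟩
        rintro rfl
        rcases hk with hk | hk
        · exact G.irrefl hk.2
        · exact G.irrefl hk.2
      have h2 := Finset.card_le_card this
      rw [Finset.card_erase_of_mem (by simp; omega), Finset.card_range] at h2
      omega
    have hint := Finset.card_union_add_card_inter A B
    have hne : (A ∩ B).Nonempty := by
      rw [← Finset.card_pos]; omega
    obtain ⟨k, hk⟩ := hne
    simp only [hA, hB, Finset.mem_inter, Finset.mem_filter, Finset.mem_range] at hk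
    obtain ⟨⟨hkm, hk1⟩, -, hk2⟩ := hk
    have hki : k ≠ i := by rintro rfl; exact G.irrefl hk1
    have key : ∃ q : ℕ → V, q 0 = p 0 ∧ q (m - 1) = p (m - 1) ∧
      (∀ k < m, ∃ k' < m, q k' = p k) ∧
      ((Finset.range (m - 1)).filter (fun k => ¬ G.Adj (q k) (q (k + 1)))).card <
      ((Finset.range (m - 1)).filter (fun k => ¬ G.Adj (p k) (p (k + 1)))).card := by
      rcases lt_or_gt_of_ne hki with h | h
      · exact orx_exchange G p m k i i h (by omega) hk1.symm hk2.symm (Or.inr rfl) hbr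
      · exact orx_exchange G p m i k i h (by omega) hk1 hk2 (Or.inl rfl) hbr
    obtain ⟨q, q0, q1, q2, q3⟩ := key
    have hUsub : U ⊆ (Finset.range m).image q := by
      intro v hv
      obtain ⟨k, hk, rfl⟩ := (hp v).1 hv
      obtain ⟨k', hk', e⟩ := q2 k hk
      exact Finset.mem_image.2 ⟨k', by simpa using hk', e⟩
    have hUeq : U = (Finset.range m).image q := by
      apply Finset.eq_of_subset_of_card_le hUsub
      refine Finset.card_image_le.trans ?_
      simp [hm]
    have hq : ∀ v, v ∈ U ↔ ∃ k < m, q k = v := by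
      intro v; rw [hUeq]; simp
    obtain ⟨r, r1, r2, r3, r4⟩ := ih q hq (by omega)
    exact ⟨r, r1, r2.trans q0, r3.trans q1, r4⟩

lemma orx_walk (G : SimpleGraph V) (p : ℕ → V) (m : ℕ)
    (h : ∀ k < m, G.Adj (p k) (p (k + 1))) :
    ∃ W : G.Walk (p 0) (p m), W.support = (List.range (m + 1)).map p := by
  induction m with
  | zero => exact ⟨.nil, by simp⟩
  | succ m ih =>
    obtain ⟨W, hW⟩ := ih (fun k hk => h k (by omega))
    refine ⟨W.concat (h m (by omega)), ?_⟩
    rw [SimpleGraph.Walk.support_concat, hW, List.range_succ (n := m + 1)]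
    simp

/-- Hamilton-connectedness of `G - S`. -/
lemma orx_hc (G : SimpleGraph V) [DecidableRel G.Adj] (U : Finset V)
    (hdeg : ∀ v ∈ U, U.card + 1 ≤ 2 * (U.filter (fun z => G.Adj v z)).card)
    (x w : V) (hx : x ∈ U) (hw : w ∈ U) (hxw : x ≠ w) :
    ∃ P : G.Walk x w, P.IsPath ∧ ∀ v, v ∈ P.support ↔ v ∈ U := by
  set L : List V := x :: ((U.erase x).erase w).toList ++ [w] with hL
  have hUc : 2 ≤ U.card := Finset.one_lt_card.2 ⟨x, hx, w, hw, hxw⟩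
  have hlen : L.length = U.card := by
    simp only [hL, List.cons_append, List.length_cons, List.length_append, Finset.length_toList,
      List.length_nil]
    rw [Finset.card_erase_of_mem (by simp [hw, hxw.symm]), Finset.card_erase_of_mem hx]
    omega
  have hmem : ∀ v, v ∈ L ↔ v ∈ U := by
    intro v
    simp only [hL, List.cons_append, List.mem_cons, List.mem_append, Finset.mem_toList,
      Finset.mem_erase, List.not_mem_nil, or_false]
    by_cases h1 : v = x
    · subst h1; simp [hx]
    · by_cases h2 : v = w
      · subst h2; simp [hw]
      · simp [h1, h2]
  obtain ⟨q, hq1, hq2, hq3, hq4⟩ := orx_order G U hdeg _ (fun k => L.getD k x) (by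
    intro v
    rw [← hmem, List.mem_iff_getElem]
    constructor
    · rintro ⟨k, hk, rfl⟩
      exact ⟨k, by omega, by simp [hk]⟩
    · rintro ⟨k, hk, rfl⟩
      exact ⟨k, by omega, by simp [hlen, hk]⟩) le_rfl
  have e0 : q 0 = x := by rw [hq2]; simp [hL]
  have e1 : q (U.card - 1) = w := by
    rw [hq3, ← hlen]; simp [hL]
  obtain ⟨W, hW⟩ := orx_walk G q (U.card - 1) hq4
  have hr : U.card - 1 + 1 = U.card := by omega
  rw [hr] at hW
  have hs : ∀ v, v ∈ W.support ↔ v ∈ U := by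
    intro v; rw [hW, hq1]; simp
  refine ⟨W.copy e0 e1, ?_, ?_⟩
  · rw [SimpleGraph.Walk.isPath_def, SimpleGraph.Walk.support_copy]
    rw [← Multiset.coe_nodup, ← Multiset.toFinset_card_eq_card_iff_nodup]
    have : (W.support : Multiset V).toFinset = U := by
      ext v; simp [hs]
    rw [this, hW]; simp
  · intro v; rw [SimpleGraph.Walk.support_copy]; exact hs v

/-- `G` has a path from `a` to `b` covering exactly the vertices outside `S`, with color sum `t`. -/
def OrxHP (G : SimpleGraph V) (χ : Sym2 V → ZMod 2) (S : Finset V) (a b : V) (t : ZMod 2) : Prop :=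
  ∃ P : G.Walk a b, P.IsPath ∧ (∀ v, v ∈ P.support ↔ v ∉ S) ∧ (P.edges.map χ).sum = t

lemma OrxHP.ext {G : SimpleGraph V} {χ : Sym2 V → ZMod 2} {T : Finset V} {s a b : V} {t : ZMod 2}
    (h : OrxHP G χ (insert s T) a b t) (hs : s ∉ T) (hsa : G.Adj s a) :
    OrxHP G χ T s b (χ s(s, a) + t) := by
  obtain ⟨P, hP, hsup, hsum⟩ := h
  refine ⟨P.cons hsa, ?_, ?_, ?_⟩
  · rw [SimpleGraph.Walk.cons_isPath_iff]
    exact ⟨hP, by simp [hsup]⟩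
  · intro v
    rw [SimpleGraph.Walk.support_cons, List.mem_cons, hsup]
    by_cases h : v = s
    · subst h; simp [hs]
    · simp [h]
  · simp [hsum]

lemma orx_hp_three (G : SimpleGraph V) [DecidableRel G.Adj] (χ : Sym2 V → ZMod 2)
    (hd : ∀ v, Fintype.card V + 4 ≤ 2 * G.degree v) (S : Finset V)
    (hS : ∀ p ∉ S, 2 * (S.filter (fun z => G.Adj p z)).card ≤ S.card + 3)
    (a b : V) (ha : a ∉ S) (hb : b ∉ S) (hab : a ≠ b) : ∃ t, OrxHP G χ S a b t := by
  obtain ⟨P, hP, hs⟩ := orx_hc G Sᶜ (by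
    intro v hv
    have h1 := hS v (by simpa using hv)
    have h2 := hd v
    have h3 : G.degree v = (S.filter (fun z => G.Adj v z)).card +
        (Sᶜ.filter (fun z => G.Adj v z)).card := by
      rw [← G.card_neighborFinset_eq_degree, G.neighborFinset_eq_filter,
        ← Finset.card_union_of_disjoint, ← Finset.filter_union, Finset.union_compl]
      exact Finset.disjoint_filter_filter disjoint_compl_right
    have h4 := S.card_add_card_compl
    omega) a b (by simpa using ha) (by simpa using hb) hab
  exact ⟨_, P, hP, by simpa using hs, rfl⟩

lemma orx_hp_small (G : SimpleGraph V) [DecidableRel G.Adj] (χ : Sym2 V → ZMod 2)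
    (hd : ∀ v, Fintype.card V + 4 ≤ 2 * G.degree v) (S : Finset V) (hS : S.card ≤ 3)
    (a b : V) (ha : a ∉ S) (hb : b ∉ S) (hab : a ≠ b) : ∃ t, OrxHP G χ S a b t := by
  refine orx_hp_three G χ hd S ?_ a b ha hb hab
  intro p _
  have := Finset.card_filter_le S (fun z => G.Adj p z)
  omega

lemma orx_hp_five (G : SimpleGraph V) [DecidableRel G.Adj] (χ : Sym2 V → ZMod 2)
    (hd : ∀ v, Fintype.card V + 4 ≤ 2 * G.degree v) (S : Finset V) (hS : S.card ≤ 5)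
    (hn : ∀ p, ∃ z ∈ S, ¬ G.Adj p z)
    (a b : V) (ha : a ∉ S) (hb : b ∉ S) (hab : a ≠ b) : ∃ t, OrxHP G χ S a b t := by
  refine orx_hp_three G χ hd S ?_ a b ha hb hab
  intro p _
  obtain ⟨z, hz, hpz⟩ := hn p
  have : (S.filter (fun z => G.Adj p z)).card < S.card := by
    apply Finset.card_lt_card
    rw [Finset.filter_ssubset]
    exact ⟨z, hz, hpz⟩
  omega

lemma orx_common (G : SimpleGraph V) [DecidableRel G.Adj]
    (hd : ∀ v, Fintype.card V + 4 ≤ 2 * G.degree v) (u v : V) (F : Finset V) (hF : F.card ≤ 3) :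
    ∃ s, s ∉ F ∧ G.Adj s u ∧ G.Adj s v := by
  have h1 := Finset.card_union_add_card_inter (G.neighborFinset u) (G.neighborFinset v)
  rw [G.card_neighborFinset_eq_degree, G.card_neighborFinset_eq_degree] at h1
  have h2 := Finset.card_le_univ (G.neighborFinset u ∪ G.neighborFinset v)
  have h3 := hd u
  have h4 := hd v
  obtain ⟨s, hs, hsF⟩ := Finset.exists_mem_notMem_of_card_lt_card
    (s := F) (t := G.neighborFinset u ∩ G.neighborFinset v) (by omega)
  simp only [Finset.mem_inter, SimpleGraph.mem_neighborFinset] at hs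
  exact ⟨s, hsF, hs.1.symm, hs.2.symm⟩

lemma orx_zmod (x : ZMod 2) (h : x ≠ 0) : x = 1 := by revert x; decide

lemma orx_card_le3 (a b c : V) : (insert a (insert b (insert c ∅)) : Finset V).card ≤ 3 :=
  Finset.card_le_three

set_option maxHeartbeats 4000000 in
/-- The core argument. -/
theorem orx_core (G : SimpleGraph V) [DecidableRel G.Adj] (χ : Sym2 V → ZMod 2)
    (hd : ∀ v, Fintype.card V + 4 ≤ 2 * G.degree v) (hev : Even (Fintype.card V)) [Nonempty V] :
    ∃ a b t, OrxHP G χ ∅ a b t ∧ G.Adj a b ∧ χ s(a, b) + t = 0 := by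
  by_contra hcon
  have hno : ∀ a b t, OrxHP G χ ∅ a b t → G.Adj a b → χ s(a, b) + t = 1 := by
    intro a b t h1 h2
    apply orx_zmod
    intro h3
    exact hcon ⟨a, b, t, h1, h2, h3⟩
  obtain ⟨c, hc⟩ : ∃ c : V → V → ZMod 2, ∀ a b, χ s(a, b) = c a b := ⟨fun a b => χ s(a, b), fun _ _ => rfl⟩
  have cs : ∀ a b, c a b = c b a := fun a b => by rw [← hc, ← hc, Sym2.eq_swap]
  have two : ∀ x : ZMod 2, x + x = 0 := by decide
  -- 4-cycles are even
  have h4 : ∀ a b c' d, G.Adj a b → G.Adj b c' → G.Adj c' d → G.Adj d a → a ≠ c' → b ≠ d →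
      c a b + c b c' + c c' d + c d a = 0 := by
    intro a b e d hab hbe hed hda hae hbd
    obtain ⟨x, hxF, hxb, hxd⟩ := orx_common G hd b d {a, e} (Finset.card_le_two.trans (by norm_num))
    simp only [Finset.mem_insert, Finset.mem_singleton, not_or] at hxF
    have n1 := hab.ne; have n2 := hbe.ne; have n3 := hed.ne; have n4 := hda.ne
    have n5 := hxb.ne; have n6 := hxd.ne
    obtain ⟨t, hP⟩ := orx_hp_small G χ hd (insert b (insert x (insert d ∅)))
      (orx_card_le3 _ _ _) a e (by clear * - hxF hae hbd n1 n2 n3 n4 n5 n6; grind) (by clear * - hxF hae hbd n1 n2 n3 n4 n5 n6; grind) hae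
    have hP2 : OrxHP G χ (insert d (insert x (insert b ∅))) a e t := by
      convert hP using 1; clear * - hxF hae hbd n1 n2 n3 n4 n5 n6; grind
    have k1 := hno _ _ _ (((hP.ext (by clear * - hxF hae hbd n1 n2 n3 n4 n5 n6; grind) hab.symm).ext (by clear * - hxF hae hbd n1 n2 n3 n4 n5 n6; grind) hxb).ext
      (by clear * - hxF hae hbd n1 n2 n3 n4 n5 n6; grind) hxd.symm) hed.symm
    have k2 := hno _ _ _ (((hP2.ext (by clear * - hxF hae hbd n1 n2 n3 n4 n5 n6; grind) hda).ext (by clear * - hxF hae hbd n1 n2 n3 n4 n5 n6; grind) hxd).ext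
      (by clear * - hxF hae hbd n1 n2 n3 n4 n5 n6; grind) hxb.symm) hbe
    simp only [hc] at k1 k2
    rw [cs b a, cs d x, cs d e] at k1
    rw [cs b x] at k2
    generalize c a b = X1 at *; generalize c b e = X2 at *; generalize c e d = X3 at *
    generalize c d a = X4 at *; generalize c x b = X5 at *; generalize c x d = X6 at *
    clear * - k1 k2
    revert X1 X2 X3 X4 X5 X6 t; decide
  -- triangles sharing an edge
  have hTE : ∀ u v x y, G.Adj u v → G.Adj u x → G.Adj v x → G.Adj u y → G.Adj v y →
      c u v + c v x + c u x = c u v + c v y + c u y := by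
    intro u v x y huv hux hvx huy hvy
    by_cases hxy : x = y
    · rw [hxy]
    have := h4 x u y v hux.symm huy hvy.symm hvx hxy huv.ne
    rw [cs x u, cs y v] at this
    generalize c u v = X1 at *; generalize c v x = X2 at *; generalize c u x = X3 at *
    generalize c v y = X4 at *; generalize c u y = X5 at *
    clear * - this
    revert X1 X2 X3 X4 X5; decide
  have τ1 : ∀ u v x, c u v + c v x + c u x = c v u + c u x + c v x := by
    intro u v x; rw [cs u v]; ring
  have τ2 : ∀ u v x, c u v + c v x + c u x = c u x + c x v + c u v := by
    intro u v x; rw [cs x v]; ring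
  have hT : ∀ v x x' y y', G.Adj v x → G.Adj x x' → G.Adj v x' → G.Adj v y → G.Adj y y' →
      G.Adj v y' → c v x + c x x' + c v x' = c v y + c y y' + c v y' := by
    intro v x x' y y' hvx hxx hvx' hvy hyy hvy'
    by_contra hne
    have n1 : x ≠ y := by
      rintro rfl; exact hne (hTE _ _ _ _ hvx hvx' hxx hvy' hyy)
    have n2 : x ≠ y' := by
      rintro rfl; rw [τ2 v y x] at hne; exact hne (hTE _ _ _ _ hvx hvx' hxx hvy hyy.symm)
    have n3 : x' ≠ y := by
      rintro rfl; rw [τ2 v x x'] at hne; exact hne (hTE _ _ _ _ hvx' hvx hxx.symm hvy' hyy)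
    have n4 : x' ≠ y' := by
      rintro rfl; rw [τ2 v x x', τ2 v y x'] at hne
      exact hne (hTE _ _ _ _ hvx' hvx hxx.symm hvy hyy.symm)
    have key : ∀ p, G.Adj p v → G.Adj p x' → G.Adj p y → False := by
      intro p pv px py
      apply hne
      rw [τ2 v x x', hTE v x' x p hvx' hvx hxx.symm pv.symm px.symm, τ2 v x' p,
        hTE v p x' y pv.symm hvx' px hvy py, τ2 v p y,
        hTE v y p y' hvy pv.symm py.symm hvy' hyy]
    obtain ⟨s, hsF, hsx, hsy⟩ := orx_common G hd x' y {v, x, y'} Finset.card_le_three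
    simp only [Finset.mem_insert, Finset.mem_singleton, not_or] at hsF
    have m1 := hvx.ne; have m2 := hxx.ne; have m3 := hvx'.ne; have m4 := hvy.ne
    have m5 := hyy.ne; have m6 := hvy'.ne; have m7 := hsx.ne; have m8 := hsy.ne
    obtain ⟨t, hP⟩ := orx_hp_five G χ hd (insert v (insert x' (insert s (insert y ∅))))
      (Finset.card_le_four.trans (by norm_num)) (by
        intro p
        by_contra hh
        push Not at hh
        exact key p (hh v (by simp)) (hh x' (by simp)) (hh y (by simp)))
      x y' (by clear * - hsF n1 n2 n3 n4 m1 m2 m3 m4 m5 m6 m7 m8; grind) (by clear * - hsF n1 n2 n3 n4 m1 m2 m3 m4 m5 m6 m7 m8; grind) n2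
    have hP2 : OrxHP G χ (insert x' (insert s (insert y (insert v ∅)))) x y' t := by
      convert hP using 1; clear * - hsF n1 n2 n3 n4 m1 m2 m3 m4 m5 m6 m7 m8; grind
    have k1 := hno _ _ _ ((((hP.ext (by clear * - hsF n1 n2 n3 n4 m1 m2 m3 m4 m5 m6 m7 m8; grind) hvx).ext (by clear * - hsF n1 n2 n3 n4 m1 m2 m3 m4 m5 m6 m7 m8; grind) hvx'.symm).ext
      (by clear * - hsF n1 n2 n3 n4 m1 m2 m3 m4 m5 m6 m7 m8; grind) hsx).ext (by clear * - hsF n1 n2 n3 n4 m1 m2 m3 m4 m5 m6 m7 m8; grind) hsy.symm) hyy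
    have k2 := hno _ _ _ ((((hP2.ext (by clear * - hsF n1 n2 n3 n4 m1 m2 m3 m4 m5 m6 m7 m8; grind) hxx.symm).ext (by clear * - hsF n1 n2 n3 n4 m1 m2 m3 m4 m5 m6 m7 m8; grind) hsx).ext
      (by clear * - hsF n1 n2 n3 n4 m1 m2 m3 m4 m5 m6 m7 m8; grind) hsy.symm).ext (by clear * - hsF n1 n2 n3 n4 m1 m2 m3 m4 m5 m6 m7 m8; grind) hvy) hvy'
    simp only [hc] at k1 k2
    rw [cs x' v] at k1
    rw [cs x' x] at k2
    generalize c v x = X1 at *; generalize c x x' = X2 at *; generalize c v x' = X3 at *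
    generalize c v y = X4 at *; generalize c y y' = X5 at *; generalize c v y' = X6 at *
    generalize c y s = X7 at *; generalize c s x' = X8 at *
    clear * - k1 k2 hne two
    have e : (X1 + X2 + X3) - (X4 + X5 + X6) = 0 := by
      have q := two (X1+X2+X3); have q1 := two X4; have q2 := two X5; have q3 := two X6
      have q4 := two X7; have q5 := two X8; have q6 := two t
      have q7 := two 1
      linear_combination k1 + k2 - q1 - q2 - q3 - q4 - q5 - q6 + q7
    exact hne (sub_eq_zero.1 e)
  have hAll : ∀ a b e a' b' e', G.Adj a b → G.Adj b e → G.Adj a e → G.Adj a' b' → G.Adj b' e' →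
      G.Adj a' e' → c a b + c b e + c a e = c a' b' + c b' e' + c a' e' := by
    intro a b e a' b' e' h1 h2 h3 h1' h2' h3'
    obtain ⟨s, -, hs1, hs2⟩ := orx_common G hd a a' ∅ (by simp)
    obtain ⟨z, -, hz1, hz2⟩ := orx_common G hd a s ∅ (by simp)
    obtain ⟨y, -, hy1, hy2⟩ := orx_common G hd s a' ∅ (by simp)
    rw [hT a b e s z h1 h2 h3 hs1.symm hz2.symm hz1.symm, τ1,
      hT s a z a' y hs1 hz1.symm hz2.symm hs2 hy2.symm hy1.symm, τ1,
      hT a' s y b' e' hs2.symm hy1.symm hy2.symm h1' h2' h3']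
  obtain ⟨t, ht⟩ : ∃ t, ∀ a b e, G.Adj a b → G.Adj b e → G.Adj a e →
      c a b + c b e + c a e = t := by
    obtain ⟨v⟩ := ‹Nonempty V›
    obtain ⟨s, -, hs, -⟩ := orx_common G hd v v ∅ (by simp)
    obtain ⟨z, -, hz1, hz2⟩ := orx_common G hd v s ∅ (by simp)
    exact ⟨c v s + c s z + c v z, fun a b e h1 h2 h3 =>
      hAll _ _ _ _ _ _ h1 h2 h3 hs.symm hz2.symm hz1.symm⟩
  -- pentagons
  have h5 : ∀ v x u w y, G.Adj v x → G.Adj x u → G.Adj u w → G.Adj w y → G.Adj y v →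
      v ≠ u → v ≠ w → x ≠ w → x ≠ y → u ≠ y →
      c v x + c x u + c u w + c w y + c y v = t := by
    intro v x u w y hvx hxu huw hwy hyv n1 n2 n3 n4 n5
    by_contra hne
    have xy : ¬ G.Adj x y := by
      intro h
      apply hne
      have a1 := ht v x y hvx h hyv.symm
      have a2 := h4 x u w y hxu huw hwy h.symm n3 n5
      rw [cs v y] at a1
      rw [cs y x] at a2
      linear_combination a1 + a2 - two (c x y)
    have vw : ¬ G.Adj v w := by
      intro h
      apply hne
      have a1 := ht v w y h hwy hyv.symm
      have a2 := h4 v x u w hvx hxu huw h.symm n1 n3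
      rw [cs v y] at a1
      rw [cs w v] at a2
      linear_combination a1 + a2 - two (c v w)
    have uv : ¬ G.Adj v u := by
      intro h
      apply hne
      have a1 := ht v x u hvx hxu h
      have a2 := h4 v u w y h huw hwy hyv n2 n5
      linear_combination a1 + a2 - two (c v u)
    have uy : ¬ G.Adj u y := by
      intro h
      apply hne
      have a1 := ht u w y huw hwy h
      have a2 := h4 v x u y hvx hxu h hyv n1 n4
      linear_combination a1 + a2 - two (c u y)
    have key : ∀ p, G.Adj p v → G.Adj p y → G.Adj p u → False := by
      intro p pv py pu
      have px : p ≠ x := by rintro rfl; exact xy py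
      have pw : p ≠ w := by rintro rfl; exact vw pv.symm
      apply hne
      have a1 := h4 v x u p hvx hxu pu.symm pv n1 px.symm
      have a2 := h4 u w y p huw hwy py.symm pu n5 pw.symm
      have a3 := ht p v y pv hyv.symm py
      rw [cs u p] at a1
      rw [cs y p] at a2
      rw [cs v y] at a3
      linear_combination a1 + a2 + a3 - two (c p u) - two (c p v) - two (c p y)
    obtain ⟨r, -, rv, ry⟩ := orx_common G hd v y ∅ (by simp)
    have rx : r ≠ x := by rintro rfl; exact xy ry
    have rw' : r ≠ w := by rintro rfl; exact vw rv.symm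
    have ru : r ≠ u := by rintro rfl; exact uy ry
    obtain ⟨s, hsF, su, sr⟩ := orx_common G hd u r {x, w} (Finset.card_le_two.trans (by norm_num))
    simp only [Finset.mem_insert, Finset.mem_singleton, not_or] at hsF
    have sv : s ≠ v := by rintro rfl; exact uv su
    have sy : s ≠ y := by rintro rfl; exact uy su.symm
    have m1 := hvx.ne; have m2 := hxu.ne; have m3 := huw.ne; have m4 := hwy.ne
    have m5 := hyv.ne; have m6 := rv.ne; have m7 := ry.ne; have m8 := su.ne; have m9 := sr.ne
    obtain ⟨t', hP⟩ := orx_hp_five G χ hd (insert v (insert y (insert r (insert s (insert u ∅)))))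
      Finset.card_le_five (by
        intro p
        by_contra hh
        push Not at hh
        exact key p (hh v (by simp)) (hh y (by simp)) (hh u (by simp)))
      x w (by clear * - hsF n1 n2 n3 n4 n5 rx rw' ru sv sy m1 m2 m3 m4 m5 m6 m7 m8 m9; grind) (by clear * - hsF n1 n2 n3 n4 n5 rx rw' ru sv sy m1 m2 m3 m4 m5 m6 m7 m8 m9; grind) n3
    have hP2 : OrxHP G χ (insert u (insert s (insert r (insert v (insert y ∅))))) x w t' := by
      convert hP using 1; clear * - hsF n1 n2 n3 n4 n5 rx rw' ru sv sy m1 m2 m3 m4 m5 m6 m7 m8 m9; grind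
    have k1 := hno _ _ _ (((((hP.ext (by clear * - hsF n1 n2 n3 n4 n5 rx rw' ru sv sy m1 m2 m3 m4 m5 m6 m7 m8 m9; grind) hvx).ext (by clear * - hsF n1 n2 n3 n4 n5 rx rw' ru sv sy m1 m2 m3 m4 m5 m6 m7 m8 m9; grind) hyv).ext
      (by clear * - hsF n1 n2 n3 n4 n5 rx rw' ru sv sy m1 m2 m3 m4 m5 m6 m7 m8 m9; grind) ry).ext (by clear * - hsF n1 n2 n3 n4 n5 rx rw' ru sv sy m1 m2 m3 m4 m5 m6 m7 m8 m9; grind) sr).ext (by clear * - hsF n1 n2 n3 n4 n5 rx rw' ru sv sy m1 m2 m3 m4 m5 m6 m7 m8 m9; grind) su.symm) huw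
    have k2 := hno _ _ _ (((((hP2.ext (by clear * - hsF n1 n2 n3 n4 n5 rx rw' ru sv sy m1 m2 m3 m4 m5 m6 m7 m8 m9; grind) hxu.symm).ext (by clear * - hsF n1 n2 n3 n4 n5 rx rw' ru sv sy m1 m2 m3 m4 m5 m6 m7 m8 m9; grind) su).ext
      (by clear * - hsF n1 n2 n3 n4 n5 rx rw' ru sv sy m1 m2 m3 m4 m5 m6 m7 m8 m9; grind) sr.symm).ext (by clear * - hsF n1 n2 n3 n4 n5 rx rw' ru sv sy m1 m2 m3 m4 m5 m6 m7 m8 m9; grind) rv.symm).ext (by clear * - hsF n1 n2 n3 n4 n5 rx rw' ru sv sy m1 m2 m3 m4 m5 m6 m7 m8 m9; grind) hyv) hwy.symm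
    have k3 := ht r v y rv hyv.symm ry
    simp only [hc] at k1 k2
    rw [cs u s] at k1
    rw [cs u x, cs r s, cs v r, cs y w] at k2
    rw [cs v y] at k3
    apply hne
    have e1 : (2 : ZMod 2) = 0 := by decide
    linear_combination k1 + k2 - k3 + (1 - c u s - c s u - c s r - t' - c y v + t + c y v - 2 * t) * e1
      + two (c u s)
  -- potential
  obtain ⟨v0⟩ := ‹Nonempty V›
  have hgex : ∀ u, ∃ x, G.Adj x v0 ∧ G.Adj x u := fun u => by
    obtain ⟨s, -, h1, h2⟩ := orx_common G hd v0 u ∅ (by simp)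
    exact ⟨s, h1, h2⟩
  choose f hf1 hf2 using hgex
  obtain ⟨g, hgdef⟩ : ∃ g : V → ZMod 2, ∀ u, g u = c v0 (f u) + c (f u) u :=
    ⟨fun u => c v0 (f u) + c (f u) u, fun _ => rfl⟩
  have hg : ∀ u x, G.Adj x v0 → G.Adj x u → g u = c v0 x + c x u := by
    intro u x h1 h2
    rw [hgdef]
    by_cases hx : x = f u
    · rw [hx]
    by_cases hu : u = v0
    · rw [hu, cs v0 (f v0), cs v0 x, two, two]
    have := h4 v0 x u (f u) h1.symm h2 (hf2 u).symm (hf1 u) (Ne.symm hu) hx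
    rw [cs u (f u), cs (f u) v0] at this
    linear_combination two (c v0 (f u)) + two (c (f u) u) - this
  have hg0 : g v0 = 0 := by rw [hgdef, cs v0, two]
  have hedge0 : ∀ w, G.Adj v0 w → c v0 w = g w + t := by
    intro w h
    obtain ⟨y, -, h1, h2⟩ := orx_common G hd v0 w ∅ (by simp)
    rw [hg w y h1 h2]
    have := ht v0 y w h1.symm h2 h
    linear_combination this - two (c v0 y) - two (c y w)
  have hedge : ∀ u w, G.Adj u w → c u w = g u + g w + t := by
    intro u w h
    by_cases hu : u = v0
    · subst hu; rw [hedge0 w h, hg0]; ring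
    by_cases hw : w = v0
    · subst hw; rw [cs, hedge0 u h.symm, hg0]; ring
    obtain ⟨x, hxF, hx1, hx2⟩ := orx_common G hd v0 u {w} (by simp)
    obtain ⟨y, hyF, hy1, hy2⟩ := orx_common G hd v0 w {u, x}
      (Finset.card_le_two.trans (by norm_num))
    simp only [Finset.mem_insert, Finset.mem_singleton, not_or] at hxF hyF
    have := h5 v0 x u w y hx1.symm hx2 h hy2.symm hy1 (Ne.symm hu) (Ne.symm hw) hxF
      (Ne.symm hyF.2) (Ne.symm hyF.1)
    rw [hg u x hx1 hx2, hg w y hy1 hy2]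
    rw [cs w y, cs y v0] at this
    have e1 : (2 : ZMod 2) = 0 := by decide
    linear_combination this + (-c v0 x - c x u - c y w - c v0 y) * e1
  have hwalk : ∀ a b (P : G.Walk a b), (P.edges.map χ).sum = g a + g b + t * P.length := by
    intro a b P
    induction P with
    | nil => simp [two]
    | cons h p ih =>
      rw [SimpleGraph.Walk.edges_cons, List.map_cons, List.sum_cons, ih, hc, hedge _ _ h,
        SimpleGraph.Walk.length_cons]
      push_cast
      rename_i u v w
      linear_combination two (g v)
  obtain ⟨a, -, ha, -⟩ := orx_common G hd v0 v0 ∅ (by simp)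
  obtain ⟨b, hbF, hb, -⟩ := orx_common G hd v0 v0 {a} (by simp)
  obtain ⟨t', hP⟩ := orx_hp_small G χ hd (insert v0 ∅) (by simp) a b
    (by simpa using ha.ne) (by simpa using hb.ne) (fun h => hbF (by simp [h]))
  have hP2 := hP.ext (by simp) ha.symm
  have k := hno _ _ _ hP2 hb.symm
  obtain ⟨P, hPp, hPs, hPsum⟩ := hP2
  rw [← hPsum, hwalk, hc, hedge _ _ hb.symm] at k
  have hH : P.IsHamiltonian := (hPp.isHamiltonian_iff).2 (by simpa using hPs)
  have hl := hH.length_eq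
  have hpos : 0 < Fintype.card V := Fintype.card_pos
  have hcast : ((P.length + 1 : ℕ) : ZMod 2) = 0 := by
    rw [ZMod.natCast_eq_zero_iff_even, hl]
    rwa [Nat.sub_add_cancel hpos]
  push_cast at hcast
  have : (1 : ZMod 2) = 0 := by
    linear_combination two (g v0) + two (g b) + t * hcast - k
  exact absurd this (by decide)

end OddRamseyAux

/-- **Theorem.** Let `n ≥ 4` be even and `G` an `n`-vertex graph with
`δ(G) ≥ n/2 + 2`. Then for every 2-coloring of the edges of `G`, `G` contains
an even-chromatic Hamilton cycle (every color occurs an even number of times),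
i.e. `r_odd(n, n/2+2; C_n) ≥ 3`. -/
theorem odd_ramsey_dirac_plus_two (n : ℕ) (hn : 4 ≤ n) (hne : Even n)
    (G : SimpleGraph (Fin n)) [DecidableRel G.Adj]
    (hδ : n / 2 + 2 ≤ G.minDegree)
    (χ : Sym2 (Fin n) → Fin 2) :
    ∃ (a : Fin n) (w : G.Walk a a), w.IsHamiltonianCycle ∧
      ∀ c : Fin 2, Even ((w.edges.filter (fun e => χ e = c)).length) := by
  have : Nonempty (Fin n) := ⟨⟨0, by omega⟩⟩
  have hev := hne
  obtain ⟨k, hk⟩ := hne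
  obtain ⟨a, b, t, ⟨P, hP, hs, hsum⟩, hab, h0⟩ := orx_core G
    (fun e => if χ e = 1 then (1 : ZMod 2) else 0) (by
      intro v
      have := G.minDegree_le_degree v
      rw [Fintype.card_fin]
      omega) (by simpa using hev)
  have hH : P.IsHamiltonian := (hP.isHamiltonian_iff).2 (by simpa using hs)
  have hlen : P.length = n - 1 := by simpa using hH.length_eq
  have hcyc : (P.cons hab.symm).IsHamiltonianCycle := by
    rw [SimpleGraph.Walk.isHamiltonianCycle_iff_isCycle_and_support_count_tail_eq_one]
    refine ⟨?_, ?_⟩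
    · rw [SimpleGraph.Walk.cons_isCycle_iff]
      refine ⟨hP, ?_⟩
      intro hmem
      have := hP.length_eq_one_of_mem_edges (by rwa [Sym2.eq_swap] at hmem)
      omega
    · intro v
      simpa using hH v
  refine ⟨b, P.cons hab.symm, hcyc, ?_⟩
  have hsumfil : ∀ l : List (Sym2 (Fin n)),
      (l.map (fun e => if χ e = 1 then (1 : ZMod 2) else 0)).sum =
        ((l.filter (fun e => χ e = 1)).length : ZMod 2) := by
    intro l
    induction l with
    | nil => simp
    | cons e l ih =>
      rw [List.map_cons, List.sum_cons, ih, List.filter_cons]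
      by_cases h : χ e = 1
      · simp [h, add_comm]
      · simp [h]
  have hone : Even (((P.cons hab.symm).edges.filter (fun e => χ e = 1)).length) := by
    rw [← ZMod.natCast_eq_zero_iff_even, ← hsumfil, SimpleGraph.Walk.edges_cons, List.map_cons,
      List.sum_cons, hsum, Sym2.eq_swap]
    exact h0
  have htot : ∀ l : List (Sym2 (Fin n)), (l.filter (fun e => χ e = 0)).length +
      (l.filter (fun e => χ e = 1)).length = l.length := by
    intro l
    induction l with
    | nil => simp
    | cons e l ih =>
      rw [List.filter_cons, List.filter_cons]
      have : χ e = 0 ∨ χ e = 1 := by omega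
      rcases this with h | h <;> simp [h] <;> omega
  have h1 := htot (P.cons hab.symm).edges
  rw [SimpleGraph.Walk.length_edges, SimpleGraph.Walk.length_cons, hlen] at h1
  intro c
  have : c = 0 ∨ c = 1 := by omega
  rcases this with rfl | rfl
  · obtain ⟨j, hj⟩ := hone
    rw [hj] at h1
    exact ⟨k - j, by omega⟩
  · exact hone
end

section
/- Let n ≥ 4 be an integer. Then the unique-Ramsey number of Hamilton cycles satisfies r_u(n, C_n) > n/4. Equivalently, for every positive integer r with r ≤ n/4 and every edge-coloring of the complete graph K_n with r colors, there exists a Hamilton cycle of K_n in which no color occurs exactly once. -/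
set_option linter.unusedSectionVars false
set_option linter.unusedSimpArgs false
namespace URH
variable {V C : Type*} [DecidableEq V] [DecidableEq C]

/-- colours of the consecutive pairs of a list -/
def col (f : V → V → C) : List V → List C
  | [] => []
  | [_] => []
  | x :: y :: t => f x y :: col f (y :: t)

/-- number of consecutive pairs of colour `c` in a family of lists -/
def cnt (f : V → V → C) (c : C) (Z : List (List V)) : ℕ :=
  (Z.map (fun p => (col f p).count c)).sum

variable (f : V → V → C)

@[simp] lemma col_nil : col f [] = [] := rfl
@[simp] lemma col_single (x : V) : col f [x] = [] := rfl
@[simp] lemma col_cons (x y : V) (t : List V) : col f (x :: y :: t) = f x y :: col f (y :: t) := rfl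
@[simp] lemma cnt_nil (c : C) : cnt f c [] = 0 := rfl
@[simp] lemma cnt_cons (c : C) (p : List V) (Z : List (List V)) :
    cnt f c (p :: Z) = (col f p).count c + cnt f c Z := by simp [cnt]
@[simp] lemma cnt_append (c : C) (Y Z : List (List V)) :
    cnt f c (Y ++ Z) = cnt f c Y + cnt f c Z := by simp [cnt]
lemma cnt_perm (c : C) {Y Z : List (List V)} (h : Y.Perm Z) : cnt f c Y = cnt f c Z := by
  unfold cnt; exact (h.map _).sum_eq
@[simp] lemma cnt_singles (c : C) (R : List V) : cnt f c (R.map (fun v => [v])) = 0 := by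
  induction R with
  | nil => rfl
  | cons a t ih => simp [ih]
@[simp] lemma flatten_singles (R : List V) : (R.map (fun v => [v])).flatten = R := by
  induction R with
  | nil => rfl
  | cons a t ih => simp [ih]

lemma col_join (l1 : List V) (x y : V) (l2 : List V) :
    col f (l1 ++ x :: y :: l2) = col f (l1 ++ [x]) ++ f x y :: col f (y :: l2) := by
  induction l1 with
  | nil => simp
  | cons a t ih =>
    cases t with
    | nil => simp
    | cons b t => simpa using ih

lemma col_snoc (l1 : List V) (x y : V) :
    col f (l1 ++ [x, y]) = col f (l1 ++ [x]) ++ [f x y] := by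
  simpa using col_join f l1 x y []

lemma count_append_ge (c : C) (l1 l2 : List V) :
    (col f l1).count c + (col f l2).count c ≤ (col f (l1 ++ l2)).count c := by
  rcases List.eq_nil_or_concat l1 with h | ⟨l, x, rfl⟩
  · subst h; simp
  · cases l2 with
    | nil => simp
    | cons y t =>
      have := col_join f l x y t
      simp only [List.append_assoc, List.singleton_append, List.concat_eq_append] at *
      rw [this]; simp [List.count_cons]

lemma cnt_le_flatten (c : C) (Z : List (List V)) : cnt f c Z ≤ (col f Z.flatten).count c := by
  induction Z with
  | nil => simp
  | cons p Z ih =>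
    have := count_append_ge f c p Z.flatten
    simp; omega

lemma col_reverse (hf : ∀ x y, f x y = f y x) (l : List V) :
    col f l.reverse = (col f l).reverse := by
  induction l with
  | nil => rfl
  | cons a t ih =>
    cases t with
    | nil => rfl
    | cons b t =>
      rw [col_cons, List.reverse_cons, List.reverse_cons]
      rw [List.reverse_cons] at ih
      rw [List.reverse_cons, ← ih]
      simp only [List.reverse_cons, List.append_assoc, List.singleton_append]
      rw [col_snoc, hf]

lemma exists_perm_cons {α : Type*} {a : α} {l : List α} (h : a ∈ l) :
    ∃ l', l.Perm (a :: l') := by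
  obtain ⟨s, t, rfl⟩ := List.append_of_mem h
  exact ⟨s ++ t, List.perm_middle⟩

lemma trim (l : List V) : ∀ (g : C → ℕ), (∀ c, g c ≤ (col f l).count c) →
    ∃ Z : List (List V), Z.flatten = l ∧ (∀ p ∈ Z, p ≠ []) ∧ ∀ c, cnt f c Z = g c := by
  induction l with
  | nil => intro g hg; exact ⟨[], by simp, by simp, fun c => by simpa [eq_comm] using hg c⟩
  | cons x t ih =>
    intro g hg
    cases t with
    | nil => exact ⟨[[x]], by simp, by simp, fun c => by simpa [eq_comm] using hg c⟩
    | cons y t =>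
      by_cases h : g (f x y) ≤ (col f (y :: t)).count (f x y)
      · obtain ⟨Z, h1, h2, h3⟩ := ih g (by
          intro c
          have := hg c
          by_cases hc : f x y = c
          · rw [← hc]; exact h
          · simpa [List.count_cons, hc] using this)
        exact ⟨[x] :: Z, by simp [h1], by simpa using h2, by simpa using h3⟩
      · obtain ⟨Z, h1, h2, h3⟩ := ih (fun c => g c - if f x y = c then 1 else 0) (by
          intro c
          have := hg c
          by_cases hc : f x y = c
          · simp [hc, List.count_cons] at this ⊢; omega
          · simpa [List.count_cons, hc] using this)
        cases Z with
        | nil => simp at h1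
        | cons p Z =>
          cases p with
          | nil => simp at h2
          | cons z p =>
            have hz : z = y := by simp at h1; exact h1.1
            subst hz
            refine ⟨(x :: z :: p) :: Z, by simpa using h1, ?_, ?_⟩
            · intro q hq
              rcases List.mem_cons.1 hq with rfl | hq
              · simp
              · exact h2 q (by simp [hq])
            · intro c
              have := h3 c
              by_cases hc : f x z = c
              · subst hc; simp [List.count_cons] at this ⊢; omega
              · simp [List.count_cons, hc] at this ⊢; omega

lemma split_singles (Z : List (List V)) (hZ : ∀ p ∈ Z, p ≠ []) :
    ∃ (Q : List (List V)) (R : List V), (Q.flatten ++ R).Perm Z.flatten ∧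
      (∀ p ∈ Q, 2 ≤ p.length) ∧ ∀ c, cnt f c Q = cnt f c Z := by
  induction Z with
  | nil => exact ⟨[], [], by simp⟩
  | cons p Z ih =>
    obtain ⟨Q, R, h1, h2, h3⟩ := ih (fun q hq => hZ q (by simp [hq]))
    by_cases hp : 2 ≤ p.length
    · exact ⟨p :: Q, R, by simpa using h1.append_left p, by simpa [hp] using h2, by simp [h3]⟩
    · match p, hp, hZ p (by simp) with
      | [x], _, _ =>
        refine ⟨Q, x :: R, ?_, h2, by simp [h3]⟩
        simp only [List.flatten_cons, List.singleton_append]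
        exact List.perm_middle.trans (h1.cons x)
      | x :: y :: t, hp, _ => simp at hp

lemma trim2 (l : List V) (g : C → ℕ) (hg : ∀ c, g c ≤ (col f l).count c) :
    ∃ (Q : List (List V)) (R : List V), (Q.flatten ++ R).Perm l ∧
      (∀ p ∈ Q, 2 ≤ p.length) ∧ ∀ c, cnt f c Q = g c := by
  obtain ⟨Z, h1, h2, h3⟩ := trim f l g hg
  obtain ⟨Q, R, h4, h5, h6⟩ := split_singles f Z h2
  exact ⟨Q, R, h1 ▸ h4, h5, fun c => (h6 c).trans (h3 c)⟩

/-- `t` is an end vertex of the path `p`. -/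
def IsEnd (p : List V) (t : V) : Prop := (∃ q, p = t :: q) ∨ ∃ q, p = q ++ [t]

structure State [Fintype C] (U : List V) (s : ℕ) (Q D : List (List V)) (R : List V) : Prop where
  perm : (Q.flatten ++ (D.flatten ++ R)).Perm U
  lenQ : ∀ p ∈ Q, 2 ≤ p.length
  lenD : ∀ p ∈ D, 2 ≤ p.length
  cQ : ∀ c, cnt f c Q = 0 ∨ cnt f c Q = 2
  cD : ∀ c, cnt f c D = 0 ∨ cnt f c D = 2
  cQD : ∀ c, cnt f c Q + cnt f c D ≤ 2
  card : (Finset.univ.filter (fun c => cnt f c Q + cnt f c D ≠ 0)).card = s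
  flex : ∀ p ∈ D, ∀ t, IsEnd p t → ∃ (D' : List (List V)) (z : V), z ∈ R ∧
    (t :: D'.flatten).Perm (z :: D.flatten) ∧ ∀ c, cnt f c D' = cnt f c D

variable [Fintype C]

lemma State.max {U : List V} {s : ℕ} {Q D : List (List V)} {R : List V}
    (h : State f U s Q D R)
    (hs : ∀ Z : List (List V), Z.flatten.Perm U →
      (Finset.univ.filter (fun c => 2 ≤ cnt f c Z)).card ≤ s)
    (Z : List (List V)) (hZ : Z.flatten.Perm U)
    (hc : ∀ c, cnt f c Q + cnt f c D ≤ cnt f c Z) (c : C) (h0 : cnt f c Q + cnt f c D = 0) :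
    cnt f c Z ≤ 1 := by
  by_contra hlt
  have h1 : insert c (Finset.univ.filter (fun c => cnt f c Q + cnt f c D ≠ 0)) ⊆
      Finset.univ.filter (fun c => 2 ≤ cnt f c Z) := by
    intro d hd
    rcases Finset.mem_insert.1 hd with rfl | hd
    · simp; omega
    · simp only [Finset.mem_filter, Finset.mem_univ, true_and] at hd ⊢
      have := hc d; have := h.cQ d; have := h.cD d; omega
  have h2 := Finset.card_le_card h1
  rw [Finset.card_insert_of_notMem (by simp; omega), h.card] at h2
  have := hs Z hZ
  omega

lemma exists_init (U : List V) : ∃ s, 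
    (∀ Z : List (List V), Z.flatten.Perm U →
      (Finset.univ.filter (fun c => 2 ≤ cnt f c Z)).card ≤ s) ∧
    ∃ Q R, State f U s Q [] R := by
  classical
  let A : Set ℕ := {s | ∃ Z : List (List V), Z.flatten.Perm U ∧
    (Finset.univ.filter (fun c => 2 ≤ cnt f c Z)).card = s}
  have hA : A.Nonempty := ⟨_, [U], by simp, rfl⟩
  have hb : BddAbove A := ⟨Fintype.card C, by
    rintro _ ⟨Z, _, rfl⟩; exact Finset.card_le_univ _⟩
  obtain ⟨Z, hZ, hc⟩ := Nat.sSup_mem hA hb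
  refine ⟨sSup A, fun Y hY => le_csSup hb ⟨Y, hY, rfl⟩, ?_⟩
  obtain ⟨Q, R, h1, h2, h3⟩ := trim2 f Z.flatten (fun c => if 2 ≤ cnt f c Z then 2 else 0) (by
    intro c
    have := cnt_le_flatten f c Z
    split_ifs <;> omega)
  refine ⟨Q, R, by simpa using h1.trans hZ, h2, by simp, ?_, by simp, ?_, ?_, by simp⟩
  · intro c; rw [h3]; split_ifs <;> simp
  · intro c; rw [h3]; split_ifs <;> simp
  · rw [← hc]; congr 1; ext c; simp [h3]; omega

lemma State.exchange (hf : ∀ x y, f x y = f y x)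
    {U : List V} {s : ℕ} {Q D : List (List V)} {R : List V}
    (h : State f U s Q D R) {p : List V} (hp : p ∈ Q) {u : V} (hu : IsEnd p u) {c : C}
    (h0 : cnt f c Q + cnt f c D = 0) {w w' w'' : V} {R0 : List V}
    (hR : R.Perm (w :: w' :: w'' :: R0)) (h1 : f u w = c) (h2 : f u w' = c) (h3 : f u w'' = c) :
    ∃ Q' D' R', State f U s Q' D' R' ∧ D'.length = D.length + 1 := by
  -- normalise the path so that it starts in u
  obtain ⟨y, rest, hpp, hpc⟩ : ∃ y rest, p.Perm (u :: y :: rest) ∧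
      ∀ e, (col f p).count e = (col f (u :: y :: rest)).count e := by
    have hl := h.lenQ p hp
    rcases hu with ⟨q, rfl⟩ | ⟨q, rfl⟩
    · match q, hl with
      | y :: t, _ => exact ⟨y, t, List.Perm.refl _, fun e => rfl⟩
      | [], hl => simp at hl
    · rcases List.eq_nil_or_concat q with rfl | ⟨t, y, rfl⟩
      · simp at hl
      · refine ⟨y, t.reverse, ?_, ?_⟩
        · have := List.reverse_perm (t.concat y ++ [u])
          simpa using this.symm
        · intro e
          have := col_reverse f hf (t.concat y ++ [u])
          rw [← List.count_reverse, ← this]; simp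
  obtain ⟨Q0, hQ0⟩ := exists_perm_cons hp
  have hcQ : ∀ e, cnt f e Q = (col f (u :: y :: rest)).count e + cnt f e Q0 := by
    intro e; rw [cnt_perm f e hQ0]; simp only [cnt_cons, hpc]
  obtain ⟨Q1, R1, g1, g2, g3⟩ := trim2 f ((y :: rest) ++ Q0.flatten)
    (fun e => if e = f u y then 0 else cnt f e Q) (by
      intro e
      have a1 := count_append_ge f e (y :: rest) Q0.flatten
      have a2 := cnt_le_flatten f e Q0
      have a3 := hcQ e
      split_ifs with he
      · omega
      · have : ¬ (f u y = e) := fun h => he h.symm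
        simp [List.count_cons, this] at a3; omega)
  have hd2 : cnt f (f u y) Q ≠ 0 := by
    rw [hcQ]; simp
  have hcd : c ≠ f u y := by rintro rfl; omega
  have hD0 : cnt f (f u y) D = 0 := by
    have := h.cQD (f u y); have := h.cQ (f u y); omega
  have hcol : ∀ e, cnt f e ([w, u, w'] :: D) = (if e = c then 2 else 0) + cnt f e D := by
    intro e
    rw [cnt_cons]; simp only [col_cons, col_single, hf w u, h1, h2, List.count_cons, List.count_nil]
    by_cases he : e = c
    · simp [he]
    · have : ¬ (c = e) := fun h => he h.symm
      simp [he, this]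
  have hcount : ∀ a b, (([a, u, b] : List V) :: D).length = D.length + 1 := by simp
  refine ⟨Q1, [w, u, w'] :: D, w'' :: R0 ++ R1, ⟨?_, g2, ?_, ?_, ?_, ?_, ?_, ?_⟩, by simp⟩
  · refine List.Perm.trans ?_ h.perm
    have q1 := hQ0.flatten
    rw [List.perm_iff_count] at *
    intro a
    have e1 := hR a; have e2 := g1 a; have e3 := hpp a; have e4 := q1 a
    simp only [List.count_append, List.flatten_cons, List.count_cons, List.count_nil] at *
    omega
  · intro q hq
    rcases List.mem_cons.1 hq with rfl | hq
    · simp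
    · exact h.lenD q hq
  · intro e; rw [g3]; have := h.cQ e; split_ifs <;> simp_all
  · intro e; rw [hcol]; have := h.cD e; split_ifs with he
    · subst he; omega
    · omega
  · intro e; rw [hcol, g3]; have := h.cQD e
    by_cases he : e = c
    · subst he; simp [hcd]; omega
    · simp only [he, if_false]; split_ifs <;> omega
  · rw [← h.card]
    have hset : (Finset.univ.filter (fun e => cnt f e Q1 + cnt f e ([w, u, w'] :: D) ≠ 0)) =
        insert c ((Finset.univ.filter (fun e => cnt f e Q + cnt f e D ≠ 0)).erase (f u y)) := by
      ext e
      simp only [Finset.mem_filter, Finset.mem_univ, true_and, Finset.mem_insert, Finset.mem_erase,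
        hcol, g3]
      by_cases he : e = c
      · simp [he]
      · by_cases hd : e = f u y
        · simp [hd, hD0, hcd.symm]
        · simp [he, hd]
    rw [hset, Finset.card_insert_of_notMem, Finset.card_erase_of_mem]
    · have : 0 < (Finset.univ.filter (fun e => cnt f e Q + cnt f e D ≠ 0)).card :=
        Finset.card_pos.2 ⟨f u y, by simp [hd2]⟩
      omega
    · simp [hd2]
    · simp; intro _; omega
  · -- flexibility
    have key : ∀ a b, (a, b) ∈ [(w, w'), (w, w''), (w', w'')] →
        ∀ D' : List (List V), (∀ e, cnt f e D' = cnt f e D) →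
        ∀ e, cnt f e ([a, u, b] :: D') = cnt f e ([w, u, w'] :: D) := by
      intro a b hab D' hD' e
      have : f a u = c ∧ f u b = c := by
        rw [hf a u]
        simp at hab
        rcases hab with ⟨rfl, rfl⟩ | ⟨rfl, rfl⟩ | ⟨rfl, rfl⟩ <;> simp_all
      simp [hD', this.1, this.2, hf w u, h1, h2]
    intro q hq t ht
    rcases List.mem_cons.1 hq with rfl | hq
    · have : t = w ∨ t = w' := by
        rcases ht with ⟨q, hq⟩ | ⟨q, hq⟩
        · left; simp at hq; exact hq.1.symm
        · right
          have := congrArg List.getLast? hq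
          simpa using this.symm
      rcases this with rfl | rfl
      · refine ⟨[w', u, w''] :: D, w'', by simp, ?_, key _ _ (by simp) D (fun _ => rfl)⟩
        rw [List.perm_iff_count]; intro a
        simp only [List.count_append, List.flatten_cons, List.count_cons, List.count_nil]; omega
      · refine ⟨[w, u, w''] :: D, w'', by simp, ?_, key _ _ (by simp) D (fun _ => rfl)⟩
        rw [List.perm_iff_count]; intro a
        simp only [List.count_append, List.flatten_cons, List.count_cons, List.count_nil]; omega
    · obtain ⟨D', z, hz, k1, k2⟩ := h.flex q hq t ht
      rw [hR.mem_iff] at hz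
      rw [List.perm_iff_count] at k1
      by_cases z1 : z = w
      · subst z1
        refine ⟨[w', u, w''] :: D', w'', by simp, ?_, key _ _ (by simp) D' k2⟩
        rw [List.perm_iff_count]; intro a; have := k1 a
        simp only [List.count_append, List.flatten_cons, List.count_cons, List.count_nil] at *; omega
      by_cases z2 : z = w'
      · subst z2
        refine ⟨[w, u, w''] :: D', w'', by simp, ?_, key _ _ (by simp) D' k2⟩
        rw [List.perm_iff_count]; intro a; have := k1 a
        simp only [List.count_append, List.flatten_cons, List.count_cons, List.count_nil] at *; omega
      · refine ⟨[w, u, w'] :: D', z, by simp_all; tauto, ?_, key _ _ (by simp) D' k2⟩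
        rw [List.perm_iff_count]; intro a; have := k1 a
        simp only [List.count_append, List.flatten_cons, List.count_cons, List.count_nil] at *; omega

/-- A maximal state has no bad ends. -/
lemma exists_good (hf : ∀ x y, f x y = f y x) (U : List V) : ∃ (B : List (List V)) (R : List V),
    (B.flatten ++ R).Perm U ∧ (∀ p ∈ B, 2 ≤ p.length) ∧
    (∀ c, cnt f c B = 0 ∨ cnt f c B = 2) ∧
    (∀ Z : List (List V), Z.flatten.Perm U → (∀ c, cnt f c B ≤ cnt f c Z) →
      ∀ c, cnt f c B = 0 → cnt f c Z ≤ 1) ∧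
    (∀ p ∈ B, ∀ u, IsEnd p u → ∀ c, cnt f c B = 0 → ∀ w w' w'' R0,
      R.Perm (w :: w' :: w'' :: R0) → f u w = c → f u w' = c → f u w'' = c → False) := by
  obtain ⟨s, hs, Q0, R0, h0⟩ := exists_init f U
  let A : Set ℕ := {m | ∃ Q D R, State f U s Q D R ∧ D.length = m}
  have hA : A.Nonempty := ⟨_, Q0, [], R0, h0, rfl⟩
  have hb : BddAbove A := ⟨U.length, by
    rintro _ ⟨Q, D, R, h, rfl⟩
    have h1 := h.perm.length_eq
    have h2 : D.length ≤ D.flatten.length := by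
      have := h.lenD
      clear h h1
      induction D with
      | nil => simp
      | cons p D ih =>
        have a := ih (fun q hq => this q (by simp [hq]))
        have b := this p (by simp)
        simp at a ⊢; omega
    simp only [List.length_append] at h1
    omega⟩
  obtain ⟨Q, D, R, h, hD⟩ := Nat.sSup_mem hA hb
  have hmax : ∀ Z : List (List V), Z.flatten.Perm U →
      (∀ c, cnt f c Q + cnt f c D ≤ cnt f c Z) →
      ∀ c, cnt f c Q + cnt f c D = 0 → cnt f c Z ≤ 1 := fun Z hZ hc c h0 => h.max f hs Z hZ hc c h0
  refine ⟨Q ++ D, R, by simpa using h.perm, ?_, ?_, ?_, ?_⟩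
  · intro p hp
    rcases List.mem_append.1 hp with hp | hp
    · exact h.lenQ p hp
    · exact h.lenD p hp
  · intro c; rw [cnt_append]; have := h.cQ c; have := h.cD c; have := h.cQD c; omega
  · simpa only [cnt_append] using hmax
  · intro p hp u hu c hc w w' w'' R0 hR h1 h2 h3
    rw [cnt_append] at hc
    rcases List.mem_append.1 hp with hp | hp
    · obtain ⟨Q', D', R', h', hl⟩ := h.exchange f hf hp hu hc hR h1 h2 h3
      have := le_csSup hb (show D'.length ∈ A from ⟨Q', D', R', h', rfl⟩)
      omega
    · obtain ⟨D', z, hz, k1, k2⟩ := h.flex p hp u hu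
      have hfin : ∀ a b rest, R.Perm (z :: a :: b :: rest) → f u a = c → f u b = c → False := by
        intro a b rest hr ha hb
        have := hmax ([a, u, b] :: (Q ++ (D' ++ rest.map (fun v => [v])))) (by
          refine List.Perm.trans ?_ h.perm
          rw [List.perm_iff_count] at *
          intro x
          have e1 := hr x; have e2 := k1 x
          simp only [List.flatten_append, List.count_append, List.flatten_cons, List.count_cons,
            List.count_nil, flatten_singles] at *
          omega) (by intro e; simp only [cnt_cons, cnt_append, k2]; omega) c hc
        simp [hf a u, ha, hb] at this
        omega
      rw [hR.mem_iff] at hz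
      simp only [List.mem_cons] at hz
      rcases hz with rfl | rfl | rfl | hz
      · exact hfin _ _ _ hR h2 h3
      · exact hfin _ _ _ (hR.trans (List.Perm.swap _ _ _)) h1 h3
      · refine hfin w w' R0 (hR.trans ?_) h1 h2
        rw [List.perm_iff_count]; intro x; simp only [List.count_cons]; omega
      · obtain ⟨R1, hR1⟩ := exists_perm_cons hz
        refine hfin w w' (w'' :: R1) (hR.trans ?_) h1 h2
        rw [List.perm_iff_count] at *; intro x; have := hR1 x
        simp only [List.count_cons] at *; omega
end URH

namespace URH
variable {V C : Type*} [DecidableEq V] [DecidableEq C] (f : V → V → C)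

/-- cyclic colours -/
def ccol (f : V → V → C) : List V → List C
  | [] => []
  | x :: t => col f (x :: t ++ [x])

lemma ccol_eq (a b : V) (x y : List V) (h : a :: x = y ++ [b]) :
    ccol f (a :: x) = col f (a :: x) ++ [f b a] := by
  show col f ((a :: x) ++ [a]) = _
  rw [h, List.append_assoc, List.singleton_append, col_snoc]

lemma head_last (l : List V) (hl : l ≠ []) : ∃ a x b y, l = a :: x ∧ l = y ++ [b] := by
  obtain ⟨a, x, rfl⟩ := List.exists_cons_of_ne_nil hl
  rcases List.eq_nil_or_concat (a :: x) with h | ⟨y, b, h⟩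
  · simp at h
  · exact ⟨a, x, b, y, rfl, by simpa using h⟩

lemma ccol_rotate (l1 l2 : List V) : (ccol f (l1 ++ l2)).Perm (ccol f (l2 ++ l1)) := by
  by_cases h1 : l1 = []
  · subst h1; simp
  by_cases h2 : l2 = []
  · subst h2; simp
  obtain ⟨a, x, b, y, e1, e2⟩ := head_last l1 h1
  obtain ⟨a', x', b', y', e3, e4⟩ := head_last l2 h2
  have k1 : ccol f (l1 ++ l2) = (col f l1 ++ f b a' :: col f l2) ++ [f b' a] := by
    have : l1 ++ l2 = a :: (x ++ l2) := by simp [e1]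
    rw [this, ccol_eq f a b' (x ++ l2) (l1 ++ y') (by rw [← this, e4]; simp), ← this]
    congr 1
    rw [e2, e3, List.append_assoc, List.singleton_append, col_join]
  have k2 : ccol f (l2 ++ l1) = (col f l2 ++ f b' a :: col f l1) ++ [f b a'] := by
    have : l2 ++ l1 = a' :: (x' ++ l1) := by simp [e3]
    rw [this, ccol_eq f a' b (x' ++ l1) (l2 ++ y) (by rw [← this, e2]; simp), ← this]
    congr 1
    rw [e4, e1, List.append_assoc, List.singleton_append, col_join]
  rw [k1, k2, List.perm_iff_count]
  intro c
  simp only [List.count_append, List.count_cons, List.count_nil]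
  omega

lemma find_junction (e : C) (L : List (List V)) (hL : ∀ p ∈ L, e ∉ col f p)
    (he : e ∈ col f L.flatten) : ∃ L1 L2 x b a y, L = L1 ++ L2 ∧ L1.flatten = x ++ [b] ∧
      L2.flatten = a :: y ∧ f b a = e := by
  induction L with
  | nil => simp at he
  | cons p L ih =>
    by_cases hin : e ∈ col f L.flatten
    · obtain ⟨L1, L2, x, b, a, y, h1, h2, h3, h4⟩ := ih (fun q hq => hL q (by simp [hq])) hin
      exact ⟨p :: L1, L2, p ++ x, b, a, y, by simp [h1], by simp [h2], h3, h4⟩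
    · by_cases hp : p = []
      · subst hp; simp at he; exact absurd he hin
      by_cases hq : L.flatten = []
      · simp only [List.flatten_cons, hq, List.append_nil] at he
        exact absurd he (hL p (by simp))
      obtain ⟨_, _, b, x, _, e2⟩ := head_last p hp
      obtain ⟨a, y, _, _, e3, _⟩ := head_last _ hq
      refine ⟨[p], L, x, b, a, y, rfl, by simp [e2], e3, ?_⟩
      have hp' := hL p (by simp)
      rw [List.flatten_cons] at he
      rw [e2] at he hp'
      rw [e3] at he hin
      rw [List.append_assoc, List.singleton_append, col_join] at he
      simp only [List.mem_append, List.mem_cons] at he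
      rcases he with he | he | he
      · exact absurd he hp'
      · exact he.symm
      · exact absurd he hin

lemma exists_closing (e : C) (L : List (List V)) (hL : ∀ p ∈ L, e ∉ col f p)
    (he : e ∈ ccol f L.flatten) : ∃ L1 L2 a b x y, L = L1 ++ L2 ∧
      (L2 ++ L1).flatten = a :: x ∧ (L2 ++ L1).flatten = y ++ [b] ∧ f b a = e := by
  by_cases h0 : L.flatten = []
  · rw [h0] at he; simp [ccol] at he
  obtain ⟨a, x, b, y, e1, e2⟩ := head_last _ h0
  have hc := ccol_eq f a b x y (by rw [← e1, ← e2])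
  rw [← e1] at hc
  rw [hc, List.mem_append] at he
  rcases he with he | he
  · obtain ⟨L1, L2, x, b, a, y, h1, h2, h3, h4⟩ := find_junction f e L hL he
    exact ⟨L1, L2, a, b, y ++ L1.flatten, L2.flatten ++ x, h1, by simp [h3], by simp [h2], h4⟩
  · exact ⟨[], L, a, b, x, y, by simp, by simpa using e1, by simpa using e2, by simpa [eq_comm] using he⟩

lemma split2 (L : List (List V)) (v w : V) (hvw : v ≠ w) (hv : [v] ∈ L) (hw : [w] ∈ L) :
    ∃ X M Y, L = X ++ [v] :: (M ++ [w] :: Y) ∨ L = X ++ [w] :: (M ++ [v] :: Y) := by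
  obtain ⟨S, T, rfl⟩ := List.append_of_mem hv
  simp only [List.mem_append, List.mem_cons] at hw
  rcases hw with hw | hw | hw
  · obtain ⟨X, M, rfl⟩ := List.append_of_mem hw
    exact ⟨X, M, T, Or.inr (by simp)⟩
  · simp at hw; exact absurd hw.symm hvw
  · obtain ⟨M, Y, rfl⟩ := List.append_of_mem hw
    exact ⟨S, M, Y, Or.inl rfl⟩

section core
variable [Fintype C]

lemma core_single (hf : ∀ x y, f x y = f y x)
    (B : List (List V)) (R : List V)
    (hmax : ∀ Z : List (List V), Z.flatten.Perm (B.flatten ++ R) → (∀ c, cnt f c B ≤ cnt f c Z) →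
      ∀ c, cnt f c B = 0 → cnt f c Z ≤ 1)
    (c : C) (hc : cnt f c B = 0) (u v w : V)
    (hu : u ∈ R) (hv : v ∈ R) (hw : w ∈ R)
    (huv : u ≠ v) (huw : u ≠ w) (hvw : v ≠ w) (h1 : f u v = c) (h2 : f u w = c) : False := by
  obtain ⟨R1, k1⟩ := exists_perm_cons hu
  rw [k1.mem_iff] at hv hw
  simp only [List.mem_cons, huv.symm, huw.symm, false_or] at hv hw
  obtain ⟨R2, k2⟩ := exists_perm_cons hv
  rw [k2.mem_iff] at hw
  simp only [List.mem_cons, hvw.symm, false_or] at hw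
  obtain ⟨R3, k3⟩ := exists_perm_cons hw
  have := hmax ([v, u, w] :: (B ++ R3.map (fun v => [v]))) (by
    rw [List.perm_iff_count] at *
    intro x
    have := k1 x; have := k2 x; have := k3 x
    simp only [List.flatten_append, List.count_append, List.flatten_cons, List.count_cons,
            List.count_nil, flatten_singles] at *
    omega) (by intro e; simp only [cnt_cons, cnt_append]; omega) c hc
  simp [hf v u, h1, h2] at this
  omega

lemma core_end (B : List (List V)) (R : List V)
    (hend : ∀ p ∈ B, ∀ u, IsEnd p u → ∀ c, cnt f c B = 0 → ∀ w w' w'' R0,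
      R.Perm (w :: w' :: w'' :: R0) → f u w = c → f u w' = c → f u w'' = c → False)
    (c : C) (hc : cnt f c B = 0) (p : List V) (hp : p ∈ B) (u : V) (hu : IsEnd p u)
    (v w z : V) (hv : v ∈ R) (hw : w ∈ R) (hz : z ∈ R) (hvw : v ≠ w) (hvz : v ≠ z) (hwz : w ≠ z)
    (h1 : f u v = c) (h2 : f u w = c) (h3 : f u z = c) : False := by
  obtain ⟨R1, k1⟩ := exists_perm_cons hv
  rw [k1.mem_iff] at hw hz
  simp only [List.mem_cons, hvw.symm, hvz.symm, false_or] at hw hz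
  obtain ⟨R2, k2⟩ := exists_perm_cons hw
  rw [k2.mem_iff] at hz
  simp only [List.mem_cons, hwz.symm, false_or] at hz
  obtain ⟨R3, k3⟩ := exists_perm_cons hz
  exact hend p hp u hu c hc v w z R3 (k1.trans ((k2.trans (k3.cons _)).cons _)) h1 h2 h3

set_option maxHeartbeats 1600000 in
lemma core (hf : ∀ x y, f x y = f y x) (B : List (List V)) (R : List V)
    (hnd : (B.flatten ++ R).Nodup)
    (hmax : ∀ Z : List (List V), Z.flatten.Perm (B.flatten ++ R) → (∀ c, cnt f c B ≤ cnt f c Z) →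
      ∀ c, cnt f c B = 0 → cnt f c Z ≤ 1)
    (hend : ∀ p ∈ B, ∀ u, IsEnd p u → ∀ c, cnt f c B = 0 → ∀ w w' w'' R0,
      R.Perm (w :: w' :: w'' :: R0) → f u w = c → f u w' = c → f u w'' = c → False)
    (hlen : ∀ p ∈ B, 2 ≤ p.length)
    (hcard : 4 * (Finset.univ.filter (fun c => cnt f c B = 0)).card ≤ R.length)
    (L : List (List V)) (hL : L.Perm (B ++ R.map (fun v => [v])))
    (hmin : ∀ L' : List (List V), L'.Perm L →
      (ccol f L.flatten).countP (fun c => cnt f c B = 0) ≤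
      (ccol f L'.flatten).countP (fun c => cnt f c B = 0))
    (a b : V) (xa yb : List V) (ha : L.flatten = a :: xa) (hb : L.flatten = yb ++ [b])
    (hab : cnt f (f b a) B = 0) : False := by
  have hLf : L.flatten.Perm (B.flatten ++ R) := by simpa using hL.flatten
  have hLnd : L.flatten.Nodup := hLf.nodup_iff.2 hnd
  have hLc : ∀ c, cnt f c L = cnt f c B := fun c => by rw [cnt_perm f c hL]; simp
  have hRL : ∀ v ∈ R, [v] ∈ L := fun v hv => hL.mem_iff.2 (by simp [hv])
  -- application of maximality to rearrangements of L
  have hmx : ∀ Z : List (List V), Z.flatten.Perm L.flatten → (∀ c, cnt f c L ≤ cnt f c Z) →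
      ∀ c, cnt f c B = 0 → cnt f c Z ≤ 1 := fun Z hZ hc c h0 =>
    hmax Z (hZ.trans hLf) (fun e => by rw [← hLc]; exact hc e) c h0
  have hX : ∀ X Y v, v ≠ a → L = X ++ [v] :: Y → ∃ x1, X.flatten = a :: x1 := by
    rintro X Y v hv rfl
    cases h : X.flatten with
    | nil => simp [h] at ha; exact absurd ha.1 hv
    | cons z t => simp [h] at ha; exact ⟨t, by rw [ha.1]⟩
  have hY : ∀ X Y v, v ≠ b → L = X ++ [v] :: Y → ∃ y2, Y.flatten = y2 ++ [b] := by
    rintro X Y v hv rfl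
    rcases List.eq_nil_or_concat Y.flatten with h | ⟨t, z, h⟩
    · simp [h] at hb
      exact absurd hb.2 hv
    · refine ⟨t, ?_⟩
      have := congrArg List.getLast? hb
      simp [h, List.getLast?_cons] at this
      simp [h, this]
  have hXa : ∀ X Y, L = X ++ [a] :: Y → X.flatten = [] := by
    rintro X Y rfl
    cases h : X.flatten with
    | nil => rfl
    | cons z t =>
      simp [h] at ha
      have h2 := hLnd
      simp [h, ha.1] at h2
  have hYb : ∀ X Y, L = X ++ [b] :: Y → Y.flatten = [] := by
    rintro X Y rfl
    rcases List.eq_nil_or_concat Y.flatten with h | ⟨t, z, h⟩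
    · exact h
    · have h3 := congrArg List.getLast? hb
      simp [h, List.getLast?_cons] at h3
      have h2 := hLnd
      simp [h, h3] at h2
      rw [List.nodup_append] at h2
      simp at h2
  have F1 : ∀ c, cnt f c B = 0 → ∀ v w, v ∈ R → w ∈ R → v ≠ a → v ≠ b → w ≠ a → w ≠ b →
      f v a = c → f w b = c → False := by
    intro c hc v w hv hw va vb wa wb h1 h2
    by_cases hvw : v = w
    · subst hvw
      obtain ⟨X, Y, e⟩ := List.append_of_mem (hRL v hv)
      obtain ⟨x1, e1⟩ := hX X Y v va e
      obtain ⟨y2, e2⟩ := hY X Y v vb e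
      have hcol : col f (y2 ++ b :: v :: a :: x1) =
        col f Y.flatten ++ f b v :: f v a :: col f X.flatten := by
        rw [col_join, col_cons, e1, e2]
      have := hmx [y2 ++ b :: v :: a :: x1] (by
          rw [e, List.perm_iff_count]; intro x
          simp only [List.flatten_append, List.flatten_cons, e1, e2, List.count_append, List.count_cons,
            List.count_nil, List.flatten_nil]; omega) (by
          intro d
          have u1 := cnt_le_flatten f d X
          have u2 := cnt_le_flatten f d Y
          rw [e]
          simp only [cnt_cons, cnt_append, cnt_nil, hcol, List.count_append, List.count_cons, col_single, List.count_nil]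
          omega) c hc
      simp [hcol, h1, hf b v, h2] at this
      omega
    · have main : ∀ X M Y, L.Perm (X ++ [v] :: (M ++ [w] :: Y)) →
          (∃ x1, X.flatten = a :: x1) → (∃ y2, Y.flatten = y2 ++ [b]) → False := by
        rintro X M Y e ⟨x1, e1⟩ ⟨y2, e2⟩
        have hcol : col f (y2 ++ b :: w :: v :: a :: x1) =
          col f Y.flatten ++ f b w :: f w v :: f v a :: col f X.flatten := by
          rw [col_join, col_cons, col_cons, e1, e2]
        have := hmx [y2 ++ b :: w :: v :: a :: x1, M.flatten] (by
            refine List.Perm.trans ?_ e.flatten.symm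
            rw [List.perm_iff_count]; intro x
            simp only [List.flatten_append, List.flatten_cons, e1, e2, List.count_append, List.count_cons,
              List.count_nil, List.flatten_nil]; omega) (by
            intro d
            have u1 := cnt_le_flatten f d X
            have u2 := cnt_le_flatten f d Y
            have u3 := cnt_le_flatten f d M
            rw [cnt_perm f d e]
            simp only [cnt_cons, cnt_append, cnt_nil, hcol, List.count_append, List.count_cons, col_single, List.count_nil]
            omega) c hc
        simp [hcol, h1, hf b w, h2, List.count_cons] at this
        omega
      obtain ⟨X, M, Y, e | e⟩ := split2 L v w hvw (hRL v hv) (hRL w hw)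
      · exact main X M Y (by rw [e]) (hX X _ v va e) (hY (X ++ [v] :: M) Y w wb (by rw [e]; simp))
      · refine main X M Y ?_ (hX X _ w wa e) (hY (X ++ [w] :: M) Y v vb (by rw [e]; simp))
        rw [e, List.perm_iff_count]; intro x; simp only [List.count_append, List.count_cons]; omega
  have F3a : ∀ v ∈ R, a ∈ R → v ≠ a → v ≠ b → f v a = f b a → False := by
    intro v hv haR va vb h1
    have main : ∀ X Y, L.Perm ([a] :: (X ++ [v] :: Y)) → (∃ y2, Y.flatten = y2 ++ [b]) → False := by
      rintro X Y e ⟨y2, e2⟩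
      have hcol : col f (y2 ++ [b, a, v]) = col f Y.flatten ++ [f b a, f a v] := by
        rw [col_join, col_cons, e2, col_single]
      have := hmx [y2 ++ [b, a, v], X.flatten] (by
          refine List.Perm.trans ?_ e.flatten.symm
          rw [List.perm_iff_count]; intro x
          simp only [List.flatten_append, List.flatten_cons, e2, List.count_append, List.count_cons,
            List.count_nil, List.flatten_nil]; omega) (by
          intro d
          have u1 := cnt_le_flatten f d X
          have u2 := cnt_le_flatten f d Y
          rw [cnt_perm f d e]
          simp only [cnt_cons, cnt_append, cnt_nil, hcol, List.count_append, List.count_cons, col_single, List.count_nil]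
          omega) (f b a) hab
      simp [hcol, hf a v, h1] at this
      omega
    obtain ⟨X, M, Y, e | e⟩ := split2 L v a va (hRL v hv) (hRL a haR)
    · have := hXa (X ++ [v] :: M) Y (by rw [e]; simp)
      simp at this
    · refine main (X ++ M) Y ?_ (hY (X ++ [a] :: M) Y v vb (by rw [e]; simp))
      rw [e, List.perm_iff_count]; intro x; simp only [List.count_append, List.count_cons]; omega
  have F3b : ∀ v ∈ R, b ∈ R → v ≠ a → v ≠ b → f v b = f b a → False := by
    intro v hv hbR va vb h1
    have main : ∀ X Y, L.Perm (X ++ [v] :: (Y ++ [[b]])) → (∃ x1, X.flatten = a :: x1) → False := by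
      rintro X Y e ⟨x1, e2⟩
      have hcol : col f (v :: b :: a :: x1) = f v b :: f b a :: col f X.flatten := by
        rw [e2]; simp
      have := hmx [v :: b :: a :: x1, Y.flatten] (by
          refine List.Perm.trans ?_ e.flatten.symm
          rw [List.perm_iff_count]; intro x
          simp only [List.flatten_append, List.flatten_cons, e2, List.count_append, List.count_cons,
            List.count_nil, List.flatten_nil]; omega) (by
          intro d
          have u1 := cnt_le_flatten f d X
          have u2 := cnt_le_flatten f d Y
          rw [cnt_perm f d e]
          simp only [cnt_cons, cnt_append, cnt_nil, hcol, List.count_append, List.count_cons, col_single, List.count_nil]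
          omega) (f b a) hab
      simp [hcol, h1] at this
      omega
    obtain ⟨X, M, Y, e | e⟩ := split2 L v b vb (hRL v hv) (hRL b hbR)
    · refine main X (M ++ Y) ?_ (hX X _ v va e)
      rw [e, List.perm_iff_count]; intro x
      simp only [List.count_append, List.count_cons, List.count_nil]; omega
    · have := hYb X _ e
      simp at this
  have F2 := core_single f hf B R hmax
  -- the ends a and b: either single or end of a path of B
  have Ea : a ∈ R ∨ ∃ p ∈ B, IsEnd p a := by
    by_contra hcon
    push Not at hcon
    have hpos : ∃ p ∈ L, ∃ q, p = a :: q := by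
      clear hmin hX hXa hY hYb hmx hLc hRL hLf hL F1 F3a F3b hb hLnd
      induction L with
      | nil => simp at ha
      | cons p L ih =>
        cases p with
        | nil =>
          obtain ⟨p, h1, h2⟩ := ih (by simpa using ha)
          exact ⟨p, by simp [h1], h2⟩
        | cons z q =>
          simp at ha
          exact ⟨z :: q, by simp, q, by rw [ha.1]⟩
    obtain ⟨p, hp, q, rfl⟩ := hpos
    rw [hL.mem_iff, List.mem_append] at hp
    rcases hp with hp | hp
    · exact hcon.2 _ hp (Or.inl ⟨q, rfl⟩)
    · simp at hp; exact hcon.1 hp.1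
  have Eb : b ∈ R ∨ ∃ p ∈ B, IsEnd p b := by
    by_contra hcon
    push Not at hcon
    have hpos : ∃ p ∈ L, ∃ q, p = q ++ [b] := by
      clear hmin hX hXa hY hYb hmx hLc hRL hLf hL F1 F3a F3b ha hLnd
      induction L using List.reverseRecOn generalizing yb with
      | nil => simp at hb
      | append_singleton L p ih =>
        rcases List.eq_nil_or_concat p with rfl | ⟨q, z, rfl⟩
        · obtain ⟨p, h1, h2⟩ := ih yb (by simpa using hb)
          exact ⟨p, by simp [h1], h2⟩
        · have := congrArg List.getLast? hb
          simp at this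
          exact ⟨q.concat z, by simp, q, by simp [this]⟩
    obtain ⟨p, hp, q, rfl⟩ := hpos
    rw [hL.mem_iff, List.mem_append] at hp
    rcases hp with hp | hp
    · exact hcon.2 _ hp (Or.inr ⟨q, rfl⟩)
    · simp only [List.mem_map] at hp
      obtain ⟨v, hv, e⟩ := hp
      have := congrArg List.getLast? e
      simp at this
      exact hcon.1 (this ▸ hv)
  have F4a : ∀ c, cnt f c B = 0 → ∀ v w z, v ∈ R → w ∈ R → z ∈ R → v ≠ w → v ≠ z → w ≠ z →
      v ≠ a → w ≠ a → z ≠ a → f v a = c → f w a = c → f z a = c → False := by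
    intro c hc v w z hv hw hz vw vz wz va wa za h1 h2 h3
    rcases Ea with h | ⟨p, hp, hu⟩
    · exact F2 c hc a v w h hv hw va.symm wa.symm vw (by rw [hf, h1]) (by rw [hf, h2])
    · exact core_end f B R hend c hc p hp a hu v w z hv hw hz vw vz wz (by rw [hf, h1])
        (by rw [hf, h2]) (by rw [hf, h3])
  have F4b : ∀ c, cnt f c B = 0 → ∀ v w z, v ∈ R → w ∈ R → z ∈ R → v ≠ w → v ≠ z → w ≠ z →
      v ≠ b → w ≠ b → z ≠ b → f v b = c → f w b = c → f z b = c → False := by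
    intro c hc v w z hv hw hz vw vz wz va wa za h1 h2 h3
    rcases Eb with h | ⟨p, hp, hu⟩
    · exact F2 c hc b v w h hv hw va.symm wa.symm vw (by rw [hf, h1]) (by rw [hf, h2])
    · exact core_end f B R hend c hc p hp b hu v w z hv hw hz vw vz wz (by rw [hf, h1])
        (by rw [hf, h2]) (by rw [hf, h3])
  -- the shortcut edges
  let T3 : V → C → Prop := fun v c => ∃ X Y y1 p q x2, L = X ++ [v] :: Y ∧ X.flatten = y1 ++ [p] ∧
    Y.flatten = q :: x2 ∧ f p q = c
  have F5 : ∀ c, cnt f c B = 0 → ∀ v w, v ≠ w → T3 v c → T3 w c → False := by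
    have main : ∀ c, cnt f c B = 0 → ∀ v w, ∀ X M Y y1 p q x2 y1' p' q' x2',
        L = X ++ [v] :: (M ++ [w] :: Y) → X.flatten = y1 ++ [p] →
        (M ++ [w] :: Y).flatten = q :: x2 → f p q = c → (X ++ [v] :: M).flatten = y1' ++ [p'] →
        Y.flatten = q' :: x2' → f p' q' = c → False := by
      intro c hc v w X M Y y1 p q x2 y1' p' q' x2' e h1 h2 h3 h4 h5 h6
      by_cases hM : M.flatten = []
      · have hq : q = w := by simp [hM] at h2; exact h2.1.symm
        have hp : p' = v := by
          have := congrArg List.getLast? h4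
          simp [hM] at this; exact this.symm
        subst hq hp
        have hcol : col f (y1 ++ p :: q :: p' :: q' :: x2') =
            col f X.flatten ++ f p q :: f q p' :: f p' q' :: col f Y.flatten := by
          rw [col_join, col_cons, col_cons, h1, h5]
        have := hmx [y1 ++ p :: q :: p' :: q' :: x2'] (by
          rw [e, List.perm_iff_count]; intro x
          simp only [List.flatten_append, List.flatten_cons, h1, h5, hM, List.count_append, List.count_cons,
            List.count_nil, List.flatten_nil]; omega) (by
          intro d
          have u1 := cnt_le_flatten f d X
          have u2 := cnt_le_flatten f d Y
          have u3 := cnt_le_flatten f d M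
          rw [hM] at u3
          rw [e]
          simp only [cnt_cons, cnt_append, cnt_nil, hcol, List.count_append, List.count_cons, col_single, col_nil, List.count_nil] at *
          omega) c hc
        simp [hcol, h3, h6, List.count_cons] at this
        omega
      · obtain ⟨m, mx, m', my, k1, k2⟩ := head_last _ hM
        have hq : m = q := by simp [k1] at h2; exact h2.1
        have hp : m' = p' := by
          have := congrArg List.getLast? h4
          simp [k2, List.getLast?_cons] at this; exact this
        subst hq hp
        have hcol : col f (y1 ++ p :: m :: (mx ++ q' :: x2')) =
            col f X.flatten ++ f p m :: (col f M.flatten ++ f m' q' :: col f Y.flatten) := by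
          have : m :: (mx ++ q' :: x2') = my ++ m' :: q' :: x2' := by
            rw [← List.cons_append, ← k1, k2]; simp
          rw [col_join, this, col_join, h1, h5, k2]
        have := hmx [y1 ++ p :: m :: (mx ++ q' :: x2'), [v], [w]] (by
          rw [e, List.perm_iff_count]; intro x
          simp only [List.flatten_append, List.flatten_cons, h1, h5, k1, List.count_append, List.count_cons,
            List.count_nil, List.flatten_nil]; omega) (by
          intro d
          have u1 := cnt_le_flatten f d X
          have u2 := cnt_le_flatten f d Y
          have u3 := cnt_le_flatten f d M
          rw [e]
          simp only [cnt_cons, cnt_append, cnt_nil, hcol, List.count_append, List.count_cons, col_single, col_nil, List.count_nil] at *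
          omega) c hc
        simp [hcol, h3, h6, List.count_cons] at this
        omega
    rintro c hc v w hvw ⟨X, Y, y1, p, q, x2, e, h1, h2, h3⟩ ⟨X', Y', y1', p', q', x2', e', h1', h2', h3'⟩
    have := e.symm.trans e'
    rw [List.append_eq_append_iff] at this
    rcases this with ⟨A, g1, g2⟩ | ⟨A, g1, g2⟩
    · cases A with
      | nil => simp at g2; exact hvw g2.1
      | cons z A =>
        simp only [List.cons_append, List.cons.injEq] at g2
        obtain ⟨rfl, rfl⟩ := g2
        subst g1
        exact main c hc v w X A Y' y1 p q x2 y1' p' q' x2' e h1 h2 h3 h1' h2' h3'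
    · cases A with
      | nil => simp at g2; exact hvw g2.1.symm
      | cons z A =>
        simp only [List.cons_append, List.cons.injEq] at g2
        obtain ⟨rfl, rfl⟩ := g2
        subst g1
        exact main c hc w v X' A Y y1' p' q' x2' y1 p q x2 e' h1' h2' h3' h1 h2 h3
  have F6 : ∀ v ∈ R, v ≠ a → v ≠ b → ∃ c, cnt f c B = 0 ∧ (f v a = c ∨ f v b = c ∨ T3 v c) := by
    intro v hv va vb
    by_contra hcon
    push Not at hcon
    obtain ⟨X, Y, e⟩ := List.append_of_mem (hRL v hv)
    obtain ⟨x1, e1⟩ := hX X Y v va e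
    obtain ⟨y2, e2⟩ := hY X Y v vb e
    obtain ⟨_, _, p, y1, _, e3⟩ := head_last X.flatten (by simp [e1])
    obtain ⟨q, x2, _, _, e4, _⟩ := head_last Y.flatten (by simp [e2])
    have n1 : cnt f (f v a) B ≠ 0 := fun h => (hcon _ h).1 rfl
    have n2 : cnt f (f v b) B ≠ 0 := fun h => (hcon _ h).2.1 rfl
    have n3 : cnt f (f p q) B ≠ 0 := fun h => (hcon _ h).2.2 ⟨X, Y, y1, p, q, x2, e, e3, e4, rfl⟩
    have hm := hmin ([v] :: (X ++ Y)) (by rw [e]; exact List.perm_middle.symm)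
    have c1 : ccol f L.flatten = (col f X.flatten ++ f p v :: f v q :: col f Y.flatten) ++ [f b a] := by
      have hh := ccol_eq f a b xa yb (by rw [← ha, ← hb])
      rw [← ha] at hh
      rw [hh]
      congr 1
      have : L.flatten = y1 ++ p :: v :: q :: x2 := by rw [e]; simp [e3, e4]
      rw [this, col_join, col_cons, e3, e4]
    have c2 : ccol f ([v] :: (X ++ Y)).flatten =
        (f v a :: (col f X.flatten ++ f p q :: col f Y.flatten)) ++ [f b v] := by
      have hfl : ([v] :: (X ++ Y)).flatten = v :: (X.flatten ++ Y.flatten) := by simp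
      rw [hfl, ccol_eq f v b (X.flatten ++ Y.flatten) (v :: (X.flatten ++ y2)) (by simp [e2])]
      congr 1
      have h1 : X.flatten ++ Y.flatten = a :: (x1 ++ Y.flatten) := by simp [e1]
      have h2 : X.flatten ++ Y.flatten = y1 ++ p :: q :: x2 := by simp [e3, e4]
      rw [h1, col_cons, ← h1, h2, col_join, e3, e4]
    rw [c1, c2] at hm
    simp [List.countP_cons, n1, n3, hf b v, n2, hab] at hm
    omega
  -- counting
  let K := Finset.univ.filter (fun c => cnt f c B = 0)
  have hK : ∀ c, c ∈ K ↔ cnt f c B = 0 := fun c => by simp [K]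
  classical
  let c0 := f b a
  let Uc : C → Finset V := fun c => R.toFinset.filter (fun v =>
    (v ≠ a ∧ v ≠ b ∧ (f v a = c ∨ f v b = c)) ∨ (c = c0 ∧ (v = a ∨ v = b)))
  let Tc : C → Finset V := fun c => R.toFinset.filter (fun v => T3 v c)
  have hU : ∀ c ∈ K, (Uc c).card ≤ 2 := by
    intro c hcK
    have hc := (hK c).1 hcK
    by_contra hlt
    push Not at hlt
    obtain ⟨v, hv, w, hw, z, hz, vw, vz, wz⟩ := Finset.two_lt_card.1 hlt
    have mem : ∀ v, v ∈ Uc c ↔ v ∈ R ∧ ((v ≠ a ∧ v ≠ b ∧ (f v a = c ∨ f v b = c)) ∨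
      (c = f b a ∧ (v = a ∨ v = b))) := fun v => by simp [Uc, c0]
    rw [mem] at hv hw hz
    have hfab := hf a b
    have G1 := F1 c hc
    have G4a := F4a c hc v w z hv.1 hw.1 hz.1 vw vz wz
    have G4b := F4b c hc v w z hv.1 hw.1 hz.1 vw vz wz
    clear F1 F4a F4b F2 F5 F6 hmin hmx hX hY hXa hYb hmax hend
    grind
  have hT : ∀ c ∈ K, (Tc c).card ≤ 1 := by
    intro c hcK
    rw [Finset.card_le_one]
    intro v hv w hw
    by_contra hvw
    simp only [Tc, Finset.mem_filter] at hv hw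
    exact F5 c ((hK c).1 hcK) v w hvw hv.2 hw.2
  have hsub : R.toFinset ⊆ K.biUnion (fun c => Uc c ∪ Tc c) := by
    intro v hv
    rw [Finset.mem_biUnion]
    by_cases hvab : v = a ∨ v = b
    · exact ⟨c0, (hK _).2 hab, by
        simp only [Uc, Finset.mem_union, Finset.mem_filter]
        exact Or.inl ⟨hv, Or.inr ⟨trivial, hvab⟩⟩⟩
    · push Not at hvab
      obtain ⟨c, hc, h⟩ := F6 v (by simpa using hv) hvab.1 hvab.2
      refine ⟨c, (hK c).2 hc, ?_⟩
      simp only [Uc, Tc, Finset.mem_union, Finset.mem_filter]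
      rcases h with h | h | h
      · exact Or.inl ⟨hv, Or.inl ⟨hvab.1, hvab.2, Or.inl h⟩⟩
      · exact Or.inl ⟨hv, Or.inl ⟨hvab.1, hvab.2, Or.inr h⟩⟩
      · exact Or.inr ⟨hv, h⟩
  have h1 := Finset.card_le_card hsub
  have h2 := Finset.card_biUnion_le_card_mul K (fun c => Uc c ∪ Tc c) 3 (by
    intro c hc
    have := Finset.card_union_le (Uc c) (Tc c)
    have := hU c hc
    have := hT c hc
    omega)
  rw [List.toFinset_card_of_nodup (List.nodup_append.1 hnd).2.1] at h1
  have h3 : 0 < K.card := Finset.card_pos.2 ⟨_, (hK _).2 hab⟩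
  have h4 : 4 * K.card ≤ R.length := hcard
  omega
end core
end URH

namespace URH
lemma col_length {V C : Type*} (f : V → V → C) : ∀ l : List V, (col f l).length = l.length - 1
  | [] => rfl
  | [_] => rfl
  | x :: y :: t => by
    have := col_length f (y :: t)
    simp only [col, List.length_cons] at *
    omega

lemma sum_count {C : Type*} [DecidableEq C] [Fintype C] (l : List C) :
    ∑ c, l.count c = l.length := by
  have := Multiset.toFinset_sum_count_eq (l : Multiset C)
  rw [Finset.sum_subset (Finset.subset_univ _)] at this
  · simpa using this
  · intro c _ hc
    simpa [List.count_eq_zero] using hc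

lemma size_le {V C : Type*} [DecidableEq V] [DecidableEq C] [Fintype C] (f : V → V → C)
    (B : List (List V)) (hlen : ∀ p ∈ B, 2 ≤ p.length) :
    B.flatten.length ≤ 2 * ∑ c, cnt f c B := by
  induction B with
  | nil => simp
  | cons p B ih =>
    have h1 := ih (fun q hq => hlen q (by simp [hq]))
    have h2 := hlen p (by simp)
    have h3 := col_length f p
    have h4 := sum_count (col f p)
    have h5 : ∑ c, cnt f c (p :: B) = ∑ c, (col f p).count c + ∑ c, cnt f c B := by
      rw [← Finset.sum_add_distrib]
      exact Finset.sum_congr rfl (fun c _ => cnt_cons f c p B)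
    rw [h5, h4, h3, List.flatten_cons, List.length_append]
    omega

lemma exists_walk {V C : Type*} [DecidableEq V] (χ : Sym2 V → C) :
    ∀ (x : List V) (a b : V) (y : List V), a :: x = y ++ [b] → (a :: x).Nodup →
      ∃ w : (⊤ : SimpleGraph V).Walk a b, w.support = a :: x ∧
        w.edges.map χ = col (fun u v => χ s(u, v)) (a :: x)
  | [], a, b, y, h, _ => by
    have hab : a = b := by
      have := congrArg List.getLast? h
      simpa using this
    subst hab
    exact ⟨SimpleGraph.Walk.nil, by simp, by simp [col]⟩
  | z :: x, a, b, y, h, hnd => by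
    cases y with
    | nil => simp at h
    | cons u y =>
      simp only [List.cons_append, List.cons.injEq] at h
      obtain ⟨w, h1, h2⟩ := exists_walk χ x z b y h.2 (List.nodup_cons.1 hnd).2
      have haz : (⊤ : SimpleGraph V).Adj a z := by
        simp only [SimpleGraph.top_adj]
        rintro rfl
        simp at hnd
      exact ⟨SimpleGraph.Walk.cons haz w, by simp [h1], by simp [h2, col]⟩

lemma exists_ham {n : ℕ} {C : Type*} [DecidableEq C] (χ : Sym2 (Fin n) → C) (hn : 4 ≤ n)
    (l : List (Fin n)) (hl : l.Perm (List.finRange n)) :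
    ∃ (a : Fin n) (w : (⊤ : SimpleGraph (Fin n)).Walk a a), w.IsHamiltonianCycle ∧
      ∀ c, (w.edges.filter (fun e => χ e = c)).length =
        (ccol (fun u v => χ s(u, v)) l).count c := by
  have hnd : l.Nodup := hl.nodup_iff.2 (List.nodup_finRange n)
  have hlen : l.length = n := by simpa using hl.length_eq
  have hmem : ∀ v, v ∈ l := fun v => hl.mem_iff.2 (List.mem_finRange v)
  obtain ⟨a, x, b, y, h1, h2⟩ := head_last l (by rintro rfl; simp at hlen; omega)
  obtain ⟨p, hp, he⟩ := exists_walk χ x a b y (h1.symm.trans h2) (h1 ▸ hnd)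
  have hpath : p.IsPath := by
    rw [SimpleGraph.Walk.isPath_def, hp, ← h1]; exact hnd
  have hham : p.IsHamiltonian := hpath.isHamiltonian_of_mem (fun v => by
    rw [hp, ← h1]; exact hmem v)
  have hplen : p.length + 1 = n := by
    rw [← SimpleGraph.Walk.length_support, hp, ← h1, hlen]
  have hcc := ccol_eq (fun u v => χ s(u, v)) a b x y (h1.symm.trans h2)
  have hba : s(b, a) ∉ p.edges := by
    cases p with
    | nil => simp at hplen; omega
    | cons hadj q =>
      rename_i z
      rw [SimpleGraph.Walk.cons_isPath_iff] at hpath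
      rw [SimpleGraph.Walk.edges_cons, List.mem_cons, not_or]
      refine ⟨?_, fun h => hpath.2 (q.snd_mem_support_of_mem_edges h)⟩
      intro h
      have hz : b = z := by
        rw [Sym2.eq_iff] at h
        rcases h with h | h
        · exact absurd h.2 hadj.ne
        · exact h.1
      subst hz
      have := SimpleGraph.Walk.eq_nil_iff_nil.2 (SimpleGraph.Walk.isPath_iff_nil.1 hpath.1)
      subst this
      simp at hplen
      omega
  have hne : b ≠ a := by
    rintro rfl
    have := SimpleGraph.Walk.eq_nil_iff_nil.2 (SimpleGraph.Walk.isPath_iff_nil.1 hpath)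
    subst this
    simp at hplen
    omega
  have hadj : (⊤ : SimpleGraph (Fin n)).Adj b a := hne
  refine ⟨b, SimpleGraph.Walk.cons hadj p, ?_, ?_⟩
  · rw [SimpleGraph.Walk.isHamiltonianCycle_iff_isCycle_and_support_count_tail_eq_one]
    refine ⟨(SimpleGraph.Walk.cons_isCycle_iff p hadj).2 ⟨hpath, hba⟩, ?_⟩
    intro v
    simpa using hham v
  · intro c
    have : ((SimpleGraph.Walk.cons hadj p).edges.filter (fun e => χ e = c)).length =
        (((SimpleGraph.Walk.cons hadj p).edges).map χ).count c := by
      rw [← List.countP_eq_length_filter, List.count, List.countP_map]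
      congr 1
    rw [this, SimpleGraph.Walk.edges_cons, List.map_cons, he, h1, hcc]
    simp [List.count_cons]

lemma combine {V C : Type*} [DecidableEq V] [DecidableEq C] [Fintype C] (f : V → V → C)
    (hf : ∀ x y, f x y = f y x) (U : List V) (hU : U.Nodup)
    (hcard : 4 * Fintype.card C ≤ U.length) :
    ∃ l : List V, l.Perm U ∧ ∀ c, (ccol f l).count c ≠ 1 := by
  obtain ⟨B, R, hperm, hlen, hcnt, hmax, hend⟩ := exists_good f hf U
  let P : List (List V) → Prop := fun L => L.Perm (B ++ R.map (fun v => [v]))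
  let m : List (List V) → ℕ := fun L => (ccol f L.flatten).countP (fun c => cnt f c B = 0)
  obtain ⟨L, hL, hmin⟩ : ∃ L, P L ∧ ∀ L', P L' → m L ≤ m L' := by
    have hne : ({L | P L} : Set (List (List V))).Nonempty := ⟨_, List.Perm.refl _⟩
    obtain ⟨L, h1, h2⟩ := (measure m).wf.has_min _ hne
    exact ⟨L, h1, fun L' h' => not_lt.1 (h2 L' h')⟩
  have hLf : L.flatten.Perm (B.flatten ++ R) := by simpa using hL.flatten
  refine ⟨L.flatten, hLf.trans hperm, ?_⟩
  intro e
  have hcntL : ∀ c, cnt f c L = cnt f c B := fun c => by rw [cnt_perm f c hL]; simp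
  rcases hcnt e with he | he
  · suffices h : e ∉ ccol f L.flatten by
      rw [List.count_eq_zero_of_not_mem h]; omega
    intro hin
    have hparts : ∀ p ∈ L, e ∉ col f p := by
      intro p hp hep
      obtain ⟨L', hL'⟩ := exists_perm_cons hp
      have h1 := hcntL e
      rw [cnt_perm f e hL', cnt_cons, he] at h1
      have := List.count_pos_iff.2 hep
      omega
    obtain ⟨L1, L2, a, b, x, y, h1, h2, h3, h4⟩ := exists_closing f e L hparts hin
    have hP : (L2 ++ L1).Perm L := by rw [h1]; exact List.perm_append_comm
    have hm : m (L2 ++ L1) = m L := by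
      have := (ccol_rotate f L1.flatten L2.flatten).countP_eq (fun c => cnt f c B = 0)
      simp only [m, h1, List.flatten_append]
      exact this.symm
    refine core f hf B R (hperm.nodup_iff.2 hU) (fun Z hZ => hmax Z (hZ.trans hperm)) hend hlen
      ?_ (L2 ++ L1) (hP.trans hL) (fun L' hL' => ?_) a b x y h2 h3 (by rw [h4]; exact he)
    · have s1 := size_le f B hlen
      have s2 := hperm.length_eq
      rw [List.length_append] at s2
      have s3 : ∑ c, cnt f c B = 2 * (Finset.univ.filter (fun c => ¬ cnt f c B = 0)).card := by
        rw [Finset.card_filter, Finset.mul_sum]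
        refine Finset.sum_congr rfl (fun c _ => ?_)
        rcases hcnt c with h | h <;> simp [h]
      have s4 := Finset.card_filter_add_card_filter_not (s := (Finset.univ : Finset C))
        (fun c => cnt f c B = 0)
      rw [Finset.card_univ] at s4
      omega
    · have := hmin L' (hL'.trans (hP.trans hL))
      rw [← hm] at this
      exact this
  · have h1 := cnt_le_flatten f e L
    rw [hcntL, he] at h1
    have h0 : L.flatten ≠ [] := by intro h; rw [h] at h1; simp at h1
    obtain ⟨a, x, b, y, e1, e2⟩ := head_last _ h0
    have hc := ccol_eq f a b x y (e1.symm.trans e2)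
    rw [← e1] at hc
    rw [hc, List.count_append]
    omega
end URH

theorem unique_ramsey_hamilton_cycle_lower (n r : ℕ) (hn : 4 ≤ n) (hr : 1 ≤ r)
    (hrn : 4 * r ≤ n) (χ : Sym2 (Fin n) → Fin r) :
    ∃ (a : Fin n) (w : (⊤ : SimpleGraph (Fin n)).Walk a a), w.IsHamiltonianCycle ∧
      ∀ c : Fin r, (w.edges.filter (fun e => χ e = c)).length ≠ 1 := by
  obtain ⟨l, hl, hc⟩ := URH.combine (fun u v => χ s(u, v))
    (fun x y => by rw [Sym2.eq_swap]) (List.finRange n) (List.nodup_finRange n) (by simpa using hrn)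
  obtain ⟨a, w, h1, h2⟩ := URH.exists_ham χ hn l hl
  exact ⟨a, w, h1, fun c => by rw [h2 c]; exact hc c⟩
end

section
/- Let s' ≤ t' be integers with s' even and s' ≥ 2, and let ε > 0. There exists n_0 such that for all n ≥ n_0 the following holds: if there is an edge-coloring of the complete graph K_n with r colors under which no copy of K_{s',t'} is strongly-even-chromatic, then r ≥ (1 − ε)·(n/t')^{2/s'}. -/
open Finset Classical in
/-- words with all colours even -/
def EvW {r : ℕ} {V ι : Type*} [Fintype ι] (f : V → Fin r) (w : ι → V) : Prop :=
  ∀ c, Even (#{l | f (w l) = c})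

noncomputable def signs (r : ℕ) : Finset (Fin r → ℝ) :=
  Fintype.piFinset fun _ => {1, -1}

lemma card_signs (r : ℕ) : (signs r).card = 2 ^ r := by
  have : ({1, -1} : Finset ℝ).card = 2 := by
    rw [Finset.card_pair]; norm_num
  simp [signs, this]

open Finset Classical in
lemma sgn_word_sum {r : ℕ} {V ι : Type*} [Fintype ι] (f : V → Fin r) (w : ι → V) :
    ∑ σ ∈ signs r, ∏ l, σ (f (w l)) = if EvW f w then (2 : ℝ) ^ r else 0 := by
  have h1 : ∀ σ : Fin r → ℝ, ∏ l, σ (f (w l)) = ∏ c, σ c ^ (#{l | f (w l) = c}) := by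
    intro σ
    rw [← Finset.prod_fiberwise (s := univ) (g := fun l => f (w l))]
    refine Finset.prod_congr rfl fun c _ => ?_
    rw [Finset.prod_congr rfl (g := fun _ => σ c), Finset.prod_const]
    intro l hl
    simp at hl
    rw [hl]
  simp_rw [h1]
  have h2 := Finset.prod_univ_sum (fun _ : Fin r => ({1, -1} : Finset ℝ))
    (fun c x => x ^ (#{l | f (w l) = c}))
  rw [signs, ← h2]
  have h3 : ∀ c : Fin r, ∑ x ∈ ({1, -1} : Finset ℝ), x ^ (#{l | f (w l) = c}) =
      if Even (#{l | f (w l) = c}) then 2 else 0 := by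
    intro c
    rw [Finset.sum_pair (by norm_num)]
    split_ifs with h
    · rw [h.neg_one_pow]; norm_num
    · rw [(Nat.not_even_iff_odd.1 h).neg_one_pow]; norm_num
  simp_rw [h3]
  unfold EvW
  split_ifs with h
  · simp [h]
  · push Not at h
    obtain ⟨c, hc⟩ := h
    exact Finset.prod_eq_zero (mem_univ c) (by simp [hc])

open Finset Classical in
lemma even_count {r : ℕ} {V ι : Type*} [Fintype ι] [DecidableEq ι] (f : V → Fin r) (S : Finset V) :
    (2 : ℝ) ^ r * #{w ∈ Fintype.piFinset (fun _ : ι => S) | EvW f w} =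
      ∑ σ ∈ signs r, (∑ v ∈ S, σ (f v)) ^ (Fintype.card ι) := by
  have h1 : ∀ σ : Fin r → ℝ, (∑ v ∈ S, σ (f v)) ^ (Fintype.card ι) =
      ∑ w ∈ Fintype.piFinset (fun _ : ι => S), ∏ l, σ (f (w l)) := by
    intro σ
    rw [← Finset.prod_univ_sum (fun _ : ι => S) (fun _ v => σ (f v))]
    simp
  simp_rw [h1]
  rw [Finset.sum_comm]
  simp_rw [sgn_word_sum]
  rw [← Finset.sum_filter]
  simp [mul_comm]

open Finset Classical in
lemma second_moment {r : ℕ} {V : Type*} (f : V → Fin r) (S : Finset V) :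
    (2 : ℝ) ^ r * (#S : ℝ) ^ 2 ≤ r * ∑ σ ∈ signs r, ((∑ v ∈ S, σ (f v)) ^ 2) := by
  have h := even_count (ι := Fin 2) f S
  rw [Fintype.card_fin] at h
  rw [← h]
  have h1 : ∑ c : Fin r, #{v ∈ S | f v = c} ^ 2 ≤
      #{w ∈ Fintype.piFinset (fun _ : Fin 2 => S) | EvW f w} := by
    have : ∑ c : Fin r, #{v ∈ S | f v = c} ^ 2 = 
       #((univ : Finset (Fin r)).sigma (fun c => {v ∈ S | f v = c} ×ˢ {v ∈ S | f v = c})) := by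
      simp [sq]
    rw [this]
    refine Finset.card_le_card_of_injOn (fun p => ![p.2.1, p.2.2]) ?_ ?_
    · rintro ⟨c, a, b⟩ hp
      simp at hp
      simp only [coe_filter, Set.mem_ofPred_eq, Fintype.mem_piFinset, Fin.forall_fin_two]
      refine ⟨by simp [hp], fun d => ?_⟩
      by_cases hd : c = d
      · simp [Finset.filter_true_of_mem, hp, hd, Fin.forall_fin_two]
      · rw [Finset.filter_false_of_mem]
        · simp
        · simp [Fin.forall_fin_two, hp, hd]
    · rintro ⟨c, a, b⟩ hp ⟨c', a', b'⟩ hp' he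
      simp at hp hp' he
      obtain ⟨rfl, rfl⟩ := he
      have : c = c' := by rw [← hp.1.2, hp'.1.2]
      subst this; rfl
  have h2 : #S = ∑ c : Fin r, #{v ∈ S | f v = c} :=
    Finset.card_eq_sum_card_fiberwise (fun _ _ => by simp)
  have h3 : (#S) ^ 2 ≤ r * ∑ c : Fin r, #{v ∈ S | f v = c} ^ 2 := by
    rw [h2]
    have := sq_sum_le_card_mul_sum_sq (s := (univ : Finset (Fin r))) (f := fun c => #{v ∈ S | f v = c})
    simpa using this
  have h4 := h3.trans (Nat.mul_le_mul_left r h1)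
  have h5 : ((#S : ℕ) : ℝ) ^ 2 ≤ r * (#{w ∈ Fintype.piFinset (fun _ : Fin 2 => S) | EvW f w} : ℕ) := by
    exact_mod_cast h4
  calc _ ≤ (2:ℝ)^r * (r * (#{w ∈ Fintype.piFinset (fun _ : Fin 2 => S) | EvW f w} : ℕ)) := by gcongr
    _ = _ := by ring

open Finset Classical in
lemma collide {r s : ℕ} {V : Type*} (f : V → Fin r) (S : Finset V) (i j : Fin s) (hij : i ≠ j) :
    (2 : ℝ) ^ r * #{w ∈ Fintype.piFinset (fun _ : Fin s => S) | EvW f w ∧ w i = w j} ≤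
      #S * ∑ σ ∈ signs r, (∑ v ∈ S, σ (f v)) ^ (s - 2) := by
  have hc : Fintype.card {l : Fin s // l ≠ i ∧ l ≠ j} = s - 2 := by
    rw [Fintype.card_subtype]
    have : (univ.filter fun l : Fin s => l ≠ i ∧ l ≠ j) = (univ.erase i).erase j := by
      ext; simp [and_comm]
    rw [this, card_erase_of_mem (by simp [hij.symm]), card_erase_of_mem (by simp)]
    simp; omega
  have h := even_count (ι := {l : Fin s // l ≠ i ∧ l ≠ j}) f S
  rw [hc] at h
  rw [← h]
  have h1 : #{w ∈ Fintype.piFinset (fun _ : Fin s => S) | EvW f w ∧ w i = w j} ≤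
      #(S ×ˢ {w ∈ Fintype.piFinset (fun _ : {l : Fin s // l ≠ i ∧ l ≠ j} => S) | EvW f w}) := by
    refine Finset.card_le_card_of_injOn (fun w => (w i, fun l => w l.1)) ?_ ?_
    · intro w hw
      simp at hw
      obtain ⟨hS, hE, hw⟩ := hw
      simp only [coe_product, Set.mem_prod, mem_coe, mem_filter, Fintype.mem_piFinset]
      refine ⟨hS i, fun _ => hS _, fun c => ?_⟩
      have h0 := hE c
      have e1 : #{l : {l : Fin s // l ≠ i ∧ l ≠ j} | f (w l.1) = c} =
          #(((univ.filter fun l => f (w l) = c).erase i).erase j) := by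
        rw [← Finset.card_map (Function.Embedding.subtype _)]
        congr 1
        ext l
        simp
        tauto
      rw [e1]
      by_cases hi : f (w i) = c
      · rw [card_erase_of_mem (by simp [hij.symm, ← hw, hi]), card_erase_of_mem (by simp [hi])]
        rcases h0 with ⟨a, ha⟩
        rw [ha]
        exact ⟨a - 1, by omega⟩
      · rw [erase_eq_of_notMem (by simp [← hw, hi]), erase_eq_of_notMem (by simp [hi])]
        exact h0
    · intro w hw w' hw' he
      simp at hw hw' he
      funext l
      by_cases h1 : l = i
      · rw [h1, he.1]
      by_cases h2 : l = j
      · rw [h2, ← hw.2.2, he.1, hw'.2.2]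
      exact congrFun he.2 ⟨l, h1, h2⟩
  rw [card_product] at h1
  have h5 : ((#{w ∈ Fintype.piFinset (fun _ : Fin s => S) | EvW f w ∧ w i = w j} : ℕ) : ℝ) ≤
    (#S : ℝ) * (#{w ∈ Fintype.piFinset (fun _ : {l : Fin s // l ≠ i ∧ l ≠ j} => S) | EvW f w} : ℕ) := by
    exact_mod_cast h1
  calc _ ≤ (2:ℝ)^r * ((#S : ℝ) * (#{w ∈ Fintype.piFinset (fun _ : {l : Fin s // l ≠ i ∧ l ≠ j} => S) | EvW f w} : ℕ)) := by gcongr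
    _ = _ := by ring

/-- number of pairs -/
def npairs (s : ℕ) : ℕ := (Finset.univ.filter fun p : Fin s × Fin s => p.1 < p.2).card

open Finset Classical in
lemma inj_count {r k : ℕ} {V : Type*} (f : V → Fin r) (S : Finset V) :
    ∑ σ ∈ signs r, (((∑ v ∈ S, σ (f v)) ^ 2) ^ k
        - npairs (2 * k) * #S * ((∑ v ∈ S, σ (f v)) ^ 2) ^ (k - 1)) ≤
    (2 : ℝ) ^ r * #{w ∈ Fintype.piFinset (fun _ : Fin (2 * k) => S) | EvW f w ∧ Function.Injective w} := by
  have h := even_count (ι := Fin (2 * k)) f S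
  rw [Fintype.card_fin] at h
  rw [Finset.sum_sub_distrib, ← Finset.mul_sum]
  simp_rw [← pow_mul]
  rw [← h]
  have h1 : {w ∈ Fintype.piFinset (fun _ : Fin (2 * k) => S) | EvW f w} ⊆
     {w ∈ Fintype.piFinset (fun _ : Fin (2 * k) => S) | EvW f w ∧ Function.Injective w} ∪
     (Finset.univ.filter fun p : Fin (2 * k) × Fin (2 * k) => p.1 < p.2).biUnion
      fun p => {w ∈ Fintype.piFinset (fun _ : Fin (2 * k) => S) | EvW f w ∧ w p.1 = w p.2} := by
    intro w hw
    rw [mem_filter] at hw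
    by_cases hi : Function.Injective w
    · exact mem_union_left _ (by simp only [mem_filter]; exact ⟨hw.1, hw.2, hi⟩)
    · apply mem_union_right
      rw [Function.Injective] at hi
      push Not at hi
      obtain ⟨a, b, hab, hne⟩ := hi
      simp only [mem_biUnion, mem_filter]
      rcases lt_or_gt_of_ne hne with hl | hl
      · exact ⟨(a, b), ⟨mem_univ _, hl⟩, hw.1, hw.2, hab⟩
      · exact ⟨(b, a), ⟨mem_univ _, hl⟩, hw.1, hw.2, hab.symm⟩
  have h2 := (card_le_card h1).trans ((card_union_le _ _).trans (Nat.add_le_add_left card_biUnion_le _))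
  have h3 : ((#{w ∈ Fintype.piFinset (fun _ : Fin (2 * k) => S) | EvW f w} : ℕ) : ℝ) ≤
    (#{w ∈ Fintype.piFinset (fun _ : Fin (2 * k) => S) | EvW f w ∧ Function.Injective w} : ℕ) +
    ∑ p ∈ (Finset.univ.filter fun p : Fin (2 * k) × Fin (2 * k) => p.1 < p.2),
     ((#{w ∈ Fintype.piFinset (fun _ : Fin (2 * k) => S) | EvW f w ∧ w p.1 = w p.2} : ℕ) : ℝ) := by
    exact_mod_cast h2
  have h4 := mul_le_mul_of_nonneg_left h3 (show (0:ℝ) ≤ 2 ^ r by positivity)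
  rw [mul_add, Finset.mul_sum] at h4
  have h5 : ∑ p ∈ (Finset.univ.filter fun p : Fin (2 * k) × Fin (2 * k) => p.1 < p.2),
     (2:ℝ)^r * ((#{w ∈ Fintype.piFinset (fun _ : Fin (2 * k) => S) | EvW f w ∧ w p.1 = w p.2} : ℕ) : ℝ)
     ≤ ∑ p ∈ (Finset.univ.filter fun p : Fin (2 * k) × Fin (2 * k) => p.1 < p.2),
       (#S * ∑ σ ∈ signs r, (∑ v ∈ S, σ (f v)) ^ (2 * k - 2)) := by
    refine Finset.sum_le_sum fun p hp => collide f S _ _ ?_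
    simp at hp
    exact hp.ne
  rw [Finset.sum_const, nsmul_eq_mul] at h5
  change _ ≤ (npairs (2 * k) : ℝ) * _ at h5
  have : 2 * (k - 1) = 2 * k - 2 := by omega
  rw [this]
  linarith

lemma pointwise (k : ℕ) (hk : 1 ≤ k) (x a δ : ℝ) (hx : 0 ≤ x) (ha : 0 ≤ a) (hδ : 0 < δ) :
    (1 - δ) * x ^ k - a ^ k / δ ^ (k - 1) ≤ x ^ k - a * x ^ (k - 1) := by
  obtain ⟨j, rfl⟩ : ∃ j, k = j + 1 := ⟨k - 1, by omega⟩
  simp only [Nat.add_sub_cancel]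
  suffices a * x ^ j ≤ δ * x ^ (j+1) + a ^ (j+1) / δ ^ j by linarith
  rcases le_total a (δ * x) with h | h
  · have : a * x ^ j ≤ δ * x * x ^ j := by gcongr
    have : 0 ≤ a ^ (j+1) / δ ^ j := by positivity
    rw [pow_succ x]; linarith
  · have h' : x ≤ a / δ := by rw [le_div_iff₀ hδ]; linarith
    have : a * x ^ j ≤ a * (a / δ) ^ j := by gcongr
    have e : a * (a / δ) ^ j = a ^ (j+1) / δ ^ j := by rw [div_pow, pow_succ]; ring
    have : 0 ≤ δ * x ^ (j+1) := by positivity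
    linarith

open Finset Classical in
lemma inj_lower {r k : ℕ} (hk : 1 ≤ k) (hr : 0 < r) {V : Type*} (f : V → Fin r) (S : Finset V) (δ : ℝ)
    (hδ : 0 < δ) (hδ1 : δ < 1) :
    (1 - δ) * ((#S : ℝ) ^ 2 / r) ^ k - (npairs (2 * k) * #S : ℝ) ^ k / δ ^ (k - 1) ≤
    #{w ∈ Fintype.piFinset (fun _ : Fin (2 * k) => S) | EvW f w ∧ Function.Injective w} := by
  have h := inj_count (k := k) f S
  have h1 : ∑ σ ∈ signs r, ((1 - δ) * ((∑ v ∈ S, σ (f v)) ^ 2) ^ k - (npairs (2 * k) * #S : ℝ) ^ k / δ ^ (k - 1)) ≤ _ :=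
    (Finset.sum_le_sum fun σ _ => pointwise k hk ((∑ v ∈ S, σ (f v)) ^ 2) (npairs (2 * k) * #S) δ
      (by positivity) (by positivity) hδ).trans h
  rw [Finset.sum_sub_distrib, ← Finset.mul_sum, Finset.sum_const, card_signs, nsmul_eq_mul] at h1
  have h2 := second_moment f S
  have h3 := pow_sum_div_card_le_sum_pow (s := signs r) (f := fun σ => (∑ v ∈ S, σ (f v)) ^ 2) (fun _ _ => by positivity) (k - 1)
  rw [Nat.sub_add_cancel hk, card_signs] at h3
  have hr' : (0:ℝ) < r := by exact_mod_cast hr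
  have h4 : (2:ℝ)^r * ((#S : ℝ) ^ 2 / r) ≤ ∑ σ ∈ signs r, ((∑ v ∈ S, σ (f v)) ^ 2) := by
    rw [← mul_div_assoc, div_le_iff₀ hr']; linarith
  have h5 : (2:ℝ)^r * ((#S : ℝ) ^ 2 / r) ^ k ≤ ∑ σ ∈ signs r, ((∑ v ∈ S, σ (f v)) ^ 2) ^ k := by
    refine le_trans ?_ h3
    push_cast
    rw [le_div_iff₀ (by positivity)]
    refine le_trans (le_of_eq ?_) (pow_le_pow_left₀ (by positivity) h4 k)
    obtain ⟨j, rfl⟩ : ∃ j, k = j + 1 := ⟨k - 1, by omega⟩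
    simp only [Nat.add_sub_cancel]
    ring
  push_cast at h1
  have h6 := mul_le_mul_of_nonneg_left h5 (show 0 ≤ 1 - δ by linarith)
  have hp : (0:ℝ) < 2 ^ r := by positivity
  refine le_of_mul_le_mul_left ?_ hp
  linarith

open Finset Classical in
lemma upper_count {n r j t : ℕ} (ht : 0 < t) (χ : Sym2 (Fin n) → Fin r)
    (H : ¬ ∃ (A B : Finset (Fin n)), Disjoint A B ∧ A.card = j + 1 ∧ B.card = t ∧
          ∀ u ∈ B, ∀ c : Fin r, Even ((A.filter (fun v => χ s(u, v) = c)).card)) :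
    ∑ u : Fin n, #{w ∈ Fintype.piFinset (fun _ : Fin (j + 1) => univ.erase u) |
      EvW (fun v => χ s(u, v)) w ∧ Function.Injective w} ≤ (t - 1) * (n * (n - 1) ^ j) := by
  have h1 : ∀ u : Fin n, {w ∈ Fintype.piFinset (fun _ : Fin (j + 1) => univ.erase u) |
      EvW (fun v => χ s(u, v)) w ∧ Function.Injective w} =
      ({w | Function.Injective w} : Finset (Fin (j+1) → Fin n)).bipartiteAbove
        (fun u w => (∀ l, w l ≠ u) ∧ EvW (fun v => χ s(u, v)) w) u := by
    intro u
    ext w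
    simp [Finset.mem_bipartiteAbove, Fintype.mem_piFinset]
    tauto
  simp_rw [h1]
  rw [Finset.sum_card_bipartiteAbove_eq_sum_card_bipartiteBelow]
  have hc : #({w | Function.Injective w} : Finset (Fin (j+1) → Fin n)) ≤ n * (n - 1) ^ j := by
    rw [← Fintype.card_subtype, Fintype.card_congr (Equiv.subtypeInjectiveEquivEmbedding _ _),
      Fintype.card_embedding_eq]
    simp only [Fintype.card_fin]
    cases n with
    | zero => simp
    | succ m =>
      rw [Nat.succ_descFactorial_succ]
      exact Nat.mul_le_mul_left _ (Nat.descFactorial_le_pow _ _)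
  calc _ ≤ ∑ w ∈ ({w | Function.Injective w} : Finset (Fin (j+1) → Fin n)), (t - 1) := by
        refine Finset.sum_le_sum fun w hw => ?_
        by_contra hlt
        rw [mem_filter] at hw
        have hi := hw.2
        obtain ⟨B, hB, hBc⟩ := Finset.exists_subset_card_eq (show t ≤ _ by omega : t ≤ #(Finset.bipartiteBelow
          (fun u w => (∀ l, w l ≠ u) ∧ EvW (fun v => χ s(u, v)) w) univ w))
        apply H
        refine ⟨univ.image w, B, ?_, ?_, hBc, ?_⟩
        · rw [Finset.disjoint_left]
          intro v hv hvB
          have := hB hvB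
          rw [Finset.mem_bipartiteBelow] at this
          simp at hv
          obtain ⟨l, hl⟩ := hv
          exact this.2.1 l hl
        · rw [Finset.card_image_of_injective _ hi]; simp
        · intro u hu c
          have := hB hu
          rw [Finset.mem_bipartiteBelow] at this
          have h2 := this.2.2 c
          rw [Finset.filter_image, Finset.card_image_of_injective _ hi]
          exact h2
    _ ≤ _ := by
        rw [Finset.sum_const, smul_eq_mul, mul_comm]
        exact Nat.mul_le_mul_left _ hc

lemma large_m (k : ℕ) (hk : 1 ≤ k) (δ m : ℝ) (hδ : 0 < δ) (hm : 1 ≤ m)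
    (h : (npairs (2 * k) : ℝ) ^ k / δ ^ (k - 1) ≤ m) :
    (npairs (2 * k) * m : ℝ) ^ k / δ ^ (k - 1) ≤ m ^ (2 * k - 1) := by
  obtain rfl | ⟨j, rfl⟩ : k = 1 ∨ ∃ j, k = j + 2 := by
    rcases Nat.lt_or_ge 1 k with h | h
    · exact Or.inr ⟨k - 2, by omega⟩
    · exact Or.inl (by omega)
  · have : npairs (2 * 1) = 1 := by decide
    simp [this]
  · have e : 2 * (j + 2) - 1 = (j + 2) + (j + 1) := by omega
    have h2 := h.trans (le_self_pow₀ hm (show j + 1 ≠ 0 by omega))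
    have h3 := mul_le_mul_of_nonneg_left h2 (show 0 ≤ m ^ (j + 2) by positivity)
    rw [e, mul_pow, pow_add m (j + 2) (j + 1)]
    refine le_trans (le_of_eq ?_) h3
    ring

open Finset Classical in
lemma main_bound {n r k t : ℕ} (hk : 1 ≤ k) (ht : 0 < t) (hn : 2 ≤ n) (χ : Sym2 (Fin n) → Fin r)
    (H : ¬ ∃ (A B : Finset (Fin n)), Disjoint A B ∧ A.card = 2 * k ∧ B.card = t ∧
          ∀ u ∈ B, ∀ c : Fin r, Even ((A.filter (fun v => χ s(u, v) = c)).card))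
    (δ : ℝ) (hδ : 0 < δ) (hδ1 : δ < 1)
    (h : (npairs (2 * k) : ℝ) ^ k / δ ^ (k - 1) ≤ (n : ℝ) - 1) :
    (1 - δ) * ((n : ℝ) - 1) ≤ t * (r : ℝ) ^ k := by
  obtain ⟨j, hj⟩ : ∃ j, 2 * k = j + 1 := ⟨2 * k - 1, by omega⟩
  have hr : 0 < r := Fin.pos (χ s(⟨0, by omega⟩, ⟨0, by omega⟩))
  have hr' : (0:ℝ) < r := by exact_mod_cast hr
  have hn' : (2:ℝ) ≤ n := by exact_mod_cast hn
  have hL : ∀ u : Fin n, (1 - δ) * (((n : ℝ) - 1) ^ 2 / r) ^ k - (npairs (2 * k) * ((n : ℝ) - 1)) ^ k / δ ^ (k - 1) ≤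
    #{w ∈ Fintype.piFinset (fun _ : Fin (2 * k) => univ.erase u) |
      EvW (fun v => χ s(u, v)) w ∧ Function.Injective w} := by
    intro u
    have := inj_lower hk hr (fun v => χ s(u, v)) (univ.erase u) δ hδ hδ1
    rw [card_erase_of_mem (mem_univ u), card_univ, Fintype.card_fin, Nat.cast_sub (by omega),
      Nat.cast_one] at this
    convert this
  have hlm := large_m k hk δ ((n : ℝ) - 1) hδ (by linarith) h
  set X := (1 - δ) * (((n : ℝ) - 1) ^ 2 / r) ^ k - (npairs (2 * k) * ((n : ℝ) - 1)) ^ k / δ ^ (k - 1) with hX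
  have hs := Finset.sum_le_sum fun u (_ : u ∈ (univ : Finset (Fin n))) => hL u
  rw [Finset.sum_const, nsmul_eq_mul, card_univ, Fintype.card_fin] at hs
  clear_value X
  have hu : ∑ u : Fin n, #{w ∈ Fintype.piFinset (fun _ : Fin (2 * k) => univ.erase u) |
      EvW (fun v => χ s(u, v)) w ∧ Function.Injective w} ≤ (t - 1) * (n * (n - 1) ^ (2 * k - 1)) := by
    rw [hj] at H ⊢
    exact upper_count ht χ H
  have hu' : ∑ u : Fin n, ((#{w ∈ Fintype.piFinset (fun _ : Fin (2 * k) => univ.erase u) |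
      EvW (fun v => χ s(u, v)) w ∧ Function.Injective w} : ℕ) : ℝ) ≤
      (((t - 1 : ℕ) : ℝ) * (n * ((n - 1 : ℕ) : ℝ) ^ (2 * k - 1))) := by
    exact_mod_cast hu
  rw [Nat.cast_sub ht, Nat.cast_sub (show 1 ≤ n by omega)] at hu'
  push_cast at hu'
  set m := (n : ℝ) - 1 with hm
  have hmpos : 0 < m := by linarith
  have h1 : X ≤ ((t:ℝ) - 1) * m ^ (2 * k - 1) := by
    refine le_of_mul_le_mul_left ?_ (show (0:ℝ) < n by linarith)
    linarith
  have h2 : (1 - δ) * (m ^ 2 / r) ^ k ≤ t * m ^ (2 * k - 1) := by linarith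
  have h3 : (1 - δ) * (m ^ 2 / r) ^ k = ((1 - δ) * m / (r:ℝ)^k) * m ^ (2 * k - 1) := by
    rw [div_pow, ← pow_mul, hj, pow_succ, Nat.add_sub_cancel]
    ring
  rw [h3] at h2
  have h4 := le_of_mul_le_mul_right h2 (by positivity)
  rwa [div_le_iff₀ (by positivity)] at h4

/-- **Lemma (Boyadzhiyska–Das–Lesgourgues–Petrova).** Let `s' ≤ t'` with `s'`
even, `s' ≥ 2`, and let `ε > 0`. For all sufficiently large `n`: if some
`r`-coloring of the edges of `K_n` admits no strongly-even-chromatic copy of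
`K_{s',t'}` (a copy with parts `A`, `B` such that for every `u ∈ B` each color
occurs an even number of times among the edges from `u` to `A`), then
`r ≥ (1 - ε) (n/t') ^ (2/s')`. -/
theorem strongly_even_chromatic_lower (s' t' : ℕ) (hs : 2 ≤ s') (he : Even s')
    (hst : s' ≤ t') (ε : ℝ) (hε : 0 < ε) :
    ∃ n₀ : ℕ, ∀ n ≥ n₀, ∀ r : ℕ,
      (∃ χ : Sym2 (Fin n) → Fin r,
        ¬ ∃ (A B : Finset (Fin n)), Disjoint A B ∧ A.card = s' ∧ B.card = t' ∧
          ∀ u ∈ B, ∀ c : Fin r, Even ((A.filter (fun v => χ s(u, v) = c)).card)) →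
      (1 - ε) * ((n : ℝ) / (t' : ℝ)) ^ (2 / (s' : ℝ)) ≤ (r : ℝ) := by

  obtain ⟨k, hk⟩ := he
  have hk2 : s' = 2 * k := by omega
  subst hk2
  have hk1 : 1 ≤ k := by omega
  have ht : 0 < t' := by omega
  rcases le_or_gt 1 ε with h1 | h1
  · refine ⟨0, fun n _ r _ => ?_⟩
    have : 0 ≤ ((n : ℝ) / (t' : ℝ)) ^ (2 / ((2 * k : ℕ) : ℝ)) := by positivity
    have h2 : (1 - ε) * ((n : ℝ) / (t' : ℝ)) ^ (2 / ((2 * k : ℕ) : ℝ)) ≤ 0 :=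
      mul_nonpos_of_nonpos_of_nonneg (by linarith) this
    exact h2.trans (Nat.cast_nonneg r)
  obtain ⟨a, ha⟩ := exists_nat_ge ((npairs (2 * k) : ℝ) ^ k / (ε / 2) ^ (k - 1))
  obtain ⟨b, hb⟩ := exists_nat_ge (2 / ε)
  refine ⟨a + b + 2, fun n hn r hχ => ?_⟩
  obtain ⟨χ, H⟩ := hχ
  have hn' : (a : ℝ) + b + 2 ≤ n := by exact_mod_cast hn
  have ha0 : (0:ℝ) ≤ a := Nat.cast_nonneg a
  have hb0 : (0:ℝ) ≤ b := Nat.cast_nonneg b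
  have hm := main_bound hk1 ht (by omega) χ H (ε / 2) (by linarith) (by linarith) (by linarith)
  have hbn : 2 ≤ n * ε := by
    rw [← div_le_iff₀ hε]; linarith
  have h3 : (1 - ε) * n ≤ t' * (r : ℝ) ^ k := by nlinarith
  have ht' : (0:ℝ) < t' := by exact_mod_cast ht
  refine le_of_pow_le_pow_left₀ (n := k) (by omega) (Nat.cast_nonneg r) ?_
  have hkr : (k : ℝ) ≠ 0 := by
    have : k ≠ 0 := by omega
    exact_mod_cast this
  have e : (2 / ((2 * k : ℕ) : ℝ)) = (k : ℝ)⁻¹ := by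
    push_cast; field_simp
  rw [e, mul_pow, Real.rpow_inv_natCast_pow (by positivity) (by omega)]
  calc (1 - ε) ^ k * ((n : ℝ) / t') ≤ (1 - ε) * ((n : ℝ) / t') := by
        gcongr
        exact pow_le_of_le_one (by linarith) (by linarith) (by omega)
    _ ≤ _ := by
        rw [← mul_div_assoc, div_le_iff₀ ht']; linarith
end

section
/- Let n ≥ 4 be an even integer and let G be an n-vertex graph with minimum degree δ(G) ≥ n/2 + 2, whose edges are colored with 2 colors. If G contains an odd-chromatic copy of the 6-cycle C_6, then G contains an even-chromatic Hamilton cycle. -/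
namespace EvenHam

/-- Sum of a weight over consecutive pairs of a list. -/
def psum {V M : Type*} [AddCommMonoid M] (g : Sym2 V → M) : List V → M
  | [] => 0
  | [_] => 0
  | x :: y :: t => g s(x, y) + psum g (y :: t)

section
variable {V M : Type*} [AddCommMonoid M] (g : Sym2 V → M)

lemma psum_split (x : V) (L2 : List V) : ∀ L1 : List V,
    psum g (L1 ++ x :: L2) = psum g (L1 ++ [x]) + psum g (x :: L2)
  | [] => by simp [psum]
  | [a] => by simp [psum]
  | a :: b :: t => by
    have := psum_split x L2 (b :: t)
    simp only [List.cons_append, psum] at this ⊢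
    rw [this, add_assoc]

lemma psum_mid (x y : V) (L1 L2 : List V) :
    psum g (L1 ++ x :: y :: L2) = psum g (L1 ++ [x]) + g s(x, y) + psum g (y :: L2) := by
  rw [psum_split]; simp [psum, add_assoc]

lemma psum_reverse : ∀ L : List V, psum g L.reverse = psum g L
  | [] => rfl
  | [a] => rfl
  | a :: b :: t => by
    have := psum_reverse (b :: t)
    have h2 := psum_mid g b a t.reverse []
    simp only [List.reverse_cons, List.append_assoc, List.cons_append, List.nil_append] at this ⊢
    rw [h2, this]
    simp [psum, add_comm, Sym2.eq_swap]

end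

section
variable {V : Type*}

lemma count_chain (P Q : V → Prop) [DecidablePred P] [DecidablePred Q] : ∀ (t : List V) (h : V),
    (h :: t).IsChain (fun p q => ¬ (P p ∧ Q q)) →
    (h :: t).countP (fun v => decide (P v)) + t.countP (fun v => decide (Q v)) ≤
      t.length + if P ((h :: t).getLast (by simp)) then 1 else 0
  | [], h => by
    intro _
    simp only [List.countP_cons, List.countP_nil, List.getLast_singleton, List.length_nil]
    by_cases hp : P h <;> simp [hp]
  | q :: t, h => by
    intro hc
    rw [List.isChain_cons_cons] at hc
    have ih := count_chain P Q t q hc.2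
    have h1 := hc.1
    rw [List.getLast_cons (by simp)]
    rw [List.countP_cons (a := h), List.countP_cons (a := q) (p := fun v => decide (Q v))]
    simp only [List.length_cons]
    by_cases hp : P h <;> by_cases hq : Q q <;> simp_all <;> omega

lemma count_chain_left (P Q : V → Prop) [DecidablePred P] [DecidablePred Q] (A : List V) (x : V)
    (hx : ¬ P x) (hc : (A ++ [x]).IsChain (fun p q => ¬ (P p ∧ Q q))) :
    (A ++ [x]).countP (fun v => decide (P v)) + (A ++ [x]).countP (fun v => decide (Q v)) ≤
      A.length + 1 := by
  cases A with
  | nil => simp [List.countP_cons, hx]; split <;> omega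
  | cons h A =>
    have := count_chain P Q (A ++ [x]) h hc
    have h2 : (h :: (A ++ [x])).getLast (by simp) = x := by simp
    rw [h2, if_neg hx] at this
    simp only [List.cons_append]
    rw [List.countP_cons (a := h) (p := fun v => decide (Q v))]
    simp only [List.length_cons, List.length_append, List.length_nil] at this ⊢
    split <;> omega

lemma count_chain_right (P Q : V → Prop) [DecidablePred P] [DecidablePred Q] (B : List V) (y : V)
    (hy : ¬ Q y) (hc : (y :: B).IsChain (fun p q => ¬ (P p ∧ Q q))) :
    (y :: B).countP (fun v => decide (P v)) + (y :: B).countP (fun v => decide (Q v)) ≤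
      B.length + 1 := by
  have := count_chain P Q B y hc
  rw [List.countP_cons (a := y) (p := fun v => decide (Q v))]
  simp only [hy]
  split at this <;> simp at this ⊢ <;> omega

lemma exists_of_not_chain {R : V → V → Prop} {l : List V} (h : ¬ l.IsChain R) :
    ∃ A x y B, l = A ++ x :: y :: B ∧ ¬ R x y := by
  rw [List.isChain_iff_forall_rel_of_append_cons_cons] at h
  push Not at h
  obtain ⟨x, y, A, B, h1, h2⟩ := h
  exact ⟨A, x, y, B, h1, h2⟩

lemma glast (L B : List V) (q : V) : (L ++ q :: B).getLast? = (q :: B).getLast? := by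
  rw [List.getLast?_append, List.getLast?_cons]; rfl

variable [DecidableEq V] (G : SimpleGraph V) [DecidableRel G.Adj]

/-- weight one on non-edges -/
def bad (e : Sym2 V) : ℕ := if e ∈ G.edgeSet then 0 else 1

lemma countP_le (S : Finset V) (l : List V) (hl : l.Nodup) (hS : l.toFinset = S) (x : V) :
    (S.filter (fun w => G.Adj x w)).card = l.countP (fun v => decide (G.Adj x v)) := by
  rw [List.countP_eq_length_filter, ← hS, ← List.toFinset_card_of_nodup (hl.filter _),
    List.toFinset_filter]
  simp

lemma ham_list (S : Finset V)
    (hS : ∀ v ∈ S, S.card + 1 ≤ 2 * (S.filter (fun w => G.Adj v w)).card) (u v : V) :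
    ∀ (k : ℕ) (l : List V), psum (bad G) l ≤ k → l.Nodup → l.toFinset = S → l.head? = some u →
      l.getLast? = some v →
    ∃ l : List V, l.IsChain G.Adj ∧ l.Nodup ∧ l.toFinset = S ∧ l.head? = some u ∧
      l.getLast? = some v := by
  intro k
  induction k using Nat.strong_induction_on with
  | _ k ih =>
  intro l hk hnd hl hu hv
  by_cases hch : l.IsChain G.Adj
  · exact ⟨l, hch, hnd, hl, hu, hv⟩
  obtain ⟨A, x, y, B, rfl, hxy⟩ := exists_of_not_chain hch
  have hcard : S.card = A.length + B.length + 2 := by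
    rw [← hl, List.toFinset_card_of_nodup hnd]; simp; omega
  have hxS : x ∈ S := by rw [← hl]; simp
  have hyS : y ∈ S := by rw [← hl]; simp
  have e1 : A ++ x :: y :: B = (A ++ [x]) ++ (y :: B) := by simp
  have hbadxy : bad G s(x, y) = 1 := by simp [bad, hxy]
  by_cases h1 : (A ++ [x]).IsChain (fun p q => ¬ (G.Adj x p ∧ G.Adj y q))
  · by_cases h2 : (y :: B).IsChain (fun p q => ¬ (G.Adj x p ∧ G.Adj y q))
    · exfalso
      have c1 := count_chain_left (G.Adj x) (G.Adj y) A x (by simp) h1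
      have c2 := count_chain_right (G.Adj x) (G.Adj y) B y (by simp) h2
      have d1 := countP_le G S _ hnd hl x
      have d2 := countP_le G S _ hnd hl y
      rw [e1, List.countP_append] at d1 d2
      have := hS x hxS
      have := hS y hyS
      omega
    · obtain ⟨B1, p, q, B2, hB, hpq⟩ := exists_of_not_chain h2
      push Not at hpq
      have hb1 : bad G s(x, p) = 0 := by simp [bad, hpq.1]
      have hb2 : bad G s(y, q) = 0 := by simp [bad, hpq.2]
      obtain ⟨C, hC⟩ : ∃ C, B1 ++ [p] = y :: C := by
        cases B1 with
        | nil => simp at hB; simp [hB.1]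
        | cons z B1 => simp at hB; simp [hB.1]
      have hB' : y :: B = (y :: C) ++ q :: B2 := by rw [hB, ← hC]; simp
      have hBr : (y :: C).reverse = p :: B1.reverse := by rw [← hC]; simp
      have hperm : (A ++ x :: ((y :: C).reverse ++ q :: B2)).Perm (A ++ x :: y :: B) := by
        rw [hB']
        exact ((List.reverse_perm _).append_right _).cons _ |>.append_left _
      have s1 : psum (bad G) (y :: B) = psum (bad G) (y :: C) + bad G s(p, q)
          + psum (bad G) (q :: B2) := by
        rw [hB, psum_mid, hC]
      have s2 : psum (bad G) (A ++ x :: ((y :: C).reverse ++ q :: B2)) =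
          psum (bad G) (A ++ [x]) + psum (bad G) (y :: C) + psum (bad G) (q :: B2) := by
        have r := psum_reverse (bad G) (y :: C)
        have t := psum_mid (bad G) y q C.reverse B2
        rw [hBr, List.cons_append, psum_mid, ← List.cons_append, ← hBr, hb1]
        rw [List.reverse_cons] at r ⊢
        rw [List.append_assoc, List.singleton_append, t, hb2, r]
        ring
      have s3 := psum_mid (bad G) x y A B
      refine ih (psum (bad G) (A ++ x :: ((y :: C).reverse ++ q :: B2))) (by omega) _ le_rfl
        (hperm.nodup_iff.2 hnd) ((List.toFinset_eq_of_perm _ _ hperm).trans hl) ?_ ?_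
      · rw [← hu]; cases A <;> simp
      · have e2 : A ++ x :: ((y :: C).reverse ++ q :: B2) =
            (A ++ x :: (y :: C).reverse) ++ q :: B2 := by simp
        have e3 : A ++ x :: ((y :: C) ++ q :: B2) = (A ++ x :: (y :: C)) ++ q :: B2 := by simp
        rw [← hv, hB', e2, e3, glast, glast]
  · obtain ⟨A1, p, q, A2, hA, hpq⟩ := exists_of_not_chain h1
    push Not at hpq
    have hb1 : bad G s(p, x) = 0 := by simp [bad, hpq.1.symm]
    have hb2 : bad G s(q, y) = 0 := by simp [bad, hpq.2.symm]
    obtain ⟨C, hC⟩ : ∃ C, q :: A2 = C ++ [x] := by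
      have h3 : (A ++ [x]).getLast (by simp) = x := by simp
      have h4 : (q :: A2).getLast (by simp) = x := by
        rw [← h3]; simp [hA]
      exact ⟨(q :: A2).dropLast, by rw [← h4]; exact (List.dropLast_append_getLast _).symm⟩
    have hBr : (q :: A2).reverse = x :: C.reverse := by rw [hC]; simp
    have hA' : A ++ x :: y :: B = A1 ++ p :: ((q :: A2) ++ y :: B) := by
      rw [e1, hA]; simp
    have hperm : (A1 ++ p :: ((q :: A2).reverse ++ y :: B)).Perm (A ++ x :: y :: B) := by
      rw [hA']
      exact ((List.reverse_perm _).append_right _).cons _ |>.append_left _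
    have s1 : psum (bad G) (A ++ [x]) = psum (bad G) (A1 ++ [p]) + bad G s(p, q)
        + psum (bad G) (q :: A2) := by
      rw [hA, psum_mid]
    have s2 : psum (bad G) (A1 ++ p :: ((q :: A2).reverse ++ y :: B)) =
        psum (bad G) (A1 ++ [p]) + psum (bad G) (q :: A2) + psum (bad G) (y :: B) := by
      have r := psum_reverse (bad G) (q :: A2)
      have t := psum_mid (bad G) q y A2.reverse B
      rw [hBr, List.cons_append, psum_mid, ← List.cons_append, ← hBr, hb1]
      rw [List.reverse_cons] at r ⊢
      rw [List.append_assoc, List.singleton_append, t, hb2, r]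
      ring
    have s3 := psum_mid (bad G) x y A B
    refine ih (psum (bad G) (A1 ++ p :: ((q :: A2).reverse ++ y :: B))) (by omega) _ le_rfl
      (hperm.nodup_iff.2 hnd) ((List.toFinset_eq_of_perm _ _ hperm).trans hl) ?_ ?_
    · rw [← hu, hA']; cases A1 <;> simp
    · have e2 : A1 ++ p :: ((q :: A2).reverse ++ y :: B) =
          (A1 ++ p :: (q :: A2).reverse) ++ y :: B := by simp
      rw [← hv, e1, e2, glast, glast]

/-- Hamilton-connectedness of a vertex subset, in list form. -/
lemma ham_conn (S : Finset V)
    (hS : ∀ v ∈ S, S.card + 1 ≤ 2 * (S.filter (fun w => G.Adj v w)).card) (u v : V)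
    (hu : u ∈ S) (hv : v ∈ S) (huv : u ≠ v) :
    ∃ l : List V, (u :: l ++ [v]).IsChain G.Adj ∧ (u :: l ++ [v]).Nodup ∧
      ∀ w, w ∈ (u :: l ++ [v]) ↔ w ∈ S := by
  obtain ⟨l, h1, h2, h3, h4, h5⟩ := ham_list G S hS u v _
    (u :: ((S.erase u).erase v).toList ++ [v]) le_rfl
    (by simp [List.nodup_append, Finset.nodup_toList, huv]; grind) (by ext w; simp; grind)
    (by simp) (by simp [List.getLast?_cons])
  cases l with
  | nil => simp at h4
  | cons a t =>
    simp at h4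
    subst h4
    rcases List.eq_nil_or_concat t with rfl | ⟨t', b, rfl⟩
    · simp at h5; exact absurd h5 huv
    · have : b = v := by simpa [List.getLast?_cons] using h5
      subst this
      refine ⟨t', by simpa using h1, by simpa using h2, ?_⟩
      intro w; rw [← h3]; simp; tauto

end

section
variable {V : Type*} (G : SimpleGraph V)

lemma chain_walk {M : Type*} [AddCommMonoid M] (g : Sym2 V → M) : ∀ (t : List V) (u v : V),
    (u :: t).IsChain G.Adj → (u :: t).getLast? = some v →
    ∃ p : G.Walk u v, p.support = u :: t ∧ (p.edges.map g).sum = psum g (u :: t)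
  | [], u, v => by
    intro _ h
    simp at h
    subst h
    exact ⟨.nil, by simp, by simp [psum]⟩
  | x :: t, u, v => by
    intro hc h
    rw [List.isChain_cons_cons] at hc
    obtain ⟨p, hp, hs⟩ := chain_walk g t x v hc.2 (by simpa [List.getLast?_cons_cons] using h)
    exact ⟨.cons hc.1 p, by simp [hp], by simp [hs, psum]⟩

/-- A Hamilton cycle with vanishing weight, in list form. -/
def EvenHC (g : Sym2 V → ZMod 2) : Prop :=
  ∃ (a : V) (t : List V), (a :: t).Nodup ∧ (∀ w, w ∈ a :: t) ∧
    (a :: (t ++ [a])).IsChain G.Adj ∧ psum g (a :: (t ++ [a])) = 0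

lemma filter_sum (χ : Sym2 V → Fin 2) (L : List (Sym2 V)) :
    (L.map (fun e => if χ e = 1 then (1 : ZMod 2) else 0)).sum =
      ((L.filter (fun e => χ e = 1)).length : ZMod 2) := by
  induction L with
  | nil => simp
  | cons e L ih =>
    by_cases h : χ e = 1 <;> simp_all [add_comm]

lemma filter_len (χ : Sym2 V → Fin 2) (L : List (Sym2 V)) :
    (L.filter (fun e => χ e = 0)).length + (L.filter (fun e => χ e = 1)).length = L.length := by
  induction L with
  | nil => simp
  | cons e L ih =>
    have h : χ e = 0 ∨ χ e = 1 := by omega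
    rcases h with h | h <;> simp [h] <;> omega

variable [Fintype V] [DecidableEq V]

lemma finish (hV : 3 ≤ Fintype.card V) (hev : Even (Fintype.card V)) (χ : Sym2 V → Fin 2)
    (h : EvenHC G (fun e => if χ e = 1 then (1 : ZMod 2) else 0)) :
    ∃ (a : V) (w : G.Walk a a), w.IsHamiltonianCycle ∧
      ∀ c : Fin 2, Even ((w.edges.filter (fun e => χ e = c)).length) := by
  obtain ⟨a, t, hnd, hall, hch, hs⟩ := h
  obtain ⟨w, hw, hws⟩ := chain_walk G (fun e => if χ e = 1 then (1 : ZMod 2) else 0)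
    (t ++ [a]) a a hch (by rw [List.getLast?_cons]; simp)
  have hlen : (a :: t).length = Fintype.card V := by
    rw [← List.toFinset_card_of_nodup hnd, ← Finset.card_univ]
    congr 1
    ext w
    have := hall w
    simpa using this
  have hwl : w.length = Fintype.card V := by
    have := w.length_support
    rw [hw] at this
    simp at this hlen
    omega
  have hnn : ¬ w.Nil := by
    intro hnil
    have := SimpleGraph.Walk.length_eq_zero_iff.2 hnil
    omega
  have hcyc : w.IsCycle := by
    rw [SimpleGraph.Walk.isCycle_iff_isPath_tail_and_le_length]
    refine ⟨?_, by omega⟩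
    rw [SimpleGraph.Walk.isPath_def, SimpleGraph.Walk.support_tail_of_not_nil _ hnn, hw]
    simp only [List.tail_cons]
    exact (List.perm_append_singleton a t).nodup_iff.2 hnd
  refine ⟨a, w, SimpleGraph.Walk.isHamiltonianCycle_iff_isCycle_and_length_eq.2 ⟨hcyc, hwl⟩, ?_⟩
  have h1 : Even ((w.edges.filter (fun e => χ e = 1)).length) := by
    rw [hs, filter_sum] at hws
    rwa [ZMod.natCast_eq_zero_iff_even] at hws
  have h0 := filter_len χ w.edges
  rw [SimpleGraph.Walk.length_edges, hwl] at h0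
  intro c
  have hc : c = 0 ∨ c = 1 := by omega
  rcases hc with rfl | rfl
  · rw [← h0] at hev
    exact (Nat.even_add.1 hev).2 h1
  · exact h1

variable [DecidableRel G.Adj]

lemma common (hd : ∀ v, Fintype.card V + 4 ≤ 2 * (Finset.univ.filter (fun w => G.Adj v w)).card)
    (p q : V) (F : Finset V) (hF : F.card ≤ 3) : ∃ x, x ∉ F ∧ G.Adj p x ∧ G.Adj q x := by
  have h1 := Finset.card_union_add_card_inter (Finset.univ.filter (fun w => G.Adj p w))
    (Finset.univ.filter (fun w => G.Adj q w))
  have h2 := Finset.card_le_univ ((Finset.univ.filter (fun w => G.Adj p w)) ∪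
    (Finset.univ.filter (fun w => G.Adj q w)))
  have := hd p
  have := hd q
  obtain ⟨x, hx, hxF⟩ := Finset.exists_mem_notMem_of_card_lt_card (s := F)
    (t := (Finset.univ.filter (fun w => G.Adj p w)) ∩ (Finset.univ.filter (fun w => G.Adj q w)))
    (by omega)
  simp at hx
  exact ⟨x, hxF, hx.1, hx.2⟩

lemma deg_compl (T U : Finset V) (v : V) (hU : ∀ w ∈ T, G.Adj v w → w ∈ U) :
    (Finset.univ.filter (fun w => G.Adj v w)).card ≤
      (Tᶜ.filter (fun w => G.Adj v w)).card + U.card := by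
  refine le_trans (Finset.card_le_card ?_) (Finset.card_union_le _ _)
  intro w hw
  simp at hw ⊢
  by_cases h : w ∈ T
  · exact Or.inr (hU w h hw)
  · exact Or.inl ⟨h, hw⟩

lemma z2 (p q : ZMod 2) (h : p + q ≠ 0) : p = 0 ∨ q = 0 := by
  revert p q; decide

lemma z2d (p : ZMod 2) : p + p = 0 := by
  revert p; decide

lemma z2o (p : ZMod 2) (h : p ≠ 0) : p = 1 := by
  revert p; decide

lemma odd_C4 (hd : ∀ v, Fintype.card V + 4 ≤ 2 * (Finset.univ.filter (fun w => G.Adj v w)).card)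
    (g : Sym2 V → ZMod 2) (a b c d : V) (hab : G.Adj a b) (hbc : G.Adj b c) (hcd : G.Adj c d)
    (hda : G.Adj d a) (hodd : g s(a, b) + g s(b, c) + g s(c, d) + g s(d, a) ≠ 0) :
    EvenHC G g := by
  have hac : a ≠ c := by
    rintro rfl
    apply hodd
    rw [Sym2.eq_swap (a := b), Sym2.eq_swap (a := d)]
    linear_combination z2d (g s(a, b)) + z2d (g s(a, d))
  have hbd : b ≠ d := by
    rintro rfl
    apply hodd
    rw [Sym2.eq_swap (a := b) (b := a), Sym2.eq_swap (a := b) (b := c)]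
    linear_combination z2d (g s(a, b)) + z2d (g s(c, b))
  obtain ⟨x, hx, hbx, hdx⟩ := common G hd b d {a, c} (by
    exact (Finset.card_le_two).trans (by norm_num))
  simp at hx
  have hT : ({b, d, x} : Finset V).card ≤ 3 := Finset.card_le_three
  have hcT := Finset.card_add_card_compl ({b, d, x} : Finset V)
  obtain ⟨l, hl1, hl2, hl3⟩ := ham_conn G ({b, d, x} : Finset V)ᶜ (by
    intro v _
    have h1 := deg_compl G {b, d, x} {b, d, x} v (fun w hw _ => hw)
    have := hd v
    omega) c a (by simp; grind [hbc.ne, hcd.ne]) (by simp; grind [hab.ne, hda.ne])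
    hac.symm
  simp only [Finset.mem_compl, Finset.mem_insert, Finset.mem_singleton, List.cons_append,
    List.mem_cons, List.mem_append, List.not_mem_nil, or_false] at hl3
  have hpl : a ∉ l ∧ a ≠ c ∧ c ∉ l ∧ l.Nodup := by
    simp [List.nodup_append] at hl2
    grind
  have hbl := (hl3 b).1
  have hdl := (hl3 d).1
  have hxl := (hl3 x).1
  have hbx' := hbx.ne
  have hdx' := hdx.ne
  have hch : (c :: (l ++ [a])).IsChain G.Adj := hl1
  have key := z2 (psum g (a :: ((b :: x :: d :: c :: l) ++ [a])))
    (psum g (a :: ((d :: x :: b :: c :: l) ++ [a]))) (by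
      convert hodd using 1
      simp only [List.cons_append, psum]
      rw [Sym2.eq_swap (a := x) (b := d), Sym2.eq_swap (a := x) (b := b),
        Sym2.eq_swap (a := d) (b := c), Sym2.eq_swap (a := a) (b := d)]
      linear_combination z2d (g s(b, x)) + z2d (g s(d, x)) + z2d (psum g (c :: (l ++ [a]))))
  rcases key with key | key
  · refine ⟨a, b :: x :: d :: c :: l, ?_, ?_, ?_, key⟩
    · simp only [List.nodup_cons, List.mem_cons]
      grind
    · intro w
      have := hl3 w
      simp only [List.mem_cons]
      grind
    · simp only [List.cons_append, List.isChain_cons_cons]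
      exact ⟨hab, hbx, hdx.symm, hcd.symm, hch⟩
  · refine ⟨a, d :: x :: b :: c :: l, ?_, ?_, ?_, key⟩
    · simp only [List.nodup_cons, List.mem_cons]
      grind
    · intro w
      have := hl3 w
      simp only [List.mem_cons]
      grind
    · simp only [List.cons_append, List.isChain_cons_cons]
      exact ⟨hda.symm, hdx, hbx.symm, hbc, hch⟩

/-- Pairwise distinct six vertices forming an odd hexagon. -/
structure Hex (g : Sym2 V → ZMod 2) (a b c d e f : V) : Prop where
  nd : [a, b, c, d, e, f].Nodup
  ab : G.Adj a b
  bc : G.Adj b c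
  cd : G.Adj c d
  de : G.Adj d e
  ef : G.Adj e f
  fa : G.Adj f a
  odd : g s(a, b) + g s(b, c) + g s(c, d) + g s(d, e) + g s(e, f) + g s(f, a) = 1

/-- All closed 4-walks are even. -/
def Ev4 (g : Sym2 V → ZMod 2) : Prop :=
  ∀ a b c d, G.Adj a b → G.Adj b c → G.Adj c d → G.Adj d a →
    g s(a, b) + g s(b, c) + g s(c, d) + g s(d, a) = 0

variable {G}
variable {g : Sym2 V → ZMod 2} {a b c d e f : V}

lemma Hex.rot (h : Hex G g a b c d e f) : Hex G g b c d e f a where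
  nd := by
    have := h.nd
    simp only [List.nodup_cons, List.mem_cons] at this ⊢
    grind
  ab := h.bc
  bc := h.cd
  cd := h.de
  de := h.ef
  ef := h.fa
  fa := h.ab
  odd := by rw [← h.odd]; ring

lemma Hex.no_long (h : Hex G g a b c d e f) (h4 : Ev4 G g) : ¬ G.Adj a d := by
  intro hh
  have h1 := h4 a b c d h.ab h.bc h.cd hh.symm
  have h2 := h4 d e f a h.de h.ef h.fa hh
  have h3 := h.odd
  rw [Sym2.eq_swap (a := d) (b := a)] at h1
  have : (0 : ZMod 2) = 1 := by
    linear_combination h3 - h1 - h2 + z2d (g s(a, d))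
  exact absurd this (by decide)

lemma Hex.no_triple (h : Hex G g a b c d e f) (h4 : Ev4 G g) (v : V) :
    ¬ (G.Adj v a ∧ G.Adj v c ∧ G.Adj v e) := by
  rintro ⟨ha, hc, he⟩
  have h1 := h4 a b c v h.ab h.bc hc.symm ha
  have h2 := h4 c d e v h.cd h.de he.symm hc
  have h3 := h4 e f a v h.ef h.fa ha.symm he
  have h5 := h.odd
  rw [Sym2.eq_swap (a := c) (b := v)] at h1
  rw [Sym2.eq_swap (a := e) (b := v)] at h2
  rw [Sym2.eq_swap (a := a) (b := v)] at h3
  have : (0 : ZMod 2) = 1 := by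
    linear_combination h5 - h1 - h2 - h3 + z2d (g s(v, a)) + z2d (g s(v, c)) + z2d (g s(v, e))
  exact absurd this (by decide)

lemma path_part
    (hd : ∀ v, Fintype.card V + 4 ≤ 2 * (Finset.univ.filter (fun w => G.Adj v w)).card)
    (T : Finset V) (hT : T.card ≤ 7) (hn : 2 * T.card ≤ Fintype.card V + 4)
    (a d : V) (haT : a ∈ T) (hdT : d ∈ T) (had : a ≠ d)
    (h2 : ∀ v, v ∉ T ∨ v = a ∨ v = d →
      ∃ p ∈ T, ∃ q ∈ T, p ≠ q ∧ ¬ G.Adj v p ∧ ¬ G.Adj v q) :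
    ∃ l : List V, (d :: (l ++ [a])).IsChain G.Adj ∧ l.Nodup ∧ ∀ w, w ∈ l ↔ w ∉ T := by
  have hdeg : ∀ v, v ∉ T ∨ v = a ∨ v = d →
      Fintype.card V + 8 ≤ 2 * (Tᶜ.filter (fun w => G.Adj v w)).card + 2 * T.card := by
    intro v hv
    obtain ⟨p, hp, q, hq, hpq, hvp, hvq⟩ := h2 v hv
    have h1 := deg_compl G T ((T.erase p).erase q) v (by
      intro w hw hvw
      simp only [Finset.mem_erase]
      refine ⟨?_, ?_, hw⟩
      · rintro rfl; exact hvq hvw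
      · rintro rfl; exact hvp hvw)
    have hc1 := Finset.card_erase_add_one hp
    have hc2 := Finset.card_erase_add_one (Finset.mem_erase.2 ⟨hpq.symm, hq⟩)
    have := hd v
    omega
  have ha := hdeg a (by simp)
  have hdd := hdeg d (by simp)
  obtain ⟨a', ha'⟩ : (Tᶜ.filter (fun w => G.Adj a w)).Nonempty := by
    rw [← Finset.card_pos]; omega
  obtain ⟨d', hd', hne⟩ := Finset.exists_mem_ne (s := Tᶜ.filter (fun w => G.Adj d w))
    (by omega) a'
  simp only [Finset.mem_filter, Finset.mem_compl] at ha' hd'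
  have hcT := Finset.card_add_card_compl T
  obtain ⟨l, hl1, hl2, hl3⟩ := ham_conn G Tᶜ (by
    intro v hv
    have := hdeg v (Or.inl (by simpa using hv))
    omega) d' a' (by simpa using hd'.1) (by simpa using ha'.1) hne
  refine ⟨d' :: l ++ [a'], ?_, hl2, by intro w; rw [hl3]; simp⟩
  have h3 := hl1.append (List.isChain_singleton a) (by
    intro x hx y hy
    rw [List.getLast?_append] at hx
    simp at hx hy
    subst hx hy
    exact ha'.2.symm)
  simp only [List.cons_append, List.append_assoc] at h3 ⊢
  exact List.isChain_cons_cons.2 ⟨hd'.2, h3⟩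

lemma Hex.chord
    (hd : ∀ v, Fintype.card V + 4 ≤ 2 * (Finset.univ.filter (fun w => G.Adj v w)).card)
    (hev : Even (Fintype.card V))
    (h : Hex G g a b c d e f) (h4 : Ev4 G g) (hbf : G.Adj b f) : EvenHC G g := by
  have n1 := h.no_long h4
  have n2 := h.rot.no_long h4
  have n3 := h.rot.rot.no_long h4
  have t1 := h.no_triple h4
  have t2 := h.rot.no_triple h4
  have hnd := h.nd
  simp only [List.nodup_cons, List.mem_cons, List.not_mem_nil, or_false, not_or] at hnd
  obtain ⟨⟨hab, hac, had, hae, haf⟩, ⟨hbc, hbd, hbe, hbf'⟩, ⟨hcd, hce, hcf⟩, ⟨hde, hdf⟩, hef, -⟩ :=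
    hnd
  have hT : ({a, b, c, d, e, f} : Finset V).card = 6 := by
    have := List.toFinset_card_of_nodup h.nd
    simpa using this
  have hmiss : ∀ T : Finset V, {a, b, c, d, e, f} ⊆ T → ∀ v, v ∉ T ∨ v = a ∨ v = d →
      ∃ p ∈ T, ∃ q ∈ T, p ≠ q ∧ ¬ G.Adj v p ∧ ¬ G.Adj v q := by
    intro T hTT v hv
    simp only [Finset.insert_subset_iff, Finset.singleton_subset_iff] at hTT
    obtain ⟨ma, mb, mc, md, me, mf⟩ := hTT
    rcases hv with hv | rfl | rfl
    · have u1 : ∃ p ∈ T, (p = a ∨ p = c ∨ p = e) ∧ ¬ G.Adj v p := by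
        by_contra hcon
        push Not at hcon
        exact t1 v ⟨hcon a ma (by simp), hcon c mc (by simp), hcon e me (by simp)⟩
      have u2 : ∃ p ∈ T, (p = b ∨ p = d ∨ p = f) ∧ ¬ G.Adj v p := by
        by_contra hcon
        push Not at hcon
        exact t2 v ⟨hcon b mb (by simp), hcon d md (by simp), hcon f mf (by simp)⟩
      obtain ⟨p, hp, hp1, hp2⟩ := u1
      obtain ⟨q, hq, hq1, hq2⟩ := u2
      refine ⟨p, hp, q, hq, ?_, hp2, hq2⟩
      grind
    · exact ⟨v, ma, d, md, had, by simp, n1⟩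
    · exact ⟨v, md, a, ma, Ne.symm had, by simp, fun hh => n1 hh.symm⟩
  obtain ⟨k, hk⟩ := hev
  by_cases hcE : G.Adj c e
  · have hn : Fintype.card V ≥ 8 := by
      have h1 := deg_compl G {a, d} ∅ a (by
        intro w hw hvw
        simp only [Finset.mem_insert, Finset.mem_singleton] at hw
        rcases hw with rfl | rfl
        · simp at hvw
        · exact absurd hvw n1)
      have h2 := Finset.card_filter_le ({a, d} : Finset V)ᶜ (fun w => G.Adj a w)
      have h3 := Finset.card_add_card_compl ({a, d} : Finset V)
      rw [Finset.card_pair had] at h3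
      simp only [Finset.card_empty] at h1
      have := hd a
      omega
    obtain ⟨l, hl1, hl2, hl3⟩ := path_part hd {a, b, c, d, e, f} (by omega) (by omega) a d
      (by simp) (by simp) had (hmiss _ subset_rfl)
    simp only [Finset.mem_insert, Finset.mem_singleton] at hl3
    have key := z2 (psum g (a :: ((b :: f :: e :: c :: d :: l) ++ [a])))
      (psum g (a :: ((f :: b :: c :: e :: d :: l) ++ [a]))) (by
        have h1 := h.odd
        intro h0
        simp only [List.cons_append, psum] at h0
        rw [Sym2.eq_swap (a := f) (b := e), Sym2.eq_swap (a := e) (b := c),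
          Sym2.eq_swap (a := a) (b := f), Sym2.eq_swap (a := f) (b := b),
          Sym2.eq_swap (a := e) (b := d)] at h0
        have : (0 : ZMod 2) = 1 := by
          linear_combination h1 - h0 + z2d (g s(b, f)) + z2d (g s(c, e)) +
            z2d (psum g (d :: (l ++ [a])))
        exact absurd this (by decide))
    rcases key with key | key
    · refine ⟨a, b :: f :: e :: c :: d :: l, ?_, ?_, ?_, key⟩
      · simp only [List.nodup_cons, List.mem_cons]
        grind
      · intro w
        have := hl3 w
        simp only [List.mem_cons]
        grind
      · simp only [List.cons_append, List.isChain_cons_cons]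
        exact ⟨h.ab, hbf, h.ef.symm, hcE.symm, h.cd, hl1⟩
    · refine ⟨a, f :: b :: c :: e :: d :: l, ?_, ?_, ?_, key⟩
      · simp only [List.nodup_cons, List.mem_cons]
        grind
      · intro w
        have := hl3 w
        simp only [List.mem_cons]
        grind
      · simp only [List.cons_append, List.isChain_cons_cons]
        exact ⟨h.fa.symm, hbf.symm, h.bc, hcE, h.de.symm, hl1⟩
  · obtain ⟨x, hxF, hcx, hex⟩ := common G hd c e {a, d} (Finset.card_le_two.trans (by norm_num))
    simp only [Finset.mem_insert, Finset.mem_singleton, not_or] at hxF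
    have hxb : x ≠ b := by rintro rfl; exact n2 hex.symm
    have hxf : x ≠ f := by rintro rfl; exact n3 hcx
    have hxc := hcx.ne
    have hxe := hex.ne
    have hn : Fintype.card V ≥ 10 := by
      have h1 := deg_compl G {c, e, f} ∅ c (by
        intro w hw hvw
        simp only [Finset.mem_insert, Finset.mem_singleton] at hw
        rcases hw with rfl | rfl | rfl
        · simp at hvw
        · exact absurd hvw hcE
        · exact absurd hvw n3)
      have h2 := Finset.card_filter_le ({c, e, f} : Finset V)ᶜ (fun w => G.Adj c w)
      have h3 := Finset.card_add_card_compl ({c, e, f} : Finset V)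
      rw [Finset.card_eq_three.2 ⟨c, e, f, hce, hcf, hef, rfl⟩] at h3
      simp only [Finset.card_empty] at h1
      have := hd c
      omega
    have hT7 : (insert x ({a, b, c, d, e, f} : Finset V)).card ≤ 7 := by
      have := Finset.card_insert_le x ({a, b, c, d, e, f} : Finset V)
      omega
    obtain ⟨l, hl1, hl2, hl3⟩ := path_part hd (insert x {a, b, c, d, e, f}) hT7 (by omega) a d
      (by simp) (by simp) had (hmiss _ (Finset.subset_insert _ _))
    simp only [Finset.mem_insert, Finset.mem_singleton] at hl3
    have key := z2 (psum g (a :: ((b :: f :: e :: x :: c :: d :: l) ++ [a])))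
      (psum g (a :: ((f :: b :: c :: x :: e :: d :: l) ++ [a]))) (by
        have h1 := h.odd
        intro h0
        simp only [List.cons_append, psum] at h0
        rw [Sym2.eq_swap (a := f) (b := e), Sym2.eq_swap (a := x) (b := e),
          Sym2.eq_swap (a := a) (b := f), Sym2.eq_swap (a := f) (b := b),
          Sym2.eq_swap (a := x) (b := c), Sym2.eq_swap (a := e) (b := d)] at h0
        have : (0 : ZMod 2) = 1 := by
          linear_combination h1 - h0 + z2d (g s(b, f)) + z2d (g s(c, x)) + z2d (g s(e, x)) +
            z2d (psum g (d :: (l ++ [a])))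
        exact absurd this (by decide))
    rcases key with key | key
    · refine ⟨a, b :: f :: e :: x :: c :: d :: l, ?_, ?_, ?_, key⟩
      · simp only [List.nodup_cons, List.mem_cons]
        grind
      · intro w
        have := hl3 w
        simp only [List.mem_cons]
        grind
      · simp only [List.cons_append, List.isChain_cons_cons]
        exact ⟨h.ab, hbf, h.ef.symm, hex, hcx.symm, h.cd, hl1⟩
    · refine ⟨a, f :: b :: c :: x :: e :: d :: l, ?_, ?_, ?_, key⟩
      · simp only [List.nodup_cons, List.mem_cons]
        grind
      · intro w
        have := hl3 w
        simp only [List.mem_cons]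
        grind
      · simp only [List.cons_append, List.isChain_cons_cons]
        exact ⟨h.fa.symm, hbf.symm, h.bc, hcx, hex.symm, h.de.symm, hl1⟩

/-- Replacing `b` by another common neighbour `w` of `a` and `c`; then `w` has no neighbour
among `d`, `f`. -/
lemma Hex.replace
    (hd : ∀ v, Fintype.card V + 4 ≤ 2 * (Finset.univ.filter (fun w => G.Adj v w)).card)
    (hev : Even (Fintype.card V)) (hno : ¬ EvenHC G g)
    (h : Hex G g a b c d e f) (h4 : Ev4 G g) (w : V) (ha : G.Adj w a) (hc : G.Adj w c) :
    ¬ G.Adj w d ∧ ¬ G.Adj w f := by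
  have n1 := h.no_long h4
  have n3 := h.rot.rot.no_long h4
  have hca : ¬ G.Adj c e := fun hh => hno (Hex.chord hd hev h.rot.rot.rot h4 hh.symm)
  have h' : Hex G g a w c d e f := by
    have hnd := h.nd
    have hwa := ha.ne
    have hwc := hc.ne
    have hwd : w ≠ d := by rintro rfl; exact n1 ha.symm
    have hwe : w ≠ e := by rintro rfl; exact hca hc.symm
    have hwf : w ≠ f := by rintro rfl; exact n3 hc.symm
    refine ⟨?_, ha.symm, hc, h.cd, h.de, h.ef, h.fa, ?_⟩
    · simp only [List.nodup_cons, List.mem_cons] at hnd ⊢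
      grind
    · have h1 := h4 a b c w h.ab h.bc hc.symm ha
      have h2 := h.odd
      rw [Sym2.eq_swap (a := c) (b := w), Sym2.eq_swap (a := w) (b := a)] at h1
      linear_combination h2 - h1 + z2d (g s(a, w)) + z2d (g s(w, c))
  exact ⟨fun hh => hno (Hex.chord hd hev h'.rot.rot h4 hh.symm),
    fun hh => hno (Hex.chord hd hev h' h4 hh)⟩

lemma Hex.main
    (hd : ∀ v, Fintype.card V + 4 ≤ 2 * (Finset.univ.filter (fun w => G.Adj v w)).card)
    (hev : Even (Fintype.card V)) (h : Hex G g a b c d e f) : EvenHC G g := by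
  by_contra hno
  have h4 : Ev4 G g := by
    intro a b c d h1 h2 h3 h5
    by_contra hcon
    exact hno (odd_C4 G hd g a b c d h1 h2 h3 h5 hcon)
  have hw : ∀ w, (if G.Adj a w then 1 else 0) + (if G.Adj b w then 1 else 0) +
      (if G.Adj c w then 1 else 0) + (if G.Adj d w then 1 else 0) +
      (if G.Adj e w then 1 else 0) + (if G.Adj f w then 1 else 0) ≤ 3 := by
    intro w
    have t1 := h.no_triple h4 w
    have t2 := h.rot.no_triple h4 w
    have r1 := Hex.replace hd hev hno h h4 w
    have r2 := Hex.replace hd hev hno h.rot.rot h4 w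
    have r3 := Hex.replace hd hev hno h.rot.rot.rot.rot h4 w
    simp only [G.adj_comm w] at t1 t2 r1 r2 r3
    grind
  have hsum := Finset.sum_le_sum (fun w (_ : w ∈ Finset.univ) => hw w)
  simp only [Finset.sum_add_distrib, ← Finset.card_filter, Finset.sum_const, Finset.card_univ,
    smul_eq_mul] at hsum
  have := hd a
  have := hd b
  have := hd c
  have := hd d
  have := hd e
  have := hd f
  omega

end

end EvenHam


/-- **Proposition.** Let `n ≥ 4` be even and `G` an `n`-vertex graph with
`δ(G) ≥ n/2 + 2`, whose edges are 2-colored by `χ`. If `G` contains an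
odd-chromatic copy of `C₆`, then `G` contains an even-chromatic Hamilton
cycle. -/
theorem even_hamilton_of_odd_C6 (n : ℕ) (hn : 4 ≤ n) (hne : Even n)
    (G : SimpleGraph (Fin n)) [DecidableRel G.Adj]
    (hδ : n / 2 + 2 ≤ G.minDegree)
    (χ : Sym2 (Fin n) → Fin 2)
    (hC6 : ∃ a b c d e f : Fin n,
      a ≠ b ∧ a ≠ c ∧ a ≠ d ∧ a ≠ e ∧ a ≠ f ∧
      b ≠ c ∧ b ≠ d ∧ b ≠ e ∧ b ≠ f ∧
      c ≠ d ∧ c ≠ e ∧ c ≠ f ∧ d ≠ e ∧ d ≠ f ∧ e ≠ f ∧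
      G.Adj a b ∧ G.Adj b c ∧ G.Adj c d ∧ G.Adj d e ∧ G.Adj e f ∧ G.Adj f a ∧
      ∃ col : Fin 2,
        Odd (([s(a, b), s(b, c), s(c, d), s(d, e), s(e, f), s(f, a)].filter
          (fun e => χ e = col)).length)) :
    ∃ (a : Fin n) (w : G.Walk a a), w.IsHamiltonianCycle ∧
      ∀ c : Fin 2, Even ((w.edges.filter (fun e => χ e = c)).length) := by
  obtain ⟨a, b, c, d, e, f, hab, hac, had, hae, haf, hbc, hbd, hbe, hbf, hcd, hce, hcf, hde, hdf,
    hef, h1, h2, h3, h4, h5, h6, col, hodd⟩ := hC6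
  have hodd1 : Odd (([s(a, b), s(b, c), s(c, d), s(d, e), s(e, f), s(f, a)].filter
      (fun e => χ e = 1)).length) := by
    have hlen := EvenHam.filter_len χ [s(a, b), s(b, c), s(c, d), s(d, e), s(e, f), s(f, a)]
    have hc : col = 0 ∨ col = 1 := by omega
    rcases hc with rfl | rfl
    · have h6 : [s(a, b), s(b, c), s(c, d), s(d, e), s(e, f), s(f, a)].length = 6 := rfl
      rw [h6] at hlen
      rw [Nat.odd_iff] at hodd ⊢
      omega
    · exact hodd
  refine EvenHam.finish G (by simp; omega) (by simpa using hne) χ ?_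
  refine EvenHam.Hex.main (a := a) (b := b) (c := c) (d := d) (e := e) (f := f) ?_
    (by simpa using hne) ⟨?_, h1, h2, h3, h4, h5, h6, ?_⟩
  · intro v
    have hv := hδ.trans (G.minDegree_le_degree v)
    rw [← G.card_neighborFinset_eq_degree, G.neighborFinset_eq_filter] at hv
    obtain ⟨k, rfl⟩ := hne
    rw [Fintype.card_fin]
    omega
  · simp only [List.nodup_cons, List.mem_cons]
    grind
  · rw [← ZMod.natCast_eq_one_iff_odd, ← EvenHam.filter_sum] at hodd1
    simp only [List.map_cons, List.map_nil, List.sum_cons, List.sum_nil] at hodd1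
    linear_combination hodd1
end

section
/- Let n ≥ 3 be an even integer and let G be an n-vertex graph with minimum degree δ(G) ≥ n/2. Suppose exactly n/2 vertices of G have degree at least n/2 + 1, and suppose there exists a pair of vertices u, v ∈ V(G) admitting no Hamilton {u,v}-path. Then the set V_1 = { v ∈ V(G) : deg(v) = n/2 } is an independent set, and for every pair of distinct vertices x, y ∈ V_1 there is a Hamilton path in G with endpoints x and y. -/
/-- `L` lists the vertices of a Hamilton path of `H` from `u` to `v`. -/
def HamL {V : Type*} (H : SimpleGraph V) (u v : V) (L : List V) : Prop :=
  L.Nodup ∧ (∀ w, w ∈ L) ∧ L.IsChain H.Adj ∧ L.head? = some u ∧ L.getLast? = some v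

theorem HamL.toWalk {V : Type*} [DecidableEq V] {H : SimpleGraph V} {u v : V} {L : List V}
    (h : HamL H u v L) : ∃ p : H.Walk u v, p.IsHamiltonian := by
  obtain ⟨h1, h2, h3, h4, h5⟩ := h
  have hne : L ≠ [] := by rintro rfl; simp at h4
  have e1 : L.head hne = u := by
    rw [List.head?_eq_some_head hne] at h4; exact Option.some.inj h4
  have e2 : L.getLast hne = v := by
    rw [List.getLast?_eq_some_getLast hne] at h5; exact Option.some.inj h5
  subst e1 e2
  refine ⟨SimpleGraph.Walk.ofSupport L hne h3, fun a => ?_⟩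
  rw [SimpleGraph.Walk.support_ofSupport]
  exact List.count_eq_one_of_mem h1 (h2 a)

theorem count_aux1 {V : Type*} (p q : V → Bool) (t : List V) : ∀ a : V,
    (a :: t).IsChain (fun c d => ¬ (p c = true ∧ q d = true)) →
    (a :: t).countP p + t.countP q ≤ t.length + (if p ((a :: t).getLast (by simp)) then 1 else 0) := by
  induction t with
  | nil => intro a _; by_cases h : p a = true <;> simp [h]
  | cons b t ih =>
    intro a h
    rw [List.isChain_cons_cons] at h
    have := ih b h.2
    rw [List.countP_cons (a := a), List.countP_cons (p := q) (a := b), List.getLast_cons_cons,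
      List.length_cons]
    have h1 := h.1
    by_cases hp : p a = true <;> by_cases hq : q b = true <;> simp [hp, hq] at h1 ⊢ <;> omega

theorem count_last {V : Type*} (p q : V → Bool) (l : List V) (x : V)
    (h : l.IsChain (fun c d => ¬ (p c = true ∧ q d = true)))
    (hx : l.getLast? = some x) (hp : p x = false) : l.countP p + l.countP q ≤ l.length := by
  cases l with
  | nil => simp
  | cons a t =>
    have := count_aux1 p q t a h
    have e : (a :: t).getLast (by simp) = x := by
      rw [List.getLast?_eq_some_getLast (by simp)] at hx; exact Option.some.inj hx
    rw [e, hp] at this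
    rw [List.countP_cons (p := q)]
    simp only [List.length_cons]
    split_ifs <;> simp at this ⊢ <;> omega

theorem count_head {V : Type*} (p q : V → Bool) (l : List V) (y : V)
    (h : l.IsChain (fun c d => ¬ (p c = true ∧ q d = true)))
    (hy : l.head? = some y) (hq : q y = false) : l.countP p + l.countP q ≤ l.length := by
  cases l with
  | nil => simp
  | cons a t =>
    have := count_aux1 p q t a h
    simp only [List.head?_cons, Option.some.injEq] at hy
    subst hy
    rw [List.countP_cons (p := q)]
    simp only [List.length_cons, hq]
    split_ifs at this <;> simp at this ⊢ <;> omega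

theorem degree_countP {V : Type*} [Fintype V] [DecidableEq V] (H : SimpleGraph V)
    [DecidableRel H.Adj] (L : List V) (h1 : L.Nodup) (h2 : ∀ w, w ∈ L) (x : V) :
    H.degree x = L.countP (fun w => decide (H.Adj x w)) := by
  rw [← SimpleGraph.card_neighborFinset_eq_degree, List.countP_eq_length_filter,
    ← List.toFinset_card_of_nodup (h1.filter _)]
  congr 1
  ext w
  simp [h2]

theorem ham_rotation {V : Type*} [Fintype V] [DecidableEq V] (H : SimpleGraph V)
    [DecidableRel H.Adj] (u v x y : V) (P Q : List V)
    (hP : P.IsChain H.Adj) (hQ : Q.IsChain H.Adj) (hx : P.getLast? = some x)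
    (hy : Q.head? = some y) (hnd : (P ++ Q).Nodup) (hall : ∀ w, w ∈ P ++ Q)
    (hu : (P ++ Q).head? = some u) (hv : (P ++ Q).getLast? = some v)
    (hdeg : Fintype.card V + 1 ≤ H.degree x + H.degree y) : ∃ L, HamL H u v L := by
  by_cases c1 : P.IsChain (fun c d => ¬ (decide (H.Adj x c) = true ∧ decide (H.Adj y d) = true))
  · by_cases c2 : Q.IsChain (fun c d => ¬ (decide (H.Adj x c) = true ∧ decide (H.Adj y d) = true))
    · exfalso
      have a1 := count_last (fun w => decide (H.Adj x w)) (fun w => decide (H.Adj y w)) P x c1 hx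
        (by simp)
      have a2 := count_head (fun w => decide (H.Adj x w)) (fun w => decide (H.Adj y w)) Q y c2 hy
        (by simp)
      have hc : (P ++ Q).length = Fintype.card V := by
        rw [← List.toFinset_card_of_nodup hnd, ← Finset.card_univ]
        congr 1
        ext w
        simpa using hall w
      rw [degree_countP H _ hnd hall x, degree_countP H _ hnd hall y] at hdeg
      simp only [List.countP_append, List.length_append] at hdeg hc
      omega
    · rw [List.isChain_iff_forall_rel_of_append_cons_cons] at c2
      push Not at c2
      obtain ⟨d, c, D, C, rfl, hd, hc⟩ := c2
      simp only [decide_eq_true_eq] at hd hc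
      rw [List.isChain_append_cons_cons] at hQ
      have hperm : (P ++ ((D ++ [d]).reverse ++ c :: C)).Perm (P ++ (D ++ d :: c :: C)) := by
        have : (D ++ d :: c :: C) = (D ++ [d]) ++ c :: C := by simp
        rw [this]
        exact ((List.reverse_perm _).append_right _).append_left _
      refine ⟨P ++ ((D ++ [d]).reverse ++ c :: C), hperm.nodup_iff.2 hnd,
        fun w => hperm.mem_iff.2 (hall w), ?_, ?_, ?_⟩
      · rw [List.isChain_append, List.isChain_append, List.isChain_reverse]
        refine ⟨hP, ⟨?_, hQ.2.2, ?_⟩, ?_⟩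
        · exact hQ.1.imp fun _ _ h => h.symm
        · intro a ha b hb
          have : a = y := by
            rw [List.getLast?_reverse] at ha
            cases D <;> simp at ha hy <;> exact ha.symm.trans hy
          have : b = c := by simp_all
          simp_all
        · intro a ha b hb
          have : a = x := by simp_all
          have : b = d := by simp_all
          simp_all
      · cases P <;> simp_all
      · have e : P ++ (D ++ d :: c :: C) = (P ++ (D ++ [d])) ++ c :: C := by simp
        rw [e, List.getLast?_append_of_ne_nil _ (by simp)] at hv
        rw [← List.append_assoc, List.getLast?_append_of_ne_nil _ (by simp), hv]
  · rw [List.isChain_iff_forall_rel_of_append_cons_cons] at c1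
    push Not at c1
    obtain ⟨c, d, C, D, rfl, hc, hd⟩ := c1
    simp only [decide_eq_true_eq] at hd hc
    rw [List.isChain_append_cons_cons] at hP
    have hperm : ((C ++ [c]) ++ ((d :: D).reverse ++ Q)).Perm ((C ++ c :: d :: D) ++ Q) := by
      have : (C ++ c :: d :: D) ++ Q = (C ++ [c]) ++ ((d :: D) ++ Q) := by simp
      rw [this]
      exact ((List.reverse_perm _).append_right _).append_left _
    refine ⟨(C ++ [c]) ++ ((d :: D).reverse ++ Q), hperm.nodup_iff.2 hnd,
      fun w => hperm.mem_iff.2 (hall w), ?_, ?_, ?_⟩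
    · rw [List.isChain_append, List.isChain_append (l₁ := (d :: D).reverse), List.isChain_reverse]
      refine ⟨hP.1, ⟨?_, hQ, ?_⟩, ?_⟩
      · exact hP.2.2.imp fun _ _ h => h.symm
      · intro a ha b hb
        have : a = d := by simp_all
        have : b = y := by simp_all
        subst_vars
        exact hd.symm
      · intro a ha b hb
        have : a = c := by simp_all
        have : b = x := by
          have e : C ++ c :: d :: D = (C ++ [c]) ++ (d :: D) := by simp
          rw [e, List.getLast?_append_of_ne_nil _ (by simp)] at hx
          rw [List.head?_append_of_ne_nil _ (by simp), List.head?_reverse, hx] at hb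
          simpa using hb.symm
        subst_vars
        exact hc.symm
    · cases C <;> simp_all
    · have hQn : Q ≠ [] := by rintro rfl; simp at hy
      rw [List.getLast?_append_of_ne_nil _ hQn] at hv
      rw [List.getLast?_append_of_ne_nil _ (by simp), List.getLast?_append_of_ne_nil _ hQn, hv]

theorem maximal_adj {V : Type*} [Fintype V] [DecidableEq V] (H : SimpleGraph V)
    [DecidableRel H.Adj] (u v : V)
    (hH : ¬ ∃ L, HamL H u v L) (hmax : ∀ K : SimpleGraph V, H < K → ∃ L, HamL K u v L)
    (x y : V) (hxy : x ≠ y) (hdeg : Fintype.card V + 1 ≤ H.degree x + H.degree y) : H.Adj x y := by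
  by_contra hna
  obtain ⟨L, h1, h2, h3, h4, h5⟩ := hmax (H ⊔ SimpleGraph.edge x y) (by
    refine lt_of_le_of_ne le_sup_left fun h => hna ?_
    rw [h]
    simp [SimpleGraph.edge_adj, hxy])
  by_cases hc : L.IsChain H.Adj
  · exact hH ⟨L, h1, h2, hc, h4, h5⟩
  rw [List.isChain_iff_forall_rel_of_append_cons_cons] at hc
  push Not at hc
  obtain ⟨a, b, A, B, rfl, hab⟩ := hc
  rw [List.isChain_append_cons_cons] at h3
  obtain ⟨hA, hE, hB⟩ := h3
  have hE' : (a = x ∧ b = y) ∨ (a = y ∧ b = x) := by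
    simp only [SimpleGraph.sup_adj, SimpleGraph.edge_adj] at hE
    tauto
  have e : A ++ a :: b :: B = (A ++ [a]) ++ (b :: B) := by simp
  rw [e] at h1 h2 h4 h5
  have hdis := List.disjoint_of_nodup_append h1
  have hA' : (A ++ [a]).IsChain H.Adj := by
    refine List.IsChain.imp_of_mem_imp ?_ hA
    intro c d hc hd hcd
    have hb1 : c ≠ b := fun h => hdis hc (by simp [h])
    have hb2 : d ≠ b := fun h => hdis hd (by simp [h])
    simp only [SimpleGraph.sup_adj, SimpleGraph.edge_adj] at hcd
    rcases hE' with ⟨rfl, rfl⟩ | ⟨rfl, rfl⟩ <;> tauto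
  have hB' : (b :: B).IsChain H.Adj := by
    refine List.IsChain.imp_of_mem_imp ?_ hB
    intro c d hc hd hcd
    have hb1 : c ≠ a := fun h => hdis (a := a) (by simp) (h ▸ hc)
    have hb2 : d ≠ a := fun h => hdis (a := a) (by simp) (h ▸ hd)
    simp only [SimpleGraph.sup_adj, SimpleGraph.edge_adj] at hcd
    rcases hE' with ⟨rfl, rfl⟩ | ⟨rfl, rfl⟩ <;> tauto
  refine hH (ham_rotation H u v a b (A ++ [a]) (b :: B) hA' hB' (by simp) (by simp) h1 h2 h4 h5 ?_)
  rcases hE' with ⟨rfl, rfl⟩ | ⟨rfl, rfl⟩ <;> omega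

theorem exists_maximal_graph {V : Type*} [Fintype V] [DecidableEq V] (G : SimpleGraph V) (u v : V)
    (h : ¬ ∃ p : G.Walk u v, p.IsHamiltonian) : ∃ H : SimpleGraph V, G ≤ H ∧
      (¬ ∃ L, HamL H u v L) ∧ ∀ K : SimpleGraph V, H < K → ∃ L, HamL K u v L := by
  have h0 : ¬ ∃ L, HamL G u v L := fun ⟨L, hL⟩ => h hL.toWalk
  obtain ⟨H, hle, hm⟩ := Finite.exists_le_maximal
    (p := fun H : SimpleGraph V => ¬ ∃ L, HamL H u v L) h0
  refine ⟨H, hle, hm.1, fun K hK => ?_⟩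
  by_contra hc
  exact hm.not_prop_of_gt hK hc

theorem zigzag {V : Type*} (H : SimpleGraph V) (y : V) (as : List V) : ∀ (bs : List V) (x : V),
    bs.length = as.length + 2 → bs.Nodup → (∀ b ∈ bs, H.Adj x b) → (∀ b ∈ bs, H.Adj b y) →
    (∀ a ∈ as, ∀ b ∈ bs, H.Adj a b) → (∀ b ∈ bs, ∀ c ∈ bs, b ≠ c → H.Adj b c) →
    ∃ M : List V, M.Perm (as ++ bs) ∧ (x :: (M ++ [y])).IsChain H.Adj := by
  induction as with
  | nil =>
    intro bs x hl hnd hx hy _ hbb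
    match bs, hl with
    | [b, c], _ =>
      refine ⟨[b, c], by simp, ?_⟩
      have : b ≠ c := by simpa using hnd
      simp [hx b, hy c, hbb b (by simp) c (by simp) this]
  | cons a as ih =>
    intro bs x hl hnd hx hy hab hbb
    match bs, hl with
    | b :: bs, hl =>
      obtain ⟨M, hM, hch⟩ := ih bs a (by simpa using hl) (List.nodup_cons.1 hnd).2
        (fun c hc => hab a (by simp) c (by simp [hc]))
        (fun c hc => hy c (by simp [hc]))
        (fun d hd c hc => hab d (by simp [hd]) c (by simp [hc]))
        (fun d hd c hc => hbb d (by simp [hd]) c (by simp [hc]))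
      refine ⟨b :: a :: M, ?_, ?_⟩
      · have : (b :: a :: M).Perm (b :: a :: (as ++ bs)) := (hM.cons a).cons b
        refine this.trans ?_
        rw [List.cons_append]
        refine (List.Perm.swap a b _).trans (List.Perm.cons a ?_)
        exact List.perm_middle.symm
      · simp only [List.cons_append, List.isChain_cons_cons]
        exact ⟨hx b (by simp), (hab a (by simp) b (by simp)).symm, hch⟩

/-- **Lemma (part 2).** Let `n ≥ 3` be even and `G` an `n`-vertex graph with
`δ(G) ≥ n/2`. Suppose exactly `n/2` vertices have degree at least `n/2 + 1`,
and some pair of vertices admits no Hamilton path between them. Then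
`V₁ = {v : deg(v) = n/2}` is independent, and any two distinct vertices of
`V₁` are joined by a Hamilton path. -/
theorem hamilton_path_exactly_half_large_degrees (n : ℕ) (hn : 3 ≤ n) (hne : Even n)
    (G : SimpleGraph (Fin n)) [DecidableRel G.Adj]
    (hδ : n / 2 ≤ G.minDegree)
    (hexact : (Finset.univ.filter (fun v => n / 2 + 1 ≤ G.degree v)).card = n / 2)
    (hnopath : ∃ u v : Fin n, u ≠ v ∧ ¬ ∃ p : G.Walk u v, p.IsHamiltonian) :
    (∀ x y : Fin n, G.degree x = n / 2 → G.degree y = n / 2 → ¬ G.Adj x y) ∧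
    (∀ x y : Fin n, G.degree x = n / 2 → G.degree y = n / 2 → x ≠ y →
      ∃ p : G.Walk x y, p.IsHamiltonian) := by
  classical
  obtain ⟨k, rfl⟩ := hne
  have hk : (k + k) / 2 = k := by omega
  simp only [hk] at hδ hexact ⊢
  have hdeg : ∀ w, k ≤ G.degree w := fun w => hδ.trans (G.minDegree_le_degree w)
  set B := Finset.univ.filter (fun v => k + 1 ≤ G.degree v) with hB
  have hBc : Bᶜ.card = k := by
    rw [Finset.card_compl, hexact]; simp
  have hmemB : ∀ w, w ∈ B ↔ k + 1 ≤ G.degree w := fun w => by simp [hB]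
  -- a Hamilton path list in a graph containing enough edges
  have key : ∀ H : SimpleGraph (Fin (k + k)), ∀ x y : Fin (k + k), x ≠ y → x ∉ B → y ∉ B →
      (∀ b ∈ B, ∀ c, b ≠ c → H.Adj b c) → ∃ L, HamL H x y L := by
    intro H x y hxy hx hy hadj
    have hneB : ∀ b ∈ B, ∀ a, a ∉ B → b ≠ a := fun b hb a ha h => ha (h ▸ hb)
    set A := (Bᶜ.erase x).erase y with hA
    have hAc : A.card + 2 = k := by
      rw [hA, Finset.card_erase_of_mem (by simp [hy, hxy.symm]),
        Finset.card_erase_of_mem (by simp [hx]), hBc]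
      omega
    have hAB : ∀ a ∈ A, a ∉ B := fun a ha => by simp [hA] at ha; exact ha.2.2
    obtain ⟨M, hM, hch⟩ := zigzag H y A.toList B.toList x (by simp; omega) (Finset.nodup_toList _)
      (fun b hb => (hadj b (by simpa using hb) x (hneB b (by simpa using hb) x hx)).symm)
      (fun b hb => (hadj b (by simpa using hb) y (hneB b (by simpa using hb) y hy)))
      (fun a ha b hb => (hadj b (by simpa using hb) a
        (hneB b (by simpa using hb) a (hAB a (by simpa using ha)))).symm)
      (fun b hb c hc h => hadj b (by simpa using hb) c h)
    have hMm : ∀ w, w ∈ M ↔ w ∈ A ∨ w ∈ B := fun w => by rw [hM.mem_iff]; simp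
    have hMn : M.Nodup := by
      rw [hM.nodup_iff, List.nodup_append']
      refine ⟨Finset.nodup_toList _, Finset.nodup_toList _, fun a ha hb => ?_⟩
      exact hAB a (by simpa using ha) (by simpa using hb)
    refine ⟨x :: (M ++ [y]), ?_, ?_, hch, by simp, ?_⟩
    · have hxM : x ∉ M := by rw [hMm]; simp [hA, hx]
      have hyM : y ∉ M := by rw [hMm]; simp [hA, hy]
      rw [List.nodup_cons, List.nodup_append']
      refine ⟨by simp [hxM, hxy], hMn, by simp, by simpa using hyM⟩
    · intro w
      simp only [List.mem_cons, List.mem_append, hMm, hA, Finset.mem_erase, Finset.mem_compl,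
        List.not_mem_nil, or_false]
      tauto
    · rw [← List.cons_append, List.getLast?_append_of_ne_nil _ (by simp)]; simp
  have big : ∀ H : SimpleGraph (Fin (k + k)), ∀ u v, G ≤ H → (¬ ∃ L, HamL H u v L) →
      (∀ K : SimpleGraph (Fin (k + k)), H < K → ∃ L, HamL K u v L) →
      (∀ b ∈ B, ∀ c, b ≠ c → H.Adj b c) := by
    intro H u v hle h1 h2 b hb c hbc
    refine maximal_adj H u v h1 h2 b c hbc ?_
    have e1 := SimpleGraph.degree_le_of_le (v := b) hle
    have e2 := SimpleGraph.degree_le_of_le (v := c) hle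
    have := (hmemB b).1 hb
    have := hdeg c
    simp only [Fintype.card_fin]
    omega
  refine ⟨fun x y hx hy hxy => ?_, fun x y hx hy hxy => ?_⟩
  · obtain ⟨u, v, huv, hno⟩ := hnopath
    obtain ⟨H, hle, h1, h2⟩ := exists_maximal_graph G u v hno
    have hb := big H u v hle h1 h2
    have hdH : ∀ w, k ≤ H.degree w := fun w =>
      (hdeg w).trans (SimpleGraph.degree_le_of_le hle)
    have hxB : x ∉ B := by rw [hmemB]; omega
    have hxd : k + 1 ≤ H.degree x := by
      have hyB : y ∉ B := by rw [hmemB]; omega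
      have : insert y B ⊆ H.neighborFinset x := by
        intro w hw
        rw [SimpleGraph.mem_neighborFinset]
        rcases Finset.mem_insert.1 hw with rfl | hw
        · exact hle hxy
        · exact (hb w hw x (fun h => hxB (h ▸ hw))).symm
      have := Finset.card_le_card this
      rwa [Finset.card_insert_of_notMem hyB, hexact, SimpleGraph.card_neighborFinset_eq_degree]
        at this
    have hxa : ∀ w, x ≠ w → H.Adj x w := fun w hw =>
      maximal_adj H u v h1 h2 x w hw (by have := hdH w; simp only [Fintype.card_fin]; omega)
    have hall : ∀ w, k + 1 ≤ H.degree w := by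
      intro w
      by_cases hwx : w = x
      · rwa [hwx]
      by_cases hwB : w ∈ B
      · exact ((hmemB w).1 hwB).trans (SimpleGraph.degree_le_of_le hle)
      have : insert x B ⊆ H.neighborFinset w := by
        intro z hz
        rw [SimpleGraph.mem_neighborFinset]
        rcases Finset.mem_insert.1 hz with rfl | hz
        · exact (hxa w (Ne.symm hwx)).symm
        · exact (hb z hz w (fun h => hwB (h ▸ hz))).symm
      have := Finset.card_le_card this
      rwa [Finset.card_insert_of_notMem hxB, hexact, SimpleGraph.card_neighborFinset_eq_degree]
        at this
    have hcomplete : ∀ a b, a ≠ b → H.Adj a b := fun a b hab =>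
      maximal_adj H u v h1 h2 a b hab (by
        have := hall a; have := hall b; simp only [Fintype.card_fin]; omega)
    refine h1 ⟨u :: ((Finset.univ.erase u).erase v).toList ++ [v], ?_⟩
    have hnd : (u :: ((Finset.univ.erase u).erase v).toList ++ [v]).Nodup := by
      rw [List.nodup_append', List.nodup_cons]
      refine ⟨⟨by simp, Finset.nodup_toList _⟩, by simp, by simp [huv.symm]⟩
    refine ⟨hnd, ?_, ?_, by simp, ?_⟩
    · intro w
      simp
      tauto
    · exact (hnd.imp (fun h => hcomplete _ _ h)).isChain
    · rw [List.getLast?_append_of_ne_nil _ (by simp)]; simp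
  · by_contra hno
    obtain ⟨H, hle, h1, h2⟩ := exists_maximal_graph G x y hno
    exact h1 (key H x y hxy (by rw [hmemB]; omega) (by rw [hmemB]; omega) (big H x y hle h1 h2))
end
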